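/- arXiv:1711.01975 — 4 statements merged into one kernel-verified Lean document; each statement's English description precedes it below -/
import Mathlib

section
/- Let k ∈ {3,4} and let M = 2^{2k−1} − 2^k + 1. There exist ε₀ > 0 and c > 0 depending only on k such that for every ε ∈ (0, ε₀): if H ~ H_k(n; n^{−ε}) and π : [n] ↪ F* is a uniformly random injection independent of H, then with very high probability every edge x ∈ K_k^n satisfies |𝒜_x| ≥ c·n^{k − Mε}. -/
open Finset

/-- The complete `k`-uniform hypergraph on `[n]`. -/
def allK (n k : ℕ) : Finset (Finset (Fin n)) :=
  Finset.univ.powersetCard k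

open Classical in
/-- Probability of the event `E` when `H ~ H_k(n;p)` and `π : [n] ↪ F*` is an
independent uniformly random injection. -/
noncomputable def hypInjProb (n k : ℕ) (F : Type*) [Fintype F] [DecidableEq F] [Zero F]
    (p : ℝ) (E : Finset (Finset (Fin n)) → (Fin n → F) → Prop) : ℝ :=
  (∑ π ∈ (Finset.univ : Finset (Fin n → F)).filter
        (fun π => Function.Injective π ∧ ∀ v, π v ≠ 0),
      ∑ H ∈ (allK n k).powerset,
        if E H π then p ^ H.card * (1 - p) ^ ((allK n k).card - H.card) else 0) /
    (((Finset.univ : Finset (Fin n → F)).filter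
        (fun π => Function.Injective π ∧ ∀ v, π v ≠ 0)).card : ℝ)

/-- The `i`-th vertex of the edge `e_I` of the cross-polytope `C_{x,a}`. -/
def cpVert {V : Type*} {k : ℕ} (x a : Fin k → V) (I : Finset (Fin k)) (i : Fin k) : V :=
  if i ∈ I then a i else x i

/-- `a` (with the pairing `x_i ↔ a_i`) spans an absorber for `x`, relative to the
random injection `π` and the random hypergraph `H`: the vertices of `x`, `a` and
of all associated cross-polytopes are distinct; all odd edges of `C_{x,a}` lie in
`H`; every nonempty even edge `e_I` of `C_{x,a}` is non-algebraic, has an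
associated cross-polytope (witnessed by the algebraic vertices `b I`), all of
whose edges besides `e_I` itself lie in `H`. -/
def SpansAbsorber (n k : ℕ) (F : Type*) [Field F] (π : Fin n → F)
    (H : Finset (Finset (Fin n))) (x a : Fin k → Fin n) : Prop :=
  ∃ b : Finset (Fin k) → Fin k → Fin n,
    Function.Injective
      (Sum.elim x (Sum.elim a
        (fun p : {I : Finset (Fin k) // I.Nonempty ∧ Even I.card} × Fin k =>
          b p.1.1 p.2))) ∧
    (∀ I : Finset (Fin k), Odd I.card →
      Finset.univ.image (cpVert x a I) ∈ H) ∧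
    (∀ I : Finset (Fin k), I.Nonempty → Even I.card →
      (∑ j, π (cpVert x a I j) ≠ 0) ∧
      (∀ i, π (b I i) = π (cpVert x a I i) + ∑ j, π (cpVert x a I j)) ∧
      (∀ J : Finset (Fin k), J.Nonempty →
        Finset.univ.image (cpVert (cpVert x a I) (b I) J) ∈ H))

/-- `𝒜_x`: the number of edges `a ∈ K_k^n` spanning an absorber for the edge `x`. -/
noncomputable def absorberCount (n k : ℕ) (F : Type*) [Field F] (π : Fin n → F)
    (H : Finset (Finset (Fin n))) (x : Finset (Fin n)) : ℕ :=
  Set.ncard {A : Finset (Fin n) | ∃ xv av : Fin k → Fin n,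
    Finset.univ.image xv = x ∧ Finset.univ.image av = A ∧
    SpansAbsorber n k F π H xv av}

/-! Expose `π` first and `H` second, and let `q` be the size of `F` and `p = n ^ (-ε)`. For a tuple
`y` of labels for `a`, the labels of all vertices of the absorber are sums of subsets of the entries
of `π ∘ x` and `y`, and each new vertex involves some entry of `y`. As long as no `k - 2` labels of
`x` sum to zero, these sums are distinct as linear forms in characteristic two, so all but
`O(q ^ (k - 1))` of the `q ^ k` tuples `y` give distinct labels. A bounded-difference inequality
shows that in a binomial random subset of `F` of constant density, with failure probability
exponentially small in `q`, a constant proportion of these `y` have all their labels inside the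
subset; this property is increasing, so it passes to the image of a random injection. For such a
`π`, each edge of `[n]` is used by `O(q ^ (k - 1))` of the `Ω(q ^ k)` potential absorbers for `x`,
so the same inequality, applied to `H`, shows that a proportion of at least `p ^ M / 2` of them
survive. The failure probability is exponentially small in `n p ^ (2 M)`, which is at least `√n` if
`ε ≤ 1 / (4 M)` and so leaves room for a union bound over `x`. -/

section BinomialSubset

variable {α β ι : Type*} {p : ℝ} {U : Finset α}

/-- The expectation of `f S` when `S` is a random subset of `U` containing each element
independently with probability `p`, written as a finite sum to match `hypInjProb`. -/
noncomputable def binExp (p : ℝ) (U : Finset α) (f : Finset α → ℝ) : ℝ :=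
  ∑ S ∈ U.powerset, p ^ #S * (1 - p) ^ (#U - #S) * f S

open Classical in
/-- The probability that `P S` holds when `S` is a random subset of `U` containing each element
independently with probability `p`. -/
noncomputable def binProb (p : ℝ) (U : Finset α) (P : Finset α → Prop) : ℝ :=
  binExp p U fun S => if P S then 1 else 0

lemma binWeight_nonneg (hp : p ∈ unitInterval) (i j : ℕ) : 0 ≤ p ^ i * (1 - p) ^ j :=
  mul_nonneg (pow_nonneg hp.1 i) (pow_nonneg (sub_nonneg.2 hp.2) j)

lemma binExp_mono (hp : p ∈ unitInterval) {f g : Finset α → ℝ} (h : ∀ S ⊆ U, f S ≤ g S) :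
    binExp p U f ≤ binExp p U g :=
  sum_le_sum fun S hS =>
    mul_le_mul_of_nonneg_left (h S (mem_powerset.1 hS)) (binWeight_nonneg hp _ _)

lemma binExp_const_mul (c : ℝ) (f : Finset α → ℝ) :
    binExp p U (fun S => c * f S) = c * binExp p U f := by
  simp only [binExp, mul_sum, mul_left_comm c]

lemma binExp_sum (Y : Finset ι) (f : ι → Finset α → ℝ) :
    binExp p U (fun S => ∑ y ∈ Y, f y S) = ∑ y ∈ Y, binExp p U (f y) := by
  simp only [binExp, mul_sum]
  exact sum_comm

lemma binExp_one : binExp p U (fun _ => 1) = 1 := by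
  simp [binExp, sum_pow_mul_eq_add_pow]

lemma binExp_insert [DecidableEq α] {u : α} (hu : u ∉ U) (f : Finset α → ℝ) :
    binExp p (insert u U) f = binExp p U fun S => (1 - p) * f S + p * f (insert u S) := by
  simp only [binExp]
  rw [sum_powerset_insert hu, ← sum_add_distrib]
  refine sum_congr rfl fun S hS => ?_
  have hSU := mem_powerset.1 hS
  rw [card_insert_of_notMem fun h => hu (hSU h), card_insert_of_notMem hu,
    Nat.add_sub_add_right, Nat.sub_add_comm (card_le_card hSU)]
  ring

lemma binProb_mono (hp : p ∈ unitInterval) {P Q : Finset α → Prop} (h : ∀ S ⊆ U, P S → Q S) :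
    binProb p U P ≤ binProb p U Q := by
  refine binExp_mono hp fun S hS => ?_
  split_ifs with hP hQ
  exacts [le_rfl, absurd (h S hS hP) hQ, zero_le_one, le_rfl]

lemma binProb_nonneg (hp : p ∈ unitInterval) (P : Finset α → Prop) : 0 ≤ binProb p U P :=
  sum_nonneg fun S _ => mul_nonneg (binWeight_nonneg hp _ _) (by positivity)

lemma binProb_add_binProb_not (P : Finset α → Prop) :
    binProb p U P + binProb p U (fun S => ¬ P S) = 1 := by
  rw [← binExp_one (p := p) (U := U), binProb, binProb, binExp, binExp, binExp, ← sum_add_distrib]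
  refine sum_congr rfl fun S _ => ?_
  by_cases h : P S <;> simp [h]

lemma binProb_le_one (hp : p ∈ unitInterval) (P : Finset α → Prop) : binProb p U P ≤ 1 := by
  linarith [binProb_add_binProb_not (p := p) (U := U) P,
    binProb_nonneg (U := U) hp fun S => ¬ P S]

lemma binProb_exists_mem_le (hp : p ∈ unitInterval) (I : Finset ι) (P : ι → Finset α → Prop) :
    binProb p U (fun S => ∃ i ∈ I, P i S) ≤ ∑ i ∈ I, binProb p U (P i) := by
  classical
  simp only [binProb]
  rw [← binExp_sum]
  refine binExp_mono hp fun S _ => ?_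
  have hnonneg : ∀ i ∈ I, (0 : ℝ) ≤ if P i S then 1 else 0 := fun i _ => by
    split_ifs <;> norm_num
  split_ifs with h
  · obtain ⟨i, hi, hPi⟩ := h
    exact (if_pos hPi).ge.trans (single_le_sum hnonneg hi)
  · exact sum_nonneg hnonneg

lemma binProb_le_binExp (hp : p ∈ unitInterval) {P : Finset α → Prop} {f : Finset α → ℝ}
    (hf : ∀ S, 0 ≤ f S) (hP : ∀ S, P S → 1 ≤ f S) : binProb p U P ≤ binExp p U f := by
  refine binExp_mono hp fun S _ => ?_
  split_ifs with h
  exacts [hP S h, hf S]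

lemma binProb_superset {T : Finset α} (hT : T ⊆ U) : binProb p U (T ⊆ ·) = p ^ #T := by
  classical
  induction U using Finset.induction_on generalizing T with
  | empty => simp [binProb, binExp, subset_empty.1 hT]
  | insert u U hu ih =>
    rw [binProb, binExp_insert hu]
    by_cases huT : u ∈ T
    · rw [← card_erase_add_one huT, pow_succ', ← ih (subset_insert_iff.1 hT), binProb,
        ← binExp_const_mul]
      refine sum_congr rfl fun S hS => ?_
      have hTS : ¬ T ⊆ S := fun h => hu (mem_powerset.1 hS (h huT))
      simp [hTS, subset_insert_iff]
    · rw [← ih ((subset_insert_iff_of_notMem huT).1 hT), binProb]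
      refine sum_congr rfl fun S _ => ?_
      by_cases hTS : T ⊆ S <;> simp [subset_insert_iff_of_notMem huT, hTS]

lemma binExp_card_filter_subset [DecidableEq α] {Y : Finset β} {T : β → Finset α}
    (hT : ∀ y ∈ Y, T y ⊆ U) :
    binExp p U (fun S => #{y ∈ Y | T y ⊆ S}) = ∑ y ∈ Y, p ^ #(T y) := by
  simp only [card_filter, Nat.cast_sum, Nat.cast_ite, Nat.cast_one, Nat.cast_zero, binExp_sum]
  refine sum_congr rfl fun y hy => ?_
  rw [← binProb_superset (hT y hy), binProb]
  congr!

lemma binExp_card : binExp p U (fun S => #S) = #U * p := by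
  classical
  have h := binExp_card_filter_subset (p := p) (Y := U) (T := fun u => {u})
    fun u hu => singleton_subset_iff.2 hu
  simp only [card_singleton, pow_one, sum_const, nsmul_eq_mul, singleton_subset_iff] at h
  rw [← h]
  refine sum_congr rfl fun S hS => ?_
  simp only [filter_mem_eq_inter, inter_eq_right.2 (mem_powerset.1 hS)]

end BinomialSubset

section LowerTail

open ProbabilityTheory in
/-- Hoeffding's lemma for a two-point distribution. -/
lemma two_point_exp_le {p : ℝ} (hp : p ∈ unitInterval) (a b : ℝ) :
    (1 - p) * Real.exp a + p * Real.exp b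
      ≤ Real.exp ((1 - p) * a + p * b + (b - a) ^ 2 / 8) := by
  let X : Bool → ℝ := fun s => cond s b a
  let m := (1 - p) * a + p * b
  have hmean : ∫ s, X s ∂bernoulliMeasure true false ⟨p, hp⟩ = m := by
    simp [integral_bernoulliMeasure, X, m, add_comm]
  have hX : ∀ s, X s ∈ Set.Icc (min a b) (max a b) := by
    rintro (_ | _) <;> simp [X]
  have hmgf := (hasSubgaussianMGF_of_mem_Icc (μ := bernoulliMeasure true false ⟨p, hp⟩)
    (measurable_of_countable X).aemeasurable (.of_forall hX)).mgf_le 1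
  rw [hmean, mgf, integral_bernoulliMeasure] at hmgf
  have hwidth : (((‖max a b - min a b‖₊ / 2) ^ 2 : NNReal) : ℝ) * 1 ^ 2 / 2 = (b - a) ^ 2 / 8 := by
    push_cast
    rw [Real.norm_eq_abs, max_sub_min_eq_abs', abs_abs, div_pow, sq_abs]
    ring
  rw [hwidth] at hmgf
  simp only [X, cond_true, cond_false, one_mul, smul_eq_mul] at hmgf
  calc (1 - p) * Real.exp a + p * Real.exp b
      = Real.exp m * (p * Real.exp (b - m) + (1 - p) * Real.exp (a - m)) := by
        rw [mul_add, mul_left_comm, mul_left_comm _ (1 - p), ← Real.exp_add, ← Real.exp_add,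
          add_sub_cancel, add_sub_cancel, add_comm]
    _ ≤ Real.exp m * Real.exp ((b - a) ^ 2 / 8) :=
        mul_le_mul_of_nonneg_left hmgf (Real.exp_pos m).le
    _ = Real.exp (m + (b - a) ^ 2 / 8) := (Real.exp_add _ _).symm

variable {α β : Type*} [DecidableEq α] {p : ℝ}

lemma binExp_exp_le (hp : p ∈ unitInterval) (c : α → ℝ) (U : Finset α) (f : Finset α → ℝ)
    (hf : ∀ u ∈ U, ∀ S ⊆ U, |f (insert u S) - f S| ≤ c u) :
    binExp p U (fun S => Real.exp (f S)) ≤ Real.exp (binExp p U f + (∑ u ∈ U, c u ^ 2) / 8) := by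
  induction U using Finset.induction_on generalizing f with
  | empty => simp [binExp]
  | insert u U hu ih =>
    rw [binExp_insert hu, binExp_insert hu, sum_insert hu]
    let g : Finset α → ℝ := fun S => (1 - p) * f S + p * f (insert u S)
    have hsub : ∀ S ⊆ U, S ⊆ insert u U := fun S hS => hS.trans (subset_insert u U)
    have hg : ∀ v ∈ U, ∀ S ⊆ U, |g (insert v S) - g S| ≤ c v := by
      intro v hv S hS
      have hS₁ := abs_le.1 (hf v (mem_insert_of_mem hv) S (hsub S hS))
      have hS₂ := abs_le.1 (hf v (mem_insert_of_mem hv) _ (insert_subset_insert u hS))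
      rw [insert_comm] at hS₂
      simp only [g, abs_le]
      constructor <;> nlinarith [hp.1, hp.2]
    have hstep : ∀ S ⊆ U, (1 - p) * Real.exp (f S) + p * Real.exp (f (insert u S))
        ≤ Real.exp (c u ^ 2 / 8) * Real.exp (g S) := by
      intro S hS
      have hsq : (f (insert u S) - f S) ^ 2 ≤ c u ^ 2 :=
        sq_le_sq.2 ((hf u (mem_insert_self u U) S (hsub S hS)).trans (le_abs_self _))
      rw [← Real.exp_add, add_comm (c u ^ 2 / 8)]
      exact (two_point_exp_le hp _ _).trans (Real.exp_le_exp.2 (by simp only [g]; gcongr))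
    calc _ ≤ binExp p U fun S => Real.exp (c u ^ 2 / 8) * Real.exp (g S) := binExp_mono hp hstep
      _ = Real.exp (c u ^ 2 / 8) * binExp p U (fun S => Real.exp (g S)) := binExp_const_mul _ _
      _ ≤ Real.exp (c u ^ 2 / 8) * Real.exp (binExp p U g + (∑ v ∈ U, c v ^ 2) / 8) := by
          gcongr
          exact ih g hg
      _ = _ := by
          rw [← Real.exp_add, add_div, add_left_comm]

/-- McDiarmid's bounded differences inequality (lower tail) for binomial random subsets. -/
lemma binProb_le_binExp_sub_le (hp : p ∈ unitInterval) {c : α → ℝ} {U : Finset α}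
    {f : Finset α → ℝ} (hf : ∀ u ∈ U, ∀ S ⊆ U, |f (insert u S) - f S| ≤ c u) {V t : ℝ}
    (hV : ∑ u ∈ U, c u ^ 2 ≤ V) (ht : 0 ≤ t) :
    binProb p U (fun S => f S ≤ binExp p U f - t) ≤ Real.exp (-(2 * t ^ 2 / V)) := by
  obtain rfl | hVpos := ((sum_nonneg fun u _ => sq_nonneg (c u)).trans hV).eq_or_lt
  · simpa using binProb_le_one hp _
  let l := 4 * t / V
  have hl : 0 ≤ l := by positivity
  have hlf : ∀ u ∈ U, ∀ S ⊆ U, |-l * f (insert u S) - -l * f S| ≤ l * c u := by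
    intro u hu S hS
    rw [← mul_sub, abs_mul, abs_neg, abs_of_nonneg hl]
    exact mul_le_mul_of_nonneg_left (hf u hu S hS) hl
  have hlV : ∑ u ∈ U, (l * c u) ^ 2 ≤ l ^ 2 * V := by
    simp only [mul_pow, ← mul_sum]
    gcongr
  calc binProb p U (fun S => f S ≤ binExp p U f - t)
      ≤ binExp p U fun S => Real.exp (l * (binExp p U f - t)) * Real.exp (-l * f S) := by
        refine binProb_le_binExp hp (fun S => by positivity) fun S hS => ?_
        rw [← Real.exp_add]
        exact Real.one_le_exp (by nlinarith)
    _ = Real.exp (l * (binExp p U f - t)) * binExp p U (fun S => Real.exp (-l * f S)) :=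
        binExp_const_mul _ _
    _ ≤ Real.exp (l * (binExp p U f - t)) * Real.exp (-l * binExp p U f + l ^ 2 * V / 8) := by
        gcongr
        refine (binExp_exp_le hp _ U _ hlf).trans (Real.exp_le_exp.2 ?_)
        rw [binExp_const_mul]
        linarith
    _ = Real.exp (-(2 * t ^ 2 / V)) := by
        rw [← Real.exp_add]
        congr 1
        simp only [l]
        field_simp
        ring

lemma sum_card_filter_mem_le (U : Finset α) {Y : Finset β} {T : β → Finset α} {M : ℕ}
    (hM : ∀ y ∈ Y, #(T y) ≤ M) : ∑ u ∈ U, #{y ∈ Y | u ∈ T y} ≤ #Y * M := by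
  refine (sum_card_bipartiteAbove_eq_sum_card_bipartiteBelow fun u y => u ∈ T y).trans_le ?_
  rw [← smul_eq_mul]
  exact sum_le_card_nsmul _ _ _ fun y hy =>
    (card_le_card fun u hu => (mem_filter.1 hu).2).trans (hM y hy)

lemma abs_card_filter_subset_insert_sub_le (Y : Finset β) (T : β → Finset α) (u : α)
    (S : Finset α) :
    |(#{y ∈ Y | T y ⊆ insert u S} : ℝ) - #{y ∈ Y | T y ⊆ S}| ≤ #{y ∈ Y | u ∈ T y} := by
  classical
  have hmono : #{y ∈ Y | T y ⊆ S} ≤ #{y ∈ Y | T y ⊆ insert u S} :=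
    card_le_card (monotone_filter_right Y fun y _ h => h.trans (subset_insert u S))
  have hupper : #{y ∈ Y | T y ⊆ insert u S} ≤ #{y ∈ Y | T y ⊆ S} + #{y ∈ Y | u ∈ T y} := by
    refine (card_le_card fun y hy => ?_).trans (card_union_le _ _)
    simp only [mem_union, mem_filter] at hy ⊢
    by_cases hu : u ∈ T y
    · exact .inr ⟨hy.1, hu⟩
    · exact .inl ⟨hy.1, (subset_insert_iff_of_notMem hu).1 hy.2⟩
  rw [abs_of_nonneg (sub_nonneg.2 (by exact_mod_cast hmono)), sub_le_iff_le_add']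
  exact_mod_cast hupper

lemma binProb_card_filter_subset_le (hp : p ∈ unitInterval) {U : Finset α} {Y : Finset β}
    {T : β → Finset α} {M D : ℕ} {L : ℝ} (hL : 0 < L) (hLY : L ≤ #Y) (hTU : ∀ y ∈ Y, T y ⊆ U)
    (hTM : ∀ y ∈ Y, #(T y) ≤ M) (hTD : ∀ u ∈ U, #{y ∈ Y | u ∈ T y} ≤ D) :
    binProb p U (fun S => #{y ∈ Y | T y ⊆ S} ≤ L * p ^ M / 2)
      ≤ Real.exp (-(L * p ^ (2 * M) / (2 * (D * M)))) := by
  have hp0 := hp.1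
  have hY : (0 : ℝ) < #Y := hL.trans_le hLY
  have hmean : #Y * p ^ M ≤ binExp p U fun S => #{y ∈ Y | T y ⊆ S} := by
    rw [binExp_card_filter_subset hTU, ← nsmul_eq_mul]
    exact card_nsmul_le_sum _ _ _ fun y hy => pow_le_pow_of_le_one hp.1 hp.2 (hTM y hy)
  have hV : ∑ u ∈ U, (#{y ∈ Y | u ∈ T y} : ℝ) ^ 2 ≤ D * (#Y * M : ℕ) := by
    have hsum : ∑ u ∈ U, #{y ∈ Y | u ∈ T y} ^ 2 ≤ D * (#Y * M) := by
      refine le_trans ?_ (Nat.mul_le_mul_left D (sum_card_filter_mem_le U hTM))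
      rw [mul_sum]
      exact sum_le_sum fun u hu => (sq _).trans_le (Nat.mul_le_mul_right _ (hTD u hu))
    exact_mod_cast hsum
  have hexp : L * p ^ (2 * M) / (2 * (D * M))
      ≤ 2 * (#Y * p ^ M / 2) ^ 2 / (D * (#Y * M : ℕ)) := by
    calc L * p ^ (2 * M) / (2 * (D * M)) ≤ #Y * p ^ (2 * M) / (2 * (D * M)) := by gcongr
      _ = #Y * (#Y * p ^ (2 * M)) / (#Y * (2 * (D * M))) := (mul_div_mul_left _ _ hY.ne').symm
      _ = _ := by
        rw [← mul_div_mul_left _ (D * ((#Y * M : ℕ) : ℝ)) two_ne_zero]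
        push_cast
        ring_nf
  have htail := binProb_le_binExp_sub_le hp (f := fun S => #{y ∈ Y | T y ⊆ S})
    (fun u _ S _ => abs_card_filter_subset_insert_sub_le Y T u S) hV
    (t := #Y * p ^ M / 2) (by positivity)
  refine (binProb_mono hp fun S _ hS => ?_).trans
    (htail.trans (Real.exp_le_exp.2 (neg_le_neg hexp)))
  have hLY' : L * p ^ M ≤ #Y * p ^ M := by gcongr
  linarith

end LowerTail

section RandomInjection

variable {α : Type*} {p : ℝ}

lemma binProb_eq_sum_card_slice {U : Finset α} (P : Finset α → Prop) [DecidablePred P] :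
    binProb p U P = ∑ j ∈ range (#U + 1),
      p ^ j * (1 - p) ^ (#U - j) * #{S ∈ powersetCard j U | P S} := by
  simp only [binProb, binExp, sum_powerset]
  refine sum_congr rfl fun j _ => ?_
  rw [card_filter, Nat.cast_sum, mul_sum]
  refine sum_congr rfl fun S hS => ?_
  rw [(mem_powersetCard.1 hS).2]
  by_cases h : P S <;> simp [h]

lemma half_le_binProb_card_le (hp : p ∈ unitInterval) {U : Finset α} {n : ℕ}
    (hn : 2 * (#U * p) ≤ n) : 1 / 2 ≤ binProb p U (#· ≤ n) := by
  have hn0 : (0 : ℝ) < n + 1 := by positivity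
  have hmarkov : binProb p U (fun S => ¬ #S ≤ n) ≤ 1 / 2 :=
    calc binProb p U (fun S => ¬ #S ≤ n) ≤ binExp p U fun S => (n + 1 : ℝ)⁻¹ * #S := by
          refine binProb_le_binExp hp (fun S => by positivity) fun S hS => ?_
          rw [inv_mul_eq_div, one_le_div hn0]
          exact_mod_cast not_le.1 hS
      _ = (n + 1 : ℝ)⁻¹ * (#U * p) := by rw [binExp_const_mul, binExp_card]
      _ ≤ 1 / 2 := by
          rw [inv_mul_eq_div, div_le_div_iff₀ hn0 two_pos]
          linarith
  linarith [binProb_add_binProb_not (p := p) (U := U) (#· ≤ n)]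

variable [Fintype α] {B : Finset α → Prop} [DecidablePred B]

lemma antitone_card_slice_div_choose (hB : Antitone B) :
    Antitone fun j => (#{S ∈ powersetCard j (univ : Finset α) | B S} : ℝ)
      / (Fintype.card α).choose j := by
  classical
  refine antitone_nat_of_succ_le fun j => ?_
  have hsized : Set.Sized (j + 1) (({S ∈ powersetCard (j + 1) (univ : Finset α) | B S} :
      Finset (Finset α)) : Set (Finset α)) := fun S hS =>
    (mem_powersetCard.1 (mem_filter.1 (mem_coe.1 hS)).1).2
  refine (local_lubell_yamamoto_meshalkin_inequality_div j.succ_ne_zero hsized).trans ?_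
  rw [Nat.succ_sub_one]
  gcongr
  intro S hS
  obtain ⟨S', hS', u, hu, rfl⟩ := mem_shadow_iff.1 hS
  obtain ⟨hcard, hBS'⟩ := mem_filter.1 hS'
  refine mem_filter.2 ⟨mem_powersetCard.2 ⟨subset_univ _, ?_⟩, hB (erase_subset u S') hBS'⟩
  rw [card_erase_of_mem hu, (mem_powersetCard.1 hcard).2, Nat.add_sub_cancel]

lemma card_slice_div_choose_mul_le (hp : p ∈ unitInterval) (hB : Antitone B) (n : ℕ) :
    (#{S ∈ powersetCard n (univ : Finset α) | B S} : ℝ) / (Fintype.card α).choose n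
      * binProb p univ (fun S : Finset α => #S ≤ n) ≤ binProb p univ B := by
  rw [binProb_eq_sum_card_slice, binProb_eq_sum_card_slice, mul_sum]
  refine sum_le_sum fun j hj => ?_
  rw [mul_left_comm]
  refine mul_le_mul_of_nonneg_left ?_ (binWeight_nonneg hp _ _)
  by_cases hjn : j ≤ n
  · have hchoose : (0 : ℝ) < (Fintype.card α).choose j :=
      Nat.cast_pos.2 (Nat.choose_pos (Nat.lt_succ_iff.1 (mem_range.1 hj)))
    rw [filter_true_of_mem fun S hS => (mem_powersetCard.1 hS).2.trans_le hjn, card_powersetCard]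
    exact (le_div_iff₀ hchoose).1 (antitone_card_slice_div_choose hB hjn)
  · rw [filter_false_of_mem fun S hS h => hjn ((mem_powersetCard.1 hS).2.symm.trans_le h)]
    simp

variable [DecidableEq α]

lemma card_injective_forall_mem (n : ℕ) (S : Finset α) :
    #{π : Fin n → α | π.Injective ∧ ∀ v, π v ∈ S} = (#S).descFactorial n := by
  have h := Fintype.card_embedding_eq (α := Fin n) (β := S)
  rw [Fintype.card_coe, Fintype.card_fin] at h
  rw [← h, ← card_univ]
  refine (card_bij (fun e _ v => ((e : Fin n ↪ S) v : α)) (fun e _ => ?_) (fun e _ e' _ hee => ?_)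
    fun π hπ => ?_).symm
  · exact mem_filter.2 ⟨mem_univ _, Subtype.val_injective.comp e.injective, fun v => (e v).2⟩
  · ext v
    exact congrFun hee v
  · obtain ⟨hinj, hS⟩ := (mem_filter.1 hπ).2
    exact ⟨⟨fun v => ⟨π v, hS v⟩, fun v w hvw => hinj (congrArg Subtype.val hvw)⟩,
      mem_univ _, rfl⟩

lemma card_injective_image_le_factorial_mul (n : ℕ) :
    #{π : Fin n → α | π.Injective ∧ B (univ.image π)}
      ≤ n.factorial * #{S ∈ powersetCard n (univ : Finset α) | B S} := by
  refine card_le_mul_card_image_of_maps_to (f := fun π => univ.image π) (fun π hπ => ?_) _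
    fun S hS => ?_
  · obtain ⟨hinj, hBπ⟩ := (mem_filter.1 hπ).2
    refine mem_filter.2 ⟨mem_powersetCard.2 ⟨subset_univ _, ?_⟩, hBπ⟩
    rw [card_image_of_injective _ hinj, card_univ, Fintype.card_fin]
  · have hfiber := card_injective_forall_mem n S
    rw [(mem_powersetCard.1 (mem_filter.1 hS).1).2, Nat.descFactorial_self] at hfiber
    rw [← hfiber]
    refine card_le_card fun π hπ => ?_
    obtain ⟨hπ₁, rfl⟩ := mem_filter.1 hπ
    exact mem_filter.2 ⟨mem_univ _, (mem_filter.1 hπ₁).2.1,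
      fun v => mem_image_of_mem π (mem_univ v)⟩

/-- A decreasing property is at most twice as likely for the image of a random injection as for a
sparser binomial random subset. -/
lemma card_injective_image_le (hp : p ∈ unitInterval) (hB : Antitone B) {n : ℕ}
    (hn : 2 * (Fintype.card α * p) ≤ n) :
    (#{π : Fin n → α | π.Injective ∧ B (univ.image π)} : ℝ)
      ≤ 2 * (Fintype.card α).descFactorial n * binProb p univ B := by
  let N := Fintype.card α
  let s := #{S ∈ powersetCard n (univ : Finset α) | B S}
  have hdensity : (s : ℝ) / N.choose n * (1 / 2) ≤ binProb p univ B :=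
    (mul_le_mul_of_nonneg_left (half_le_binProb_card_le hp hn) (by positivity)).trans
      (card_slice_div_choose_mul_le hp hB n)
  have hs : N.choose n = 0 → s = 0 := fun h =>
    Nat.le_zero.1 ((card_filter_le _ _).trans (by rw [card_powersetCard, card_univ, ← h]))
  calc (#{π : Fin n → α | π.Injective ∧ B (univ.image π)} : ℝ)
      ≤ n.factorial * s := by exact_mod_cast card_injective_image_le_factorial_mul n
    _ = n.factorial * (s / N.choose n * N.choose n) := by
        rw [div_mul_cancel_of_imp fun h => by exact_mod_cast hs (by exact_mod_cast h)]
    _ = 2 * (n.factorial * N.choose n) * (s / N.choose n * (1 / 2)) := by ring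
    _ ≤ 2 * (n.factorial * N.choose n) * binProb p univ B := by gcongr
    _ = 2 * N.descFactorial n * binProb p univ B := by
        rw [Nat.descFactorial_eq_factorial_mul_choose, Nat.cast_mul]

end RandomInjection

section Labels

/-- The even edges `e_I` of a cross-polytope other than the absorbed edge. -/
abbrev EvenIx (k : ℕ) : Type :=
  {I : Finset (Fin k) // I.Nonempty ∧ Even #I}

/-- The vertices of an absorber outside the absorbed edge: `inl j` is `a_j`, and `inr (I, i)` is the
`i`-th algebraic vertex of the cross-polytope associated with `e_I`. -/
abbrev NewIx (k : ℕ) : Type :=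
  Fin k ⊕ (EvenIx k × Fin k)

/-- The vertices of an absorber, the absorbed edge included, and a further point `none` whose label
is zero, so that injectivity of a labelling encodes both distinctness and nonvanishing. -/
abbrev AbsIx (k : ℕ) : Type :=
  Option (Fin k ⊕ NewIx k)

/-- The labels of the new vertices of the absorber for an edge labelled `z` that is spanned by an
edge labelled `y`. -/
def newLabel {G : Type*} [AddCommMonoid G] {k : ℕ} (z y : Fin k → G) : NewIx k → G :=
  Sum.elim y fun q => cpVert z y q.1.1 q.2 + ∑ j, cpVert z y q.1.1 j

/-- The labelling of `AbsIx k` extending `newLabel z y`. -/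
def absLabel {G : Type*} [AddCommMonoid G] {k : ℕ} (z y : Fin k → G) (s : AbsIx k) : G :=
  s.elim 0 (Sum.elim z (newLabel z y))

/-- The set of `j` such that `y j` occurs in the label of a vertex, see `absLabel_eq`. -/
def yPart {k : ℕ} : AbsIx k → Finset (Fin k)
  | none => ∅
  | some (Sum.inl _) => ∅
  | some (Sum.inr (Sum.inl j)) => {j}
  | some (Sum.inr (Sum.inr q)) => q.1.1.erase q.2

/-- The set of `j` such that `z j` occurs in the label of a vertex, see `absLabel_eq`. -/
def zPart {k : ℕ} : AbsIx k → Finset (Fin k)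
  | none => ∅
  | some (Sum.inl j) => {j}
  | some (Sum.inr (Sum.inl _)) => ∅
  | some (Sum.inr (Sum.inr q)) => q.1.1ᶜ.erase q.2

lemma card_newIx_pos {k : ℕ} (hk : 0 < k) : 0 < Fintype.card (NewIx k) :=
  Fintype.card_pos_iff.2 ⟨Sum.inl ⟨0, hk⟩⟩

/-- The conditions on the labels of an edge under which most choices of `y` give distinct vertices:
if `∑ j ∈ B, z j` vanished for some `B` of size `k - 2`, then an algebraic vertex of `e_I` with
`I = {i, j}` the complement of `B` would coincide with `a_j`. -/
structure IsAbsorbable {G : Type*} [AddCommMonoid G] {k : ℕ} (z : Fin k → G) : Prop where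
  injective : z.Injective
  ne_zero : ∀ j, z j ≠ 0
  sum_ne_zero : ∀ B : Finset (Fin k), #B + 2 = k → ∑ j ∈ B, z j ≠ 0

variable {R : Type*} [CommRing R] {k : ℕ} {z : Fin k → R}

lemma sum_cpVert (z y : Fin k → R) (I : Finset (Fin k)) :
    ∑ j, cpVert z y I j = ∑ j ∈ I, y j + ∑ j ∈ Iᶜ, z j := by
  rw [← sum_add_sum_compl I]
  refine congrArg₂ (· + ·) (sum_congr rfl fun j hj => if_pos hj)
    (sum_congr rfl fun j hj => if_neg (mem_compl.1 hj))

lemma cpVert_add_sum [CharP R 2] (z y : Fin k → R) (I : Finset (Fin k)) (i : Fin k) :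
    cpVert z y I i + ∑ j, cpVert z y I j = ∑ j ∈ I.erase i, y j + ∑ j ∈ Iᶜ.erase i, z j := by
  rw [sum_cpVert, cpVert]
  split_ifs with hi
  · rw [← add_sum_erase I y hi, erase_eq_of_notMem (notMem_compl.2 hi), add_assoc,
      CharTwo.add_cancel_left]
  · rw [← add_sum_erase Iᶜ z (mem_compl.2 hi), erase_eq_of_notMem hi, add_left_comm,
      CharTwo.add_cancel_left]

lemma absLabel_eq [CharP R 2] (z y : Fin k → R) :
    ∀ s : AbsIx k, absLabel z y s = ∑ j ∈ yPart s, y j + ∑ j ∈ zPart s, z j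
  | none => by simp [absLabel, yPart, zPart]
  | some (Sum.inl j) => by simp [absLabel, yPart, zPart]
  | some (Sum.inr (Sum.inl j)) => by simp [absLabel, newLabel, yPart, zPart]
  | some (Sum.inr (Sum.inr q)) => cpVert_add_sum z y q.1.1 q.2

lemma yPart_inr_nonempty : ∀ s : NewIx k, (yPart (some (Sum.inr s))).Nonempty
  | Sum.inl j => singleton_nonempty j
  | Sum.inr (I, _) => by
    have hcard : 1 < #I.1 := by grind [I.2.1.card_pos, I.2.2]
    exact (one_lt_card_iff_nontrivial.1 hcard).erase_nonempty

lemma eq_of_erase_eq_of_even {α : Type*} [DecidableEq α] {I I' : Finset α} {i : α}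
    (hI : Even #I) (hI' : Even #I') (h : I.erase i = I'.erase i) : I = I' := by
  have hcard := congrArg card h
  rw [card_erase_eq_ite, card_erase_eq_ite] at hcard
  have hmem : i ∈ I ↔ i ∈ I' := by grind
  ext j
  obtain rfl | hj := eq_or_ne j i
  · exact hmem
  · simpa [hj] using congrArg (j ∈ ·) h

lemma compl_erase_eq_compl_insert (I : Finset (Fin k)) (i : Fin k) :
    Iᶜ.erase i = (insert i (I.erase i))ᶜ := by
  ext j
  grind [mem_compl]

lemma IsAbsorbable.sum_compl_erase_ne_zero (hz : IsAbsorbable z) {I : Finset (Fin k)} {i j : Fin k}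
    (h : {j} = I.erase i) : ∑ l ∈ Iᶜ.erase i, z l ≠ 0 := by
  have hij : i ≠ j := fun hij => notMem_erase i I (h ▸ mem_singleton.2 hij)
  refine hz.sum_ne_zero _ ?_
  rw [compl_erase_eq_compl_insert, ← h, ← card_pair hij, card_compl_add_card, Fintype.card_fin]

lemma ne_of_sum_compl_erase_eq (hz : z.Injective) {I I' : Finset (Fin k)} {i i' : Fin k}
    (h : I.erase i = I'.erase i')
    (hsum : ∑ j ∈ Iᶜ.erase i, z j = ∑ j ∈ I'ᶜ.erase i', z j) : i = i' := by
  have hi := sum_add_sum_compl (insert i (I.erase i)) z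
  have hi' := sum_add_sum_compl (insert i' (I'.erase i')) z
  rw [sum_insert (notMem_erase _ _), ← compl_erase_eq_compl_insert] at hi hi'
  rw [h, hsum] at hi
  exact hz (add_right_cancel (add_right_cancel (hi.trans hi'.symm)))

lemma IsAbsorbable.sum_zPart_ne (hz : IsAbsorbable z) :
    ∀ {s s' : AbsIx k}, s ≠ s' → yPart s = yPart s' →
      ∑ j ∈ zPart s, z j ≠ ∑ j ∈ zPart s', z j
  | none, none, hs, _ => absurd rfl hs
  | none, some (Sum.inl j), _, _ => by simpa [zPart] using (hz.ne_zero j).symm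
  | some (Sum.inl j), none, _, _ => by simpa [zPart] using hz.ne_zero j
  | some (Sum.inl i), some (Sum.inl j), hs, _ => by
    simpa [zPart, hz.injective.eq_iff] using hs
  | none, some (Sum.inr t), _, h => absurd h.symm (yPart_inr_nonempty t).ne_empty
  | some (Sum.inr t), none, _, h => absurd h (yPart_inr_nonempty t).ne_empty
  | some (Sum.inl _), some (Sum.inr t), _, h => absurd h.symm (yPart_inr_nonempty t).ne_empty
  | some (Sum.inr t), some (Sum.inl _), _, h => absurd h (yPart_inr_nonempty t).ne_empty
  | some (Sum.inr (Sum.inl i)), some (Sum.inr (Sum.inl j)), hs, h =>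
    absurd (by rw [singleton_injective h]) hs
  | some (Sum.inr (Sum.inl _)), some (Sum.inr (Sum.inr _)), _, h =>
    (hz.sum_compl_erase_ne_zero h).symm
  | some (Sum.inr (Sum.inr _)), some (Sum.inr (Sum.inl _)), _, h =>
    hz.sum_compl_erase_ne_zero h.symm
  | some (Sum.inr (Sum.inr (I, i))), some (Sum.inr (Sum.inr (I', i'))), hs, h => fun hsum => by
    obtain rfl : i = i' := ne_of_sum_compl_erase_eq hz.injective h hsum
    obtain rfl : I = I' := Subtype.ext (eq_of_erase_eq_of_even I.2.2 I'.2.2 h)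
    exact hs rfl

end Labels

section GenericLabels

lemma card_sum_add_eq_sum_add_le {ι G : Type*} [Fintype ι] [DecidableEq ι] [AddCommGroup G]
    [Fintype G] [DecidableEq G] {A A' : Finset ι} (h : A ≠ A') (w w' : G) :
    #{y : ι → G | ∑ j ∈ A, y j + w = ∑ j ∈ A', y j + w'}
      ≤ Fintype.card G ^ (Fintype.card ι - 1) := by
  wlog hA : ∃ j ∈ A, j ∉ A' generalizing A A' w w'
  · have hA' : ∃ j ∈ A', j ∉ A :=
      not_subset.1 fun hA'A => h (subset_antisymm (by simpa [subset_iff] using hA) hA'A)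
    simpa only [eq_comm] using this h.symm w' w hA'
  obtain ⟨j, hjA, hjA'⟩ := hA
  have hcard : Fintype.card ({i : ι // i ≠ j} → G)
      = Fintype.card G ^ (Fintype.card ι - 1) := by
    simp [Fintype.card_subtype_compl]
  rw [← hcard, ← card_univ]
  refine card_le_card_of_injOn (fun y i => y i.1) (fun _ _ => mem_univ _) fun y hy y' hy' hyy => ?_
  have hoff : ∀ i, i ≠ j → y i = y' i := fun i hi => congrFun hyy ⟨i, hi⟩
  have heq := (mem_filter.1 (mem_coe.1 hy)).2
  have heq' := (mem_filter.1 (mem_coe.1 hy')).2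
  rw [← add_sum_erase A _ hjA] at heq heq'
  rw [sum_congr rfl fun i hi => hoff i (ne_of_mem_erase hi),
    sum_congr (s₁ := A') rfl fun i hi => hoff i fun hij => hjA' (hij ▸ hi)] at heq
  have hj : y j = y' j := add_right_cancel (add_right_cancel (heq.trans heq'.symm))
  funext i
  obtain rfl | hi := eq_or_ne i j
  exacts [hj, hoff i hi]

variable {R : Type*} [CommRing R] [CharP R 2] [Fintype R] [DecidableEq R] {k : ℕ} {z : Fin k → R}

lemma card_newLabel_eq_le (z : Fin k → R) (s : NewIx k) (u : R) :
    #{y | newLabel z y s = u} ≤ Fintype.card R ^ (k - 1) := by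
  have h := card_sum_add_eq_sum_add_le (yPart_inr_nonempty s).ne_empty
    (∑ j ∈ zPart (some (Sum.inr s)), z j) u
  simp only [← absLabel_eq z, sum_empty, zero_add, Fintype.card_fin] at h
  exact h

lemma card_mem_image_newLabel_le (z : Fin k → R) (u : R) :
    #{y | u ∈ univ.image (newLabel z y)}
      ≤ Fintype.card (NewIx k) * Fintype.card R ^ (k - 1) := by
  have hcover : ({y | u ∈ univ.image (newLabel z y)} : Finset (Fin k → R)) ⊆
      univ.biUnion fun s => {y | newLabel z y s = u} := by
    intro y hy
    obtain ⟨s, _, hs⟩ := mem_image.1 (mem_filter.1 hy).2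
    exact mem_biUnion.2 ⟨s, mem_univ s, mem_filter.2 ⟨mem_univ y, hs⟩⟩
  exact (card_le_card hcover).trans
    (card_biUnion_le_card_mul _ _ _ fun s _ => card_newLabel_eq_le z s u)

lemma IsAbsorbable.card_absLabel_eq_le (hz : IsAbsorbable z) {s s' : AbsIx k} (hs : s ≠ s') :
    #{y | absLabel z y s = absLabel z y s'} ≤ Fintype.card R ^ (k - 1) := by
  simp only [absLabel_eq]
  by_cases h : yPart s = yPart s'
  · rw [h, filter_false_of_mem fun y _ heq => hz.sum_zPart_ne hs h (add_left_cancel heq)]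
    exact Nat.zero_le _
  · simpa only [Fintype.card_fin] using card_sum_add_eq_sum_add_le h _ _

lemma IsAbsorbable.card_not_injective_absLabel_le (hz : IsAbsorbable z) :
    #{y | ¬ (absLabel z y).Injective}
      ≤ Fintype.card (AbsIx k) ^ 2 * Fintype.card R ^ (k - 1) := by
  have hcover : ({y | ¬ (absLabel z y).Injective} : Finset (Fin k → R)) ⊆
      (univ : Finset (AbsIx k)).offDiag.biUnion fun r =>
        {y | absLabel z y r.1 = absLabel z y r.2} := by
    intro y hy
    obtain ⟨s, s', heq, hne⟩ := Function.not_injective_iff.1 (mem_filter.1 hy).2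
    exact mem_biUnion.2 ⟨(s, s'), mem_offDiag.2 ⟨mem_univ s, mem_univ s', hne⟩,
      mem_filter.2 ⟨mem_univ y, heq⟩⟩
  calc #{y | ¬ (absLabel z y).Injective}
      ≤ #(univ : Finset (AbsIx k)).offDiag * Fintype.card R ^ (k - 1) :=
        (card_le_card hcover).trans (card_biUnion_le_card_mul _ _ _ fun r hr =>
          hz.card_absLabel_eq_le (mem_offDiag.1 hr).2.2)
    _ ≤ Fintype.card (AbsIx k) ^ 2 * Fintype.card R ^ (k - 1) := by
        gcongr
        rw [offDiag_card, card_univ, sq]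
        exact Nat.sub_le _ _

lemma IsAbsorbable.half_le_card_injective_absLabel (hk : 0 < k) (hz : IsAbsorbable z)
    (hq : 2 * Fintype.card (AbsIx k) ^ 2 ≤ Fintype.card R) :
    (Fintype.card R : ℝ) ^ k / 2 ≤ #{y | (absLabel z y).Injective} := by
  have hbad := hz.card_not_injective_absLabel_le
  have hsplit := card_filter_add_card_filter_not (s := (univ : Finset (Fin k → R)))
    fun y => (absLabel z y).Injective
  have hpow : Fintype.card R ^ k = Fintype.card R * Fintype.card R ^ (k - 1) :=
    (mul_pow_sub_one hk.ne' _).symm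
  have hmul := Nat.mul_le_mul_right (Fintype.card R ^ (k - 1)) hq
  rw [card_univ, Fintype.card_fun, Fintype.card_fin] at hsplit
  have hhalf : Fintype.card R ^ k ≤ 2 * #{y | (absLabel z y).Injective} := by nlinarith
  rw [div_le_iff₀' two_pos]
  exact_mod_cast hhalf

end GenericLabels

section RichSubset

open Classical in
/-- The injections `π : [n] ↪ F*`, over which `hypInjProb` averages. -/
noncomputable def nonzeroInjections (n : ℕ) (F : Type*) [Fintype F] [Zero F] :
    Finset (Fin n → F) :=
  {π | π.Injective ∧ ∀ v, π v ≠ 0}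

lemma mem_nonzeroInjections {n : ℕ} {F : Type*} [Fintype F] [Zero F] {π : Fin n → F} :
    π ∈ nonzeroInjections n F ↔ π.Injective ∧ ∀ v, π v ≠ 0 := by
  simp [nonzeroInjections]

lemma card_nonzeroInjections (n : ℕ) (F : Type*) [Fintype F] [Zero F] :
    #(nonzeroInjections n F) = (Fintype.card F - 1).descFactorial n := by
  classical
  rw [← card_univ, ← card_erase_of_mem (mem_univ (0 : F)), ← card_injective_forall_mem]
  refine congrArg card (ext fun π => ?_)
  simp [mem_nonzeroInjections]

lemma descFactorial_le_two_mul_descFactorial_pred {n q : ℕ} (hq : 0 < q) (hnq : 2 * n ≤ q) :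
    q.descFactorial n ≤ 2 * (q - 1).descFactorial n := by
  obtain ⟨q, rfl⟩ := Nat.exists_eq_succ_of_ne_zero hq.ne'
  have hsucc := Nat.succ_descFactorial q n
  refine Nat.le_of_mul_le_mul_left (c := q + 1) ?_ q.succ_pos
  calc (q + 1) * (q + 1).descFactorial n
      ≤ 2 * (q + 1 - n) * (q + 1).descFactorial n := Nat.mul_le_mul_right _ (by omega)
    _ = (q + 1) * (2 * q.descFactorial n) := by rw [mul_assoc, hsucc, mul_left_comm]

variable {R : Type*} [CommRing R] [Fintype R] {k : ℕ} {z : Fin k → R}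

open Classical in
/-- The tuples `y` that span, as far as labels are concerned, a potential absorber for an edge
labelled `z` all of whose new vertices have labels in `S`. -/
noncomputable def absTuples (S : Finset R) (z : Fin k → R) : Finset (Fin k → R) :=
  {y | (absLabel z y).Injective ∧ ∀ s, newLabel z y s ∈ S}

lemma mem_absTuples {S : Finset R} {y : Fin k → R} :
    y ∈ absTuples S z ↔ (absLabel z y).Injective ∧ ∀ s, newLabel z y s ∈ S := by
  simp [absTuples]

/-- Every absorbable edge has at least `L` potential absorbers with labels in `S`. -/
def AbsRich (k : ℕ) (S : Finset R) (L : ℝ) : Prop :=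
  ∀ z : Fin k → R, IsAbsorbable z → L ≤ #(absTuples S z)

lemma AbsRich.mono {S S' : Finset R} {L : ℝ} (hSS' : S ⊆ S') (h : AbsRich k S L) :
    AbsRich k S' L := fun z hz =>
  (h z hz).trans <| Nat.cast_le.2 <| card_le_card fun _ hy =>
    mem_absTuples.2 ((mem_absTuples.1 hy).imp_right fun hS s => hSS' (hS s))

variable [CharP R 2] {p : ℝ}

lemma binProb_card_absTuples_le (hp : p ∈ unitInterval) (hk : 0 < k)
    (hq : 2 * Fintype.card (AbsIx k) ^ 2 ≤ Fintype.card R) (hz : IsAbsorbable z) :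
    binProb p univ (fun S =>
        #(absTuples S z) ≤ (Fintype.card R : ℝ) ^ k / 2 * p ^ Fintype.card (NewIx k) / 2)
      ≤ Real.exp (-(p ^ (2 * Fintype.card (NewIx k)) / (4 * Fintype.card (NewIx k) ^ 2)
          * Fintype.card R)) := by
  classical
  let q := Fintype.card R
  let N := Fintype.card (NewIx k)
  have hq0 : (0 : ℝ) < q := Nat.cast_pos.2 Fintype.card_pos
  have hfilter : ∀ S : Finset R, {y ∈ ({y | (absLabel z y).Injective} : Finset (Fin k → R)) |
      univ.image (newLabel z y) ⊆ S} = absTuples S z := by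
    intro S
    ext y
    simp [mem_absTuples, image_subset_iff]
  have htail := binProb_card_filter_subset_le hp (L := (q : ℝ) ^ k / 2) (by positivity)
    (hz.half_le_card_injective_absLabel hk hq) (fun y _ => subset_univ (univ.image (newLabel z y)))
    (fun y _ => card_image_le) fun u _ => (card_le_card
      (filter_subset_filter _ (subset_univ _))).trans (card_mem_image_newLabel_le z u)
  simp only [hfilter, card_univ] at htail
  have hexponent : (q : ℝ) ^ k / 2 * p ^ (2 * N) / (2 * ((N * q ^ (k - 1) : ℕ) * N))
      = p ^ (2 * N) / (4 * N ^ 2) * q := by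
    rw [← mul_pow_sub_one hk.ne' (q : ℝ)]
    push_cast
    field_simp
    ring
  rwa [hexponent] at htail

lemma binProb_not_absRich_le (hp : p ∈ unitInterval) (hk : 0 < k)
    (hq : 2 * Fintype.card (AbsIx k) ^ 2 ≤ Fintype.card R) :
    binProb p univ (fun S : Finset R => ¬ AbsRich k S
        ((Fintype.card R : ℝ) ^ k / 2 * p ^ Fintype.card (NewIx k) / 2))
      ≤ (Fintype.card R : ℝ) ^ k * Real.exp (-(p ^ (2 * Fintype.card (NewIx k))
          / (4 * Fintype.card (NewIx k) ^ 2) * Fintype.card R)) := by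
  classical
  let Z : Finset (Fin k → R) := {z | IsAbsorbable z}
  have hZ : (#Z : ℝ) ≤ (Fintype.card R : ℝ) ^ k := by
    have hcard := card_le_univ Z
    rw [Fintype.card_fun, Fintype.card_fin] at hcard
    exact_mod_cast hcard
  refine (binProb_mono hp fun S _ hS => ?_).trans <| (binProb_exists_mem_le hp Z fun z S =>
    #(absTuples S z) ≤ (Fintype.card R : ℝ) ^ k / 2 * p ^ Fintype.card (NewIx k) / 2).trans <|
    (sum_le_card_nsmul Z _ _ fun z hz =>
      binProb_card_absTuples_le hp hk hq (mem_filter.1 hz).2).trans ?_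
  · simp only [AbsRich, not_forall, not_le] at hS
    obtain ⟨z, hz, hlt⟩ := hS
    exact ⟨z, mem_filter.2 ⟨mem_univ z, hz⟩, hlt.le⟩
  · rw [nsmul_eq_mul]
    gcongr

/-- The proportion of all `y` that span potential absorbers with labels in the image of a typical
injection: half of the `y` are generic, the binomial random subset of density `1 / 8` to which the
image is compared contains all new labels with probability `(1 / 8) ^ card (NewIx k)`, and half of
this expectation is attained. -/
noncomputable def richness (k : ℕ) : ℝ :=
  (1 / 8) ^ Fintype.card (NewIx k) / 4

/-- The exponential rate at which the images of random injections fail to be rich. -/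
noncomputable def richRate (k : ℕ) : ℝ :=
  (1 / 8) ^ (2 * Fintype.card (NewIx k)) / (4 * Fintype.card (NewIx k) ^ 2)

lemma richness_pos (k : ℕ) : 0 < richness k := by
  unfold richness
  positivity

lemma richRate_pos (hk : 0 < k) : 0 < richRate k := by
  have := card_newIx_pos hk
  unfold richRate
  positivity

open Classical in
lemma card_nonzeroInjections_not_absRich_le [DecidableEq R] {n : ℕ} (hk : 0 < k)
    (hq : 2 * Fintype.card (AbsIx k) ^ 2 ≤ Fintype.card R) (hnq : 2 * n ≤ Fintype.card R)
    (hqn : Fintype.card R ≤ 4 * n) :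
    (#{π ∈ nonzeroInjections n R | ¬ AbsRich k (univ.image π) (richness k * Fintype.card R ^ k)}
        : ℝ)
      ≤ #(nonzeroInjections n R) * (4 * Fintype.card R ^ k
          * Real.exp (-(richRate k * Fintype.card R))) := by
  let q := Fintype.card R
  let B : Finset R → Prop := fun S => ¬ AbsRich k S (richness k * q ^ k)
  have hp : (1 / 8 : ℝ) ∈ unitInterval := by constructor <;> norm_num
  have hqn' : (q : ℝ) ≤ 4 * n := mod_cast hqn
  have hB : binProb (1 / 8) univ B ≤ q ^ k * Real.exp (-(richRate k * q)) := by
    have hL : richness k * q ^ k = (q : ℝ) ^ k / 2 * (1 / 8) ^ Fintype.card (NewIx k) / 2 := by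
      rw [richness]
      ring
    simpa only [B, hL, richRate] using binProb_not_absRich_le (R := R) hp hk hq
  have hdesc : (q.descFactorial n : ℝ) ≤ 2 * #(nonzeroInjections n R) := by
    rw [card_nonzeroInjections]
    exact_mod_cast descFactorial_le_two_mul_descFactorial_pred Fintype.card_pos hnq
  calc (#{π ∈ nonzeroInjections n R | B (univ.image π)} : ℝ)
      ≤ #{π : Fin n → R | π.Injective ∧ B (univ.image π)} := by
        refine Nat.cast_le.2 (card_le_card fun π hπ => ?_)
        obtain ⟨hinj, hBπ⟩ := mem_filter.1 hπ
        exact mem_filter.2 ⟨mem_univ π, (mem_nonzeroInjections.1 hinj).1, hBπ⟩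
    _ ≤ 2 * q.descFactorial n * binProb (1 / 8) univ B :=
        card_injective_image_le hp (fun S S' hSS' hS' hS => hS' (hS.mono hSS')) (by linarith)
    _ ≤ 2 * (2 * #(nonzeroInjections n R)) * (q ^ k * Real.exp (-(richRate k * q))) :=
        mul_le_mul (mul_le_mul_of_nonneg_left hdesc two_pos.le) hB (binProb_nonneg hp B)
          (by positivity)
    _ = #(nonzeroInjections n R) * (4 * q ^ k * Real.exp (-(richRate k * q))) := by ring

end RichSubset

section AbsorberEdges

lemma card_filter_even_card_eq_card_filter_odd_card (ι : Type*) [Fintype ι] [Nonempty ι] :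
    #{I : Finset ι | Even #I} = #{I : Finset ι | Odd #I} := by
  have hsum := sum_powerset_neg_one_pow_card_of_nonempty (univ_nonempty (α := ι))
  rw [powerset_univ, ← sum_filter_add_sum_filter_not univ fun I : Finset ι => Even #I,
    sum_congr rfl fun I hI => (mem_filter.1 hI).2.neg_one_pow,
    sum_congr rfl fun I hI => (Nat.not_even_iff_odd.1 (mem_filter.1 hI).2).neg_one_pow] at hsum
  simp only [sum_const, smul_neg, nsmul_eq_mul, mul_one, Nat.not_even_iff_odd] at hsum
  omega

lemma card_filter_odd_card {k : ℕ} (hk : 0 < k) :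
    #{I : Finset (Fin k) | Odd #I} = 2 ^ (k - 1) := by
  have := Fin.pos_iff_nonempty.1 hk
  have hsplit := card_filter_add_card_filter_not (s := (univ : Finset (Finset (Fin k))))
    fun I => Even #I
  simp only [Nat.not_even_iff_odd, card_filter_even_card_eq_card_filter_odd_card, card_univ,
    Fintype.card_finset, Fintype.card_fin] at hsplit
  have hpow := mul_pow_sub_one hk.ne' 2
  omega

lemma card_evenIx_add_one {k : ℕ} (hk : 0 < k) : Fintype.card (EvenIx k) + 1 = 2 ^ (k - 1) := by
  have := Fin.pos_iff_nonempty.1 hk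
  have hempty : ∅ ∈ ({I | Even #I} : Finset (Finset (Fin k))) :=
    mem_filter.2 ⟨mem_univ ∅, Even.zero⟩
  rw [← card_filter_odd_card hk, ← card_filter_even_card_eq_card_filter_odd_card,
    Fintype.card_subtype, ← card_erase_add_one hempty]
  refine congrArg (#· + 1) (ext fun I => ?_)
  simp [nonempty_iff_ne_empty]

/-- The number `M` of edges of an absorber. -/
def absorberSize (k : ℕ) : ℕ :=
  2 ^ (2 * k - 1) - 2 ^ k + 1

lemma absorberSize_pos (k : ℕ) : 0 < absorberSize k :=
  Nat.succ_pos _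

lemma two_pow_add_mul_eq_absorberSize {k : ℕ} (hk : 0 < k) :
    2 ^ (k - 1) + (2 ^ (k - 1) - 1) * (2 ^ k - 1) = absorberSize k := by
  obtain ⟨k, rfl⟩ := Nat.exists_eq_succ_of_ne_zero hk.ne'
  obtain ⟨r, hr⟩ := Nat.exists_eq_succ_of_ne_zero (Nat.two_pow_pos k).ne'
  have hdouble : 2 ^ (k + 1) = 2 * (r + 1) := by rw [pow_succ', hr]
  have hsquare : 2 ^ (2 * (k + 1) - 1) = 2 * (r + 1) * (r + 1) := by
    rw [show 2 * (k + 1) - 1 = k + 1 + k by omega, pow_add, hdouble, hr]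
  rw [absorberSize, Nat.succ_eq_add_one, Nat.add_sub_cancel, hsquare, hdouble, hr]
  zify [show 2 * (r + 1) ≤ 2 * (r + 1) * (r + 1) by nlinarith, show 1 ≤ 2 * (r + 1) by omega]
  push_cast [Nat.succ_eq_add_one]
  ring

variable {n k : ℕ} {x a : Fin k → Fin n} {b : Finset (Fin k) → Fin k → Fin n}

/-- The vertices outside `x` of the absorber spanned by `a`, where `b I` are the algebraic vertices
associated with the even edge `e_I`. -/
def newVert (a : Fin k → Fin n) (b : Finset (Fin k) → Fin k → Fin n) : NewIx k → Fin n :=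
  Sum.elim a fun q => b q.1.1 q.2

/-- The edges of the absorber with vertices `x` and `newVert a b`. -/
def absEdges (x a : Fin k → Fin n) (b : Finset (Fin k) → Fin k → Fin n) :
    Finset (Finset (Fin n)) :=
  ({I : Finset (Fin k) | Odd #I} : Finset _).image (fun I => univ.image (cpVert x a I)) ∪
    ((univ : Finset (EvenIx k)) ×ˢ (univ.erase ∅)).image
      fun r => univ.image (cpVert (cpVert x a r.1.1) (b r.1.1) r.2)

lemma mem_absEdges {e : Finset (Fin n)} : e ∈ absEdges x a b ↔
    (∃ I : Finset (Fin k), Odd #I ∧ univ.image (cpVert x a I) = e) ∨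
      ∃ (I : EvenIx k) (J : Finset (Fin k)), J.Nonempty ∧
        univ.image (cpVert (cpVert x a I.1) (b I.1) J) = e := by
  simp [absEdges, nonempty_iff_ne_empty]

lemma card_absEdges_le (hk : 0 < k) (x a : Fin k → Fin n)
    (b : Finset (Fin k) → Fin k → Fin n) : #(absEdges x a b) ≤ absorberSize k := by
  refine (card_union_le _ _).trans ((add_le_add card_image_le card_image_le).trans_eq ?_)
  rw [card_product, card_filter_odd_card hk, card_univ, card_erase_of_mem (mem_univ _), card_univ,
    Fintype.card_finset, Fintype.card_fin, ← two_pow_add_mul_eq_absorberSize hk,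
    ← card_evenIx_add_one hk, Nat.add_sub_cancel]

lemma exists_newVert_mem_of_mem_absEdges {e : Finset (Fin n)} (he : e ∈ absEdges x a b) :
    ∃ s, newVert a b s ∈ e := by
  obtain ⟨I, hI, rfl⟩ | ⟨I, J, ⟨i, hi⟩, rfl⟩ := mem_absEdges.1 he
  · obtain ⟨i, hi⟩ := card_pos.1 hI.pos
    exact ⟨Sum.inl i, mem_image.2 ⟨i, mem_univ i, if_pos hi⟩⟩
  · exact ⟨Sum.inr (I, i), mem_image.2 ⟨i, mem_univ i, if_pos hi⟩⟩

lemma cpVert_injective {V : Type*} {x a : Fin k → V} (h : (Sum.elim x a).Injective)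
    (I : Finset (Fin k)) : (cpVert x a I).Injective := by
  intro i j hij
  simp only [cpVert] at hij
  split_ifs at hij
  · exact Sum.inr_injective (h hij)
  · exact absurd (h (a₁ := Sum.inr i) (a₂ := Sum.inl j) hij) Sum.inr_ne_inl
  · exact absurd (h (a₁ := Sum.inl i) (a₂ := Sum.inr j) hij) Sum.inl_ne_inr
  · exact Sum.inl_injective (h hij)

lemma image_mem_allK {f : Fin k → Fin n} (hf : f.Injective) : univ.image f ∈ allK n k :=
  mem_powersetCard.2
    ⟨subset_univ _, by rw [card_image_of_injective _ hf, card_univ, Fintype.card_fin]⟩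

lemma absEdges_subset_allK (h : (Sum.elim x (newVert a b)).Injective) :
    absEdges x a b ⊆ allK n k := by
  obtain ⟨hx, hnew, hx_new⟩ := Sum.elim_injective.1 h
  obtain ⟨ha, hb, hab⟩ := Sum.elim_injective.1 hnew
  have hxa := cpVert_injective (hx.sumElim ha fun i j => hx_new i (Sum.inl j))
  intro e he
  obtain ⟨I, -, rfl⟩ | ⟨I, J, -, rfl⟩ := mem_absEdges.1 he
  · exact image_mem_allK (hxa I)
  · refine image_mem_allK (cpVert_injective ((hxa I).sumElim
      (hb.comp (Prod.mk_right_injective I)) fun i j => ?_) J)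
    rw [cpVert]
    split_ifs
    exacts [hab i (I, j), hx_new i (Sum.inr (I, j))]

end AbsorberEdges

section AbsorbersOfRichInjection

variable {n k : ℕ} {F : Type*} [Field F] {π : Fin n → F} {x a : Fin k → Fin n}
  {b : Finset (Fin k) → Fin k → Fin n}

lemma comp_cpVert {V W : Type*} (f : V → W) (x a : Fin k → V) (I : Finset (Fin k)) :
    f ∘ cpVert x a I = cpVert (f ∘ x) (f ∘ a) I :=
  funext fun _ => apply_ite f _ _ _

lemma injective_elim_newVert (hb : π ∘ newVert a b = newLabel (π ∘ x) (π ∘ a))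
    (hinj : (absLabel (π ∘ x) (π ∘ a)).Injective) : (Sum.elim x (newVert a b)).Injective := by
  refine Function.Injective.of_comp (f := π) ?_
  rw [Sum.comp_elim, hb]
  exact hinj.comp (Option.some_injective _)

lemma sum_cpVert_ne_zero {z y : Fin k → F} (hinj : (absLabel z y).Injective) (I : EvenIx k) :
    ∑ j, cpVert z y I.1 j ≠ 0 := by
  intro hsum
  obtain ⟨i, hi⟩ := I.2.1
  have heq : absLabel z y (some (Sum.inr (Sum.inr (I, i))))
      = absLabel z y (some (Sum.inr (Sum.inl i))) := by
    have hvert : cpVert z y I.1 i = y i := if_pos hi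
    simp [absLabel, newLabel, hsum, hvert]
  simpa using hinj heq

lemma spansAbsorber_of_absEdges_subset (hb : π ∘ newVert a b = newLabel (π ∘ x) (π ∘ a))
    (hinj : (absLabel (π ∘ x) (π ∘ a)).Injective) {H : Finset (Finset (Fin n))}
    (hH : absEdges x a b ⊆ H) : SpansAbsorber n k F π H x a := by
  refine ⟨b, injective_elim_newVert hb hinj, fun I hI => hH (mem_absEdges.2 (Or.inl ⟨I, hI, rfl⟩)),
    fun I hI hIeven => ?_⟩
  have hlabel : ∀ j, π (cpVert x a I j) = cpVert (π ∘ x) (π ∘ a) I j :=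
    congrFun (comp_cpVert π x a I)
  simp only [hlabel]
  exact ⟨sum_cpVert_ne_zero hinj ⟨I, hI, hIeven⟩,
    fun i => congrFun hb (Sum.inr (⟨I, hI, hIeven⟩, i)),
    fun J hJ => hH (mem_absEdges.2 (Or.inr ⟨⟨I, hI, hIeven⟩, J, hJ, rfl⟩))⟩

lemma card_filter_image_eq_le (A : Finset (Fin n)) :
    #{a : Fin k → Fin n | univ.image a = A} ≤ k ^ k := by
  obtain h | ⟨a₀, ha₀⟩ := ({a | univ.image a = A} : Finset (Fin k → Fin n)).eq_empty_or_nonempty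
  · rw [h]
    exact Nat.zero_le _
  · have hA : #A ≤ k := by
      rw [← (mem_filter.1 ha₀).2]
      exact card_image_le.trans_eq (card_fin k)
    calc #{a : Fin k → Fin n | univ.image a = A}
        ≤ #(Fintype.piFinset fun _ : Fin k => A) := card_le_card fun a ha =>
          Fintype.mem_piFinset.2 fun i => (mem_filter.1 ha).2 ▸ mem_image_of_mem a (mem_univ i)
      _ ≤ k ^ k := by
          rw [Fintype.card_piFinset_const]
          exact Nat.pow_le_pow_left hA k

lemma card_le_mul_absorberCount {Y : Finset (Fin k → Fin n)} {H : Finset (Finset (Fin n))}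
    (hY : ∀ a ∈ Y, SpansAbsorber n k F π H x a) :
    #Y ≤ k ^ k * absorberCount n k F π H (univ.image x) := by
  calc #Y ≤ k ^ k * #(Y.image fun a => univ.image a) :=
        card_le_mul_card_image Y _ fun A _ =>
          (card_le_card (filter_subset_filter _ (subset_univ Y))).trans (card_filter_image_eq_le A)
    _ ≤ k ^ k * absorberCount n k F π H (univ.image x) := by
        rw [absorberCount, ← Set.ncard_coe_finset]
        refine Nat.mul_le_mul_left _ (Set.ncard_le_ncard (fun A hA => ?_) (Set.toFinite _))
        obtain ⟨a, ha, rfl⟩ := mem_image.1 (mem_coe.1 hA)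
        exact ⟨x, a, rfl, rfl, hY a ha⟩

lemma exists_comp_newVert_eq [DecidableEq F] (h : ∀ s, newLabel (π ∘ x) (π ∘ a) s ∈ univ.image π) :
    ∃ b, π ∘ newVert a b = newLabel (π ∘ x) (π ∘ a) := by
  choose v _ hv using fun s => mem_image.1 (h s)
  refine ⟨fun I i => if hI : I.Nonempty ∧ Even #I then v (Sum.inr (⟨I, hI⟩, i)) else a i,
    funext fun s => ?_⟩
  obtain i | ⟨I, i⟩ := s
  · rfl
  · simp [newVert, I.2, hv]

variable [Fintype F]

lemma card_newLabel_comp_eq_le [CharP F 2] [DecidableEq F] (hπ : π.Injective) (x : Fin k → Fin n)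
    (s : NewIx k) (u : F) :
    #{a : Fin k → Fin n | newLabel (π ∘ x) (π ∘ a) s = u} ≤ Fintype.card F ^ (k - 1) :=
  (card_le_card_of_injOn (π ∘ ·) (fun _ ha => mem_filter.2 ⟨mem_univ _, (mem_filter.1 ha).2⟩)
    hπ.comp_left.injOn).trans (card_newLabel_eq_le (π ∘ x) s u)

lemma card_filter_mem_absEdges_le [CharP F 2] (hπ : π.Injective) {Y : Finset (Fin k → Fin n)}
    {b : (Fin k → Fin n) → Finset (Fin k) → Fin k → Fin n}
    (hb : ∀ a ∈ Y, π ∘ newVert a (b a) = newLabel (π ∘ x) (π ∘ a)) {e : Finset (Fin n)}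
    (he : e ∈ allK n k) :
    #{a ∈ Y | e ∈ absEdges x a (b a)}
      ≤ Fintype.card (NewIx k) * k * Fintype.card F ^ (k - 1) := by
  classical
  have hcover : {a ∈ Y | e ∈ absEdges x a (b a)} ⊆ ((univ : Finset (NewIx k)) ×ˢ e).biUnion
      fun r => {a | newLabel (π ∘ x) (π ∘ a) r.1 = π r.2} := by
    intro a ha
    obtain ⟨haY, hae⟩ := mem_filter.1 ha
    obtain ⟨s, hs⟩ := exists_newVert_mem_of_mem_absEdges hae
    exact mem_biUnion.2 ⟨(s, newVert a (b a) s), mem_product.2 ⟨mem_univ s, hs⟩,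
      mem_filter.2 ⟨mem_univ a, (congrFun (hb a haY) s).symm⟩⟩
  refine (card_le_card hcover).trans ((card_biUnion_le_card_mul _ _ _ fun r _ =>
    card_newLabel_comp_eq_le hπ x r.1 (π r.2)).trans_eq ?_)
  rw [card_product, card_univ, (mem_powersetCard.1 he).2]

variable [DecidableEq F]

open Classical in
/-- The tuples `a` of vertices that span absorbers for `x` once the required edges are present. -/
noncomputable def vertTuples (π : Fin n → F) (x : Fin k → Fin n) : Finset (Fin k → Fin n) :=
  {a | π ∘ a ∈ absTuples (univ.image π) (π ∘ x)}

lemma mem_vertTuples : a ∈ vertTuples π x ↔ (absLabel (π ∘ x) (π ∘ a)).Injective ∧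
    ∀ s, newLabel (π ∘ x) (π ∘ a) s ∈ univ.image π := by
  simp only [vertTuples, mem_filter, mem_univ, true_and, mem_absTuples]

lemma card_absTuples_le_card_vertTuples (π : Fin n → F) (x : Fin k → Fin n) :
    #(absTuples (univ.image π) (π ∘ x)) ≤ #(vertTuples π x) := by
  refine card_le_card_of_surjOn (π ∘ ·) fun y hy => ?_
  choose a _ ha using fun i => mem_image.1 ((mem_absTuples.1 hy).2 (Sum.inl i))
  obtain rfl : π ∘ a = y := funext ha
  exact ⟨a, mem_vertTuples.2 (mem_absTuples.1 hy), rfl⟩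

variable [CharP F 2] {p : ℝ}

lemma binProb_absorberCount_le (hp : p ∈ unitInterval) (hk : 0 < k) (hπ : π.Injective) {L : ℝ}
    (hL : 0 < L) (hLx : L ≤ #(absTuples (univ.image π) (π ∘ x))) :
    binProb p (allK n k) (fun H => (k ^ k * absorberCount n k F π H (univ.image x) : ℝ)
        ≤ L * p ^ absorberSize k / 2)
      ≤ Real.exp (-(L * p ^ (2 * absorberSize k) / (2 * ((Fintype.card (NewIx k) * k
          * Fintype.card F ^ (k - 1) : ℕ) * absorberSize k)))) := by
  have hexists : ∀ a : Fin k → Fin n, ∃ b, a ∈ vertTuples π x →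
      π ∘ newVert a b = newLabel (π ∘ x) (π ∘ a) := fun a => by
    by_cases ha : a ∈ vertTuples π x
    · exact (exists_comp_newVert_eq (mem_vertTuples.1 ha).2).imp fun _ hb _ => hb
    · exact ⟨fun _ => a, fun ha' => absurd ha' ha⟩
  choose b hb using hexists
  have hinj : ∀ a ∈ vertTuples π x, (absLabel (π ∘ x) (π ∘ a)).Injective := fun a ha =>
    (mem_vertTuples.1 ha).1
  refine (binProb_mono hp fun H _ hH => ?_).trans <| binProb_card_filter_subset_le hp hL
    (hLx.trans (Nat.cast_le.2 (card_absTuples_le_card_vertTuples π x)))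
    (fun a ha => absEdges_subset_allK (injective_elim_newVert (hb a ha) (hinj a ha)))
    (fun a _ => card_absEdges_le hk x a (b a)) fun e he => card_filter_mem_absEdges_le hπ hb he
  refine le_trans ?_ hH
  exact_mod_cast card_le_mul_absorberCount fun a ha =>
    have haY := (mem_filter.1 ha).1
    spansAbsorber_of_absEdges_subset (hb a haY) (hinj a haY) (mem_filter.1 ha).2

/-- The constant `c` for which absorbable edges have at least `c q ^ k p ^ M` absorbers: half of the
expected number of tuples spanning absorbers, and at most `k ^ k` tuples give the same edge. -/
noncomputable def absorberDensity (k : ℕ) : ℝ :=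
  richness k / (2 * k ^ k)

/-- The exponential rate at which an absorbable edge fails to have many absorbers. -/
noncomputable def absorberRate (k : ℕ) : ℝ :=
  richness k / (2 * (Fintype.card (NewIx k) * k * absorberSize k))

lemma absorberDensity_pos (hk : 0 < k) : 0 < absorberDensity k := by
  have := richness_pos k
  unfold absorberDensity
  positivity

lemma absorberRate_pos (hk : 0 < k) : 0 < absorberRate k := by
  have := richness_pos k
  have := card_newIx_pos hk
  have := absorberSize_pos k
  unfold absorberRate
  positivity

lemma binProb_exists_absorberCount_lt_le (hp : p ∈ unitInterval) (hk : 0 < k) (hπ : π.Injective)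
    (hrich : AbsRich k (univ.image π) (richness k * Fintype.card F ^ k)) :
    binProb p (allK n k) (fun H => ∃ x : Fin k → Fin n, IsAbsorbable (π ∘ x) ∧
        (absorberCount n k F π H (univ.image x) : ℝ)
          < absorberDensity k * Fintype.card F ^ k * p ^ absorberSize k)
      ≤ n ^ k * Real.exp (-(absorberRate k * p ^ (2 * absorberSize k) * Fintype.card F)) := by
  classical
  let q := Fintype.card F
  have hq : (0 : ℝ) < q := Nat.cast_pos.2 Fintype.card_pos
  have hL : 0 < richness k * q ^ k :=
    mul_pos (richness_pos k) (pow_pos hq k)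
  let X : Finset (Fin k → Fin n) := {x | IsAbsorbable (π ∘ x)}
  have hX : (#X : ℝ) ≤ n ^ k := by
    have hcard := card_le_univ X
    rw [Fintype.card_fun, Fintype.card_fin, Fintype.card_fin] at hcard
    exact_mod_cast hcard
  have hexponent : richness k * q ^ k * p ^ (2 * absorberSize k)
        / (2 * ((Fintype.card (NewIx k) * k * q ^ (k - 1) : ℕ) * absorberSize k))
      = absorberRate k * p ^ (2 * absorberSize k) * q := by
    rw [absorberRate, ← mul_pow_sub_one hk.ne' (q : ℝ)]
    push_cast
    field_simp
  let few (x : Fin k → Fin n) (H : Finset (Finset (Fin n))) : Prop :=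
    (k ^ k * absorberCount n k F π H (univ.image x) : ℝ)
      ≤ richness k * q ^ k * p ^ absorberSize k / 2
  refine (binProb_mono (Q := fun H => ∃ x ∈ X, few x H) hp fun H _ hH => ?_).trans <|
    (binProb_exists_mem_le hp X few).trans <|
    (sum_le_card_nsmul X _ _ fun x hx => (binProb_absorberCount_le hp hk hπ hL
      (hrich _ (mem_filter.1 hx).2)).trans_eq (by rw [hexponent])).trans ?_
  · obtain ⟨x, hx, hlt⟩ := hH
    refine ⟨x, mem_filter.2 ⟨mem_univ x, hx⟩, ?_⟩
    calc (k ^ k * absorberCount n k F π H (univ.image x) : ℝ)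
        ≤ k ^ k * (absorberDensity k * q ^ k * p ^ absorberSize k) := by gcongr
      _ = richness k * q ^ k * p ^ absorberSize k / 2 := by
          rw [absorberDensity]
          field_simp
  · rw [nsmul_eq_mul]
    gcongr

end AbsorbersOfRichInjection

section RandomInjectionAndHypergraph

variable {n k : ℕ} {F : Type*} [Fintype F] [DecidableEq F] {p : ℝ}

lemma hypInjProb_eq [Zero F] (E : Finset (Finset (Fin n)) → (Fin n → F) → Prop) :
    hypInjProb n k F p E
      = (∑ π ∈ nonzeroInjections n F, binProb p (allK n k) (E · π))
        / #(nonzeroInjections n F) := by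
  simp only [hypInjProb, nonzeroInjections, binProb, binExp, mul_ite, mul_one, mul_zero]
  congr!

lemma hypInjProb_mono [Zero F] (hp : p ∈ unitInterval)
    {E E' : Finset (Finset (Fin n)) → (Fin n → F) → Prop}
    (h : ∀ π, π.Injective → (∀ v, π v ≠ 0) → ∀ H, E H π → E' H π) :
    hypInjProb n k F p E ≤ hypInjProb n k F p E' := by
  simp only [hypInjProb_eq]
  gcongr with π hπ
  obtain ⟨hinj, hne⟩ := mem_nonzeroInjections.1 hπ
  exact binProb_mono hp fun H _ => h π hinj hne H

open Classical in
lemma one_sub_add_le_hypInjProb [Zero F] (hp : p ∈ unitInterval)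
    {E : Finset (Finset (Fin n)) → (Fin n → F) → Prop} (G : (Fin n → F) → Prop) {δ₁ δ₂ : ℝ}
    (hδ₂ : 0 ≤ δ₂) (hne : (nonzeroInjections n F).Nonempty)
    (hbad : (#{π ∈ nonzeroInjections n F | ¬ G π} : ℝ) ≤ #(nonzeroInjections n F) * δ₁)
    (hgood : ∀ π ∈ nonzeroInjections n F, G π →
      binProb p (allK n k) (fun H => ¬ E H π) ≤ δ₂) :
    1 - (δ₁ + δ₂) ≤ hypInjProb n k F p E := by
  rw [hypInjProb_eq, le_div_iff₀ (Nat.cast_pos.2 hne.card_pos)]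
  calc (1 - (δ₁ + δ₂)) * #(nonzeroInjections n F)
      ≤ #(nonzeroInjections n F) * (1 - δ₂) - #{π ∈ nonzeroInjections n F | ¬ G π} := by
        linarith
    _ = ∑ π ∈ nonzeroInjections n F, (1 - δ₂ - if ¬ G π then 1 else 0) := by
        rw [sum_sub_distrib, sum_const, nsmul_eq_mul, sum_boole]
    _ ≤ ∑ π ∈ nonzeroInjections n F, binProb p (allK n k) (E · π) := by
        refine sum_le_sum fun π hπ => ?_
        have hadd := binProb_add_binProb_not (p := p) (U := allK n k) (E · π)
        split_ifs with hG
        · linarith [hgood π hπ hG]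
        · linarith [binProb_nonneg (U := allK n k) hp (E · π)]

lemma one_sub_le_hypInjProb_absorberCount [Field F] [CharP F 2] (hp : p ∈ unitInterval)
    (hk : 0 < k) (hq : 2 * Fintype.card (AbsIx k) ^ 2 ≤ Fintype.card F)
    (hnq : 2 * n ≤ Fintype.card F) (hqn : Fintype.card F ≤ 4 * n) :
    1 - (4 * Fintype.card F ^ k * Real.exp (-(richRate k * Fintype.card F))
        + n ^ k * Real.exp (-(absorberRate k * p ^ (2 * absorberSize k) * Fintype.card F)))
      ≤ hypInjProb n k F p fun H π => ∀ x : Fin k → Fin n, IsAbsorbable (π ∘ x) →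
        absorberDensity k * Fintype.card F ^ k * p ^ absorberSize k
          ≤ absorberCount n k F π H (univ.image x) := by
  have hne : (nonzeroInjections n F).Nonempty := by
    rw [← card_pos, card_nonzeroInjections, Nat.descFactorial_pos]
    omega
  refine one_sub_add_le_hypInjProb hp
    (fun π => AbsRich k (univ.image π) (richness k * Fintype.card F ^ k)) (by positivity) hne
    (card_nonzeroInjections_not_absRich_le hk hq hnq hqn) fun π hπ hrich => ?_
  simpa only [not_forall, not_le, exists_prop] using
    binProb_exists_absorberCount_lt_le hp hk (mem_nonzeroInjections.1 hπ).1 hrich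

end RandomInjectionAndHypergraph

section Asymptotics

open Filter in
lemma eventually_mul_pow_mul_exp_neg_sqrt_le_rpow (C : ℝ) (K : ℕ) {a : ℝ} (ha : 0 < a) (c : ℝ) :
    ∀ᶠ n : ℕ in atTop, C * n ^ K * Real.exp (-(a * √n)) ≤ (n : ℝ) ^ (-c) := by
  have hsqrt : Tendsto (fun n : ℕ => √(n : ℝ)) atTop atTop :=
    Real.tendsto_sqrt_atTop.comp tendsto_natCast_atTop_atTop
  have hzero := ((tendsto_rpow_mul_exp_neg_mul_atTop_nhds_zero (2 * (K + c)) a ha).comp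
    hsqrt).const_mul C
  rw [mul_zero] at hzero
  filter_upwards [hzero.eventually (ge_mem_nhds one_pos), eventually_gt_atTop 0] with n hn hpos
  have hn0 : (0 : ℝ) < n := Nat.cast_pos.2 hpos
  have hpow : √(n : ℝ) ^ (2 * (K + c)) = n ^ K * (n : ℝ) ^ c := by
    rw [Real.sqrt_eq_rpow, ← Real.rpow_mul hn0.le, ← Real.rpow_natCast, ← Real.rpow_add hn0]
    ring_nf
  rw [Real.rpow_neg hn0.le, ← one_div, le_div_iff₀ (Real.rpow_pos_of_pos hn0 c)]
  rw [Function.comp_apply, hpow, neg_mul] at hn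
  linarith

lemma rpow_sub_mul_eq_pow_mul_pow {x : ℝ} (hx : 0 < x) (k M : ℕ) (ε : ℝ) :
    x ^ (k - M * ε) = x ^ k * (x ^ (-ε)) ^ M := by
  rw [← Real.rpow_natCast (x ^ (-ε)), ← Real.rpow_mul hx.le, sub_eq_add_neg, Real.rpow_add hx,
    Real.rpow_natCast, neg_mul, mul_comm ε]

lemma sqrt_le_mul_rpow_neg_pow {x ε : ℝ} {M : ℕ} (hx : 1 ≤ x) (hε : 4 * M * ε ≤ 1) :
    √x ≤ x * (x ^ (-ε)) ^ (2 * M) := by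
  have h := rpow_sub_mul_eq_pow_mul_pow (zero_lt_one.trans_le hx) 1 (2 * M) ε
  rw [pow_one] at h
  rw [← h, Real.sqrt_eq_rpow]
  refine Real.rpow_le_rpow_of_exponent_le hx ?_
  push_cast
  linarith

lemma four_mul_pow_mul_exp_add_le {n q k : ℕ} {s r₁ r₂ t : ℝ} (hr₁ : 0 ≤ r₁) (hr₂ : 0 ≤ r₂)
    (ht : 0 ≤ t) (hnq : n ≤ q) (hqn : q ≤ 4 * n) (hs : s ≤ n) (hst : s ≤ n * t) :
    4 * q ^ k * Real.exp (-(r₁ * q)) + n ^ k * Real.exp (-(r₂ * t * q))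
      ≤ (4 ^ (k + 1) + 1) * n ^ k * Real.exp (-(min r₁ r₂ * s)) := by
  have hnq' : (n : ℝ) ≤ q := Nat.cast_le.2 hnq
  have hr : 0 ≤ min r₁ r₂ := le_min hr₁ hr₂
  have hq : 4 * (q : ℝ) ^ k ≤ 4 ^ (k + 1) * n ^ k := by
    rw [pow_succ', mul_assoc, ← mul_pow]
    gcongr
    exact_mod_cast hqn
  have h₁ : min r₁ r₂ * s ≤ r₁ * q :=
    (mul_le_mul_of_nonneg_left (hs.trans hnq') hr).trans
      (mul_le_mul_of_nonneg_right (min_le_left _ _) q.cast_nonneg)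
  have h₂ : min r₁ r₂ * s ≤ r₂ * t * q := by
    calc min r₁ r₂ * s ≤ min r₁ r₂ * (n * t) := by gcongr
      _ ≤ r₂ * (q * t) := by gcongr; exact min_le_right _ _
      _ = r₂ * t * q := by ring
  calc 4 * q ^ k * Real.exp (-(r₁ * q)) + n ^ k * Real.exp (-(r₂ * t * q))
      ≤ 4 ^ (k + 1) * n ^ k * Real.exp (-(min r₁ r₂ * s))
        + n ^ k * Real.exp (-(min r₁ r₂ * s)) := by gcongr
    _ = (4 ^ (k + 1) + 1) * n ^ k * Real.exp (-(min r₁ r₂ * s)) := by ring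

end Asymptotics

section Main

lemma exists_isAbsorbable_image_eq {V G : Type*} [LinearOrder V] [AddCommMonoid G] {π : V → G}
    {k : ℕ} {x : Finset V} (hπ : π.Injective) (hπ0 : ∀ v, π v ≠ 0) (hx : #x = k)
    (hsum : ∀ f ⊆ x, #f + 2 = k → ∑ v ∈ f, π v ≠ 0) :
    ∃ xv : Fin k → V, IsAbsorbable (π ∘ xv) ∧ univ.image xv = x := by
  let e := x.orderEmbOfFin hx
  refine ⟨e, ⟨hπ.comp e.injective, fun j => hπ0 _, fun B hB => ?_⟩, image_orderEmbOfFin_univ x hx⟩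
  have hmap : B.map e.toEmbedding ⊆ x := fun v hv => by
    obtain ⟨j, -, rfl⟩ := mem_map.1 hv
    exact orderEmbOfFin_mem x hx j
  have hne := hsum _ hmap (by rwa [card_map])
  rwa [sum_map] at hne

lemma sum_ne_zero_of_card_eq_one_or_two {V G : Type*} [Ring G] [CharP G 2] {π : V → G}
    (hπ : π.Injective) (hπ0 : ∀ v, π v ≠ 0) {f : Finset V} (hf : #f = 1 ∨ #f = 2) :
    ∑ v ∈ f, π v ≠ 0 := by
  classical
  obtain hf | hf := hf
  · obtain ⟨u, rfl⟩ := card_eq_one.1 hf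
    simpa using hπ0 u
  · obtain ⟨u, v, huv, rfl⟩ := card_eq_two.1 hf
    rw [sum_pair huv, Ne, CharTwo.add_eq_zero]
    exact hπ.ne huv

open Filter in
theorem stmt_10_general (k : ℕ) (hk : 0 < k) :
    ∃ ε₀ c : ℝ, 0 < ε₀ ∧ 0 < c ∧
      ∀ ε : ℝ, 0 < ε → ε < ε₀ → ∀ c' : ℝ, ∃ n₀ : ℕ, ∀ n : ℕ, n₀ ≤ n →
        ∀ (F : Type*) [Field F] [Fintype F] [DecidableEq F] [CharP F 2],
          2 * n ≤ Fintype.card F → Fintype.card F ≤ 4 * n →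
          1 - (n : ℝ) ^ (-c') ≤
            hypInjProb n k F ((n : ℝ) ^ (-ε)) (fun H π =>
              ∀ x : Finset (Fin n), #x = k → (∀ f ⊆ x, #f + 2 = k → ∑ v ∈ f, π v ≠ 0) →
                c * (n : ℝ) ^ ((k : ℝ) - ((2 ^ (2 * k - 1) - 2 ^ k + 1 : ℕ) : ℝ) * ε) ≤
                  (absorberCount n k F π H x : ℝ)) := by
  have hM : (0 : ℝ) < absorberSize k := Nat.cast_pos.2 (absorberSize_pos k)
  have hrich := richRate_pos hk
  have habs := absorberRate_pos hk
  have hdens := absorberDensity_pos hk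
  refine ⟨1 / (4 * absorberSize k), absorberDensity k, by positivity, hdens,
    fun ε hε hε₀ c' => ?_⟩
  obtain ⟨n₀, hn₀⟩ := eventually_atTop.1 <|
    (eventually_mul_pow_mul_exp_neg_sqrt_le_rpow (4 ^ (k + 1) + 1) k (lt_min hrich habs) c').and
      (eventually_gt_atTop (Fintype.card (AbsIx k) ^ 2))
  refine ⟨n₀, fun n hn F _ _ _ _ hnq hqn => ?_⟩
  obtain ⟨herror, hlarge⟩ := hn₀ n hn
  have hn1 : (1 : ℝ) ≤ n := Nat.one_le_cast.2 (by omega)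
  have hn0 : (0 : ℝ) < n := zero_lt_one.trans_le hn1
  have hp : (n : ℝ) ^ (-ε) ∈ unitInterval :=
    ⟨by positivity, Real.rpow_le_one_of_one_le_of_nonpos hn1 (by linarith)⟩
  have hsqrt : √(n : ℝ) ≤ n := Real.sqrt_le_self_iff.2 (Or.inr hn1)
  have hsqrt_mul : √(n : ℝ) ≤ n * ((n : ℝ) ^ (-ε)) ^ (2 * absorberSize k) :=
    sqrt_le_mul_rpow_neg_pow hn1 (by rw [lt_div_iff₀' (by positivity)] at hε₀; exact hε₀.le)
  have hfail := (four_mul_pow_mul_exp_add_le (k := k) hrich.le habs.le (by positivity)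
    (by omega : n ≤ Fintype.card F) hqn hsqrt hsqrt_mul).trans herror
  refine (sub_le_sub_left hfail 1).trans <|
    (one_sub_le_hypInjProb_absorberCount hp hk (by omega) hnq hqn).trans <|
    hypInjProb_mono hp fun π hπ hπ0 H hH x hx hsum => ?_
  obtain ⟨xv, hxv, rfl⟩ := exists_isAbsorbable_image_eq hπ hπ0 hx hsum
  calc absorberDensity k * (n : ℝ) ^ ((k : ℝ) - absorberSize k * ε)
      = absorberDensity k * n ^ k * ((n : ℝ) ^ (-ε)) ^ absorberSize k := by
        rw [rpow_sub_mul_eq_pow_mul_pow hn0, mul_assoc]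
    _ ≤ absorberDensity k * Fintype.card F ^ k * ((n : ℝ) ^ (-ε)) ^ absorberSize k := by
        gcongr
        omega
    _ ≤ absorberCount n k F π H (univ.image xv) := hH xv hxv

end Main

/-- for `k ∈ {3,4}` and `M = 2^{2k-1} - 2^k + 1`, there are
`ε₀, c > 0` such that for `0 < ε < ε₀`, with very high probability over
`H ~ H_k(n; n^{-ε})` and a uniformly random injection `π : [n] ↪ F*`, every edge
`x ∈ K_k^n` has at least `c·n^{k - Mε}` absorbers. -/
theorem stmt_10 (k : ℕ) (hk : k = 3 ∨ k = 4) :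
    ∃ ε₀ c : ℝ, 0 < ε₀ ∧ 0 < c ∧
      ∀ ε : ℝ, 0 < ε → ε < ε₀ →
        ∀ c' : ℝ, 0 < c' →
          ∃ n₀ : ℕ, ∀ n : ℕ, n₀ ≤ n →
            ∀ (m : ℕ) (F : Type) [Field F] [Fintype F] [DecidableEq F],
              ringChar F = 2 → Fintype.card F = 2 ^ m → 2 * n ≤ 2 ^ m → 2 ^ m ≤ 4 * n →
              1 - (n : ℝ) ^ (-c') ≤
                hypInjProb n k F ((n : ℝ) ^ (-ε)) (fun H π =>
                  ∀ x : Finset (Fin n), x.card = k →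
                    c * (n : ℝ) ^ ((k : ℝ) - ((2 ^ (2 * k - 1) - 2 ^ k + 1 : ℕ) : ℝ) * ε) ≤
                      (absorberCount n k F π H x : ℝ)) := by
  obtain ⟨ε₀, c, hε₀, hc, h⟩ := stmt_10_general k (by omega)
  refine ⟨ε₀, c, hε₀, hc, fun ε hε hεε₀ c' _ => (h ε hε hεε₀ c').imp
    fun n₀ hn₀ n hn m F _ _ _ hchar hcard hnm hmn => ?_⟩
  have := ringChar.of_eq hchar
  have hn1 : (1 : ℝ) ≤ n := Nat.one_le_cast.2 (by have := Nat.two_pow_pos m; omega)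
  have hp : (n : ℝ) ^ (-ε) ∈ unitInterval :=
    ⟨by positivity, Real.rpow_le_one_of_one_le_of_nonpos hn1 (by linarith)⟩
  refine (hn₀ n hn F (hcard ▸ hnm) (hcard ▸ hmn)).trans
    (hypInjProb_mono hp fun π hπ hπ0 H hH x hx => hH x hx fun f _ hf => ?_)
  exact sum_ne_zero_of_card_eq_one_or_two hπ hπ0 (by omega)
end

section
/- Let k ≥ 3. There exists C = C(k) > 0 such that for every n the following holds. Let F be the finite field with 2^m elements where 2n ≤ 2^m ≤ 4n, let F* = F \ {0}, and let π_1,...,π_{k+1} : [n] ↪ F* be independent uniformly random injections. Then with probability at least 1 − C/n, for every k-element subset x ⊆ [n] there exists some i ∈ [k+1] such that no (k−2)-element subset of x has π_i-images summing to 0 in F. -/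
/-!
Given the values of a random injection `[n] ↪ F*` at all points but `v`, its value at `v` is
uniform over the `|F| - n ≥ n` unused elements, at most one of which makes the sum over a fixed
`s ∋ v` equal to zero. So a given set `x` has a vanishing `(k - 2)`-subset sum with probability at
most `C / n`, where `C` is the number of such subsets. By independence this happens for all `k + 1`
injections at once with probability at most `(C / n) ^ (k + 1)`, and a union bound over at most
`n ^ k` sets `x` costs all but one of the factors `1 / n`.
-/

open Finset

open Classical in
/-- The probability, when `k+1` injections `[n] ↪ F*` are chosen independently
and uniformly at random, of the event `E`. -/
noncomputable def injTupleProb (n : ℕ) (k : ℕ) (F : Type*) [Fintype F] [DecidableEq F]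
    [Zero F] (E : (Fin (k + 1) → Fin n → F) → Prop) : ℝ :=
  (((Finset.univ : Finset (Fin (k + 1) → Fin n → F)).filter fun πs =>
      (∀ i, Function.Injective (πs i) ∧ ∀ v, πs i v ≠ 0) ∧ E πs).card : ℝ) /
  (((Finset.univ : Finset (Fin (k + 1) → Fin n → F)).filter fun πs =>
      ∀ i, Function.Injective (πs i) ∧ ∀ v, πs i v ≠ 0).card : ℝ)

section UnionBound

variable {ι Ω X : Type*} (S : Finset Ω) (T : Finset X)

theorem card_filter_exists_mem_le_sum (P : X → Ω → Prop) [∀ x, DecidablePred (P x)]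
    [DecidablePred fun ω => ∃ x ∈ T, P x ω] :
    #{ω ∈ S | ∃ x ∈ T, P x ω} ≤ ∑ x ∈ T, #{ω ∈ S | P x ω} := by
  classical
  calc #{ω ∈ S | ∃ x ∈ T, P x ω}
    _ = #(T.biUnion fun x => {ω ∈ S | P x ω}) := by
      congr 1
      ext ω
      simp only [mem_filter, mem_biUnion]
      tauto
    _ ≤ ∑ x ∈ T, #{ω ∈ S | P x ω} := card_biUnion_le

theorem card_filter_piFinset_forall [Fintype ι] [DecidableEq ι] (P : Ω → Prop) [DecidablePred P] :
    #{ω ∈ Fintype.piFinset fun _ : ι => S | ∀ i, P (ω i)} =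
      #{ω ∈ S | P ω} ^ Fintype.card ι := by
  have hfilter : {ω ∈ Fintype.piFinset fun _ : ι => S | ∀ i, P (ω i)} =
      Fintype.piFinset fun _ => {ω ∈ S | P ω} := by
    ext ω
    simp [forall_and]
  rw [hfilter, Fintype.card_piFinset, prod_const, card_univ]

end UnionBound

section InjectionsInto

variable {α β : Type*} [Fintype α] [DecidableEq α] [DecidableEq β] {B : Finset β}

/-- The injections from `α` into the finite set `B`, encoded as functions `α → β` so that they can
be compared with the functions counted by `injTupleProb`. -/
def injectionsInto (α : Type*) {β : Type*} [Fintype α] [DecidableEq α] [DecidableEq β]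
    (B : Finset β) : Finset (α → β) :=
  {f ∈ Fintype.piFinset fun _ => B | Function.Injective f}

theorem mem_injectionsInto {f : α → β} :
    f ∈ injectionsInto α B ↔ Function.Injective f ∧ ∀ v, f v ∈ B := by
  simp [injectionsInto, and_comm]

theorem injectionsInto_nonempty (h : Fintype.card α ≤ #B) : (injectionsInto α B).Nonempty := by
  obtain ⟨e⟩ := Function.Embedding.nonempty_of_card_le (h.trans_eq (Fintype.card_coe B).symm)
  exact ⟨fun v => e v, mem_injectionsInto.2
    ⟨Subtype.val_injective.comp e.injective, fun v => (e v).2⟩⟩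

theorem update_mem_injectionsInto {f : α → β} (hf : f ∈ injectionsInto α B) {v : α} {b : β}
    (hb : b ∈ B \ (univ.erase v).image f) : Function.update f v b ∈ injectionsInto α B := by
  simp only [mem_sdiff, mem_image, mem_erase, mem_univ, and_true, not_exists, not_and] at hb
  obtain ⟨hbB, hfresh⟩ := hb
  obtain ⟨hinj, hfB⟩ := mem_injectionsInto.1 hf
  refine mem_injectionsInto.2 ⟨fun w w' h => ?_, fun w => ?_⟩
  · have hww' := @hinj w w'
    grind [Function.update_apply]
  · grind [Function.update_apply]

theorem card_add_one_sub_card_le_card_sdiff_image_erase (f : α → β) (v : α) :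
    #B + 1 - Fintype.card α ≤ #(B \ (univ.erase v).image f) := by
  have hv : #(univ.erase v) + 1 = Fintype.card α := card_erase_add_one (mem_univ v)
  have himage : #((univ.erase v).image f) ≤ #(univ.erase v) := card_image_le
  have hsdiff := le_card_sdiff ((univ.erase v).image f) B
  lia

/-- Double counting of the pairs consisting of an injection satisfying `P` and an injection that
differs from it at most at `v`: once the other values are fixed, at least `#B + 1 - card α` elements
of `B` are available at `v`. -/
theorem card_filter_injectionsInto_mul_le (P : (α → β) → Prop) [DecidablePred P] (v : α)
    (hP : ∀ f g, P f → P g → Set.EqOn f g {v}ᶜ → f = g) :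
    #{f ∈ injectionsInto α B | P f} * (#B + 1 - Fintype.card α) ≤ #(injectionsInto α B) := by
  classical
  rw [← mul_one #(injectionsInto α B)]
  refine card_mul_le_card_mul (fun f g => Set.EqOn f g {v}ᶜ) (fun f hf => ?_) fun g _ => ?_
  · have hupdate : (B \ (univ.erase v).image f).image (Function.update f v) ⊆
        (injectionsInto α B).bipartiteAbove (fun f g => Set.EqOn f g {v}ᶜ) f := by
      refine image_subset_iff.2 fun b hb => (mem_bipartiteAbove _).2
        ⟨update_mem_injectionsInto (mem_filter.1 hf).1 hb, fun w hw => ?_⟩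
      exact (Function.update_of_ne hw b f).symm
    calc #B + 1 - Fintype.card α
      _ ≤ #(B \ (univ.erase v).image f) := card_add_one_sub_card_le_card_sdiff_image_erase f v
      _ = #((B \ (univ.erase v).image f).image (Function.update f v)) :=
        (card_image_of_injective _ (Function.update_injective f v)).symm
      _ ≤ _ := card_le_card hupdate
  · refine card_le_one.2 fun f hf f' hf' => ?_
    obtain ⟨hf, hfg⟩ := (mem_bipartiteBelow _).1 hf
    obtain ⟨hf', hfg'⟩ := (mem_bipartiteBelow _).1 hf'
    exact hP f f' (mem_filter.1 hf).2 (mem_filter.1 hf').2 (hfg.trans hfg'.symm)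

end InjectionsInto

section SubsetSum

variable {α M : Type*} [AddCancelCommMonoid M]

theorem eq_of_sum_eq_of_eqOn_compl_singleton {f g : α → M} {s : Finset α} {v : α} (hv : v ∈ s)
    (hsum : ∑ w ∈ s, f w = ∑ w ∈ s, g w) (hfg : Set.EqOn f g {v}ᶜ) : f = g := by
  classical
  have hrest : ∑ w ∈ s.erase v, f w = ∑ w ∈ s.erase v, g w :=
    sum_congr rfl fun w hw => hfg (ne_of_mem_erase hw)
  rw [← add_sum_erase s f hv, ← add_sum_erase s g hv, hrest] at hsum
  funext w
  obtain rfl | hw := eq_or_ne w v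
  · exact add_right_cancel hsum
  · exact hfg hw

/-- Some `j`-element subset of `x` has `f`-images summing to `c`. -/
def HasSubsetSum (j : ℕ) (c : M) (x : Finset α) (f : α → M) : Prop :=
  ∃ s ∈ powersetCard j x, ∑ v ∈ s, f v = c

instance [DecidableEq M] (j : ℕ) (c : M) (x : Finset α) (f : α → M) :
    Decidable (HasSubsetSum j c x f) :=
  inferInstanceAs (Decidable (∃ s ∈ powersetCard j x, ∑ v ∈ s, f v = c))

variable [Fintype α] [DecidableEq α] [DecidableEq M] {B : Finset M} {j : ℕ}

theorem card_filter_sum_eq_mul_le {s : Finset α} (hs : s.Nonempty) (c : M) :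
    #{f ∈ injectionsInto α B | ∑ v ∈ s, f v = c} * (#B + 1 - Fintype.card α) ≤
      #(injectionsInto α B) := by
  obtain ⟨v, hv⟩ := hs
  exact card_filter_injectionsInto_mul_le (fun f => ∑ w ∈ s, f w = c) v fun f g hf hg =>
    eq_of_sum_eq_of_eqOn_compl_singleton hv (hf.trans hg.symm)

theorem card_filter_hasSubsetSum_mul_le (hj : 0 < j) (c : M) (x : Finset α) :
    #{f ∈ injectionsInto α B | HasSubsetSum j c x f} * (#B + 1 - Fintype.card α) ≤
      (#x).choose j * #(injectionsInto α B) := by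
  calc #{f ∈ injectionsInto α B | HasSubsetSum j c x f} * (#B + 1 - Fintype.card α)
    _ ≤ (∑ s ∈ powersetCard j x, #{f ∈ injectionsInto α B | ∑ v ∈ s, f v = c}) *
          (#B + 1 - Fintype.card α) := by
      gcongr
      exact card_filter_exists_mem_le_sum _ _ fun s (f : α → M) => ∑ v ∈ s, f v = c
    _ ≤ ∑ _s ∈ powersetCard j x, #(injectionsInto α B) := by
      rw [sum_mul]
      refine sum_le_sum fun s hs => card_filter_sum_eq_mul_le (card_pos.1 ?_) c
      rwa [(mem_powersetCard.1 hs).2]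
    _ = (#x).choose j * #(injectionsInto α B) := by
      rw [sum_const, card_powersetCard, smul_eq_mul]

theorem card_filter_exists_forall_hasSubsetSum_mul_le {ι : Type*} [Fintype ι] [DecidableEq ι]
    (hj : 0 < j) (c : M) (r : ℕ) :
    #{πs ∈ Fintype.piFinset fun _ : ι => injectionsInto α B |
        ∃ x ∈ powersetCard r univ, ∀ i, HasSubsetSum j c x (πs i)} *
        (#B + 1 - Fintype.card α) ^ Fintype.card ι ≤
      (Fintype.card α).choose r * (r.choose j * #(injectionsInto α B)) ^ Fintype.card ι := by
  set N := #B + 1 - Fintype.card α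
  calc #{πs ∈ Fintype.piFinset fun _ : ι => injectionsInto α B |
          ∃ x ∈ powersetCard r univ, ∀ i, HasSubsetSum j c x (πs i)} * N ^ Fintype.card ι
    _ ≤ (∑ x ∈ powersetCard r univ, #{πs ∈ Fintype.piFinset fun _ : ι => injectionsInto α B |
          ∀ i, HasSubsetSum j c x (πs i)}) * N ^ Fintype.card ι := by
      gcongr
      convert card_filter_exists_mem_le_sum _ _ fun x (πs : ι → α → M) =>
        ∀ i, HasSubsetSum j c x (πs i)
    _ = ∑ x ∈ powersetCard r univ,
          (#{f ∈ injectionsInto α B | HasSubsetSum j c x f} * N) ^ Fintype.card ι := by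
      simp only [card_filter_piFinset_forall _ (HasSubsetSum j c _), sum_mul, mul_pow]
    _ ≤ ∑ _x ∈ powersetCard r (univ : Finset α),
          (r.choose j * #(injectionsInto α B)) ^ Fintype.card ι := by
      refine sum_le_sum fun x hx => Nat.pow_le_pow_left ?_ _
      rw [← (mem_powersetCard.1 hx).2]
      exact card_filter_hasSubsetSum_mul_le hj c x
    _ = (Fintype.card α).choose r * (r.choose j * #(injectionsInto α B)) ^ Fintype.card ι := by
      rw [sum_const, card_powersetCard, card_univ, smul_eq_mul]

end SubsetSum

section InjTupleProb

variable {n k : ℕ} {F : Type*} [Fintype F] [DecidableEq F]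

theorem injTupleProb_eq_card_div_card [Zero F] (E : (Fin (k + 1) → Fin n → F) → Prop)
    [DecidablePred E] :
    injTupleProb n k F E =
      (#{πs ∈ Fintype.piFinset fun _ : Fin (k + 1) => injectionsInto (Fin n) ({0}ᶜ : Finset F) |
          E πs} : ℝ) /
        #(Fintype.piFinset fun _ : Fin (k + 1) => injectionsInto (Fin n) ({0}ᶜ : Finset F)) := by
  unfold injTupleProb
  congr 3 <;> ext πs <;> simp [mem_injectionsInto]

theorem card_piFinset_injectionsInto_compl_zero_pos [Zero F] (h : n < Fintype.card F) :
    0 < #(Fintype.piFinset fun _ : Fin (k + 1) => injectionsInto (Fin n) ({0}ᶜ : Finset F)) := by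
  refine card_pos.2 (Fintype.piFinset_nonempty.2 fun _ => injectionsInto_nonempty ?_)
  rw [Fintype.card_fin, card_compl, card_singleton]
  lia

theorem injTupleProb_not [Zero F] (h : n < Fintype.card F)
    (E : (Fin (k + 1) → Fin n → F) → Prop) :
    injTupleProb n k F (fun πs => ¬ E πs) = 1 - injTupleProb n k F E := by
  classical
  have hpos := card_piFinset_injectionsInto_compl_zero_pos (k := k) h
  rw [injTupleProb_eq_card_div_card, injTupleProb_eq_card_div_card, eq_sub_iff_add_eq', ← add_div,
    div_eq_one_iff_eq (by positivity)]
  exact_mod_cast card_filter_add_card_filter_not _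

theorem injTupleProb_exists_forall_hasSubsetSum_le [AddCancelCommMonoid F] (h : n < Fintype.card F)
    {j : ℕ} (hj : 0 < j) (c : F) (r : ℕ) :
    injTupleProb n k F (fun πs => ∃ x ∈ powersetCard r univ, ∀ i, HasSubsetSum j c x (πs i)) ≤
      n.choose r * (r.choose j / (Fintype.card F - n)) ^ (k + 1) := by
  have hpos := card_piFinset_injectionsInto_compl_zero_pos (k := k) h
  have hfresh : #({0}ᶜ : Finset F) + 1 - Fintype.card (Fin n) = Fintype.card F - n := by
    rw [card_compl, card_singleton, Fintype.card_fin]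
    lia
  have hbad := card_filter_exists_forall_hasSubsetSum_mul_le (α := Fin n) (ι := Fin (k + 1))
    (B := ({0}ᶜ : Finset F)) hj c r
  rw [hfresh, mul_pow, ← mul_assoc, ← Fintype.card_piFinset_const, Fintype.card_fin,
    Fintype.card_fin] at hbad
  rw [injTupleProb_eq_card_div_card, div_pow, ← mul_div_assoc, ← Nat.cast_sub h.le,
    div_le_div_iff₀ (by positivity) (pow_pos (by exact_mod_cast Nat.sub_pos_of_lt h) _)]
  norm_cast
  convert hbad

theorem choose_mul_div_pow_succ_le {C N : ℝ} (hC : 0 ≤ C) (hn : 0 < n) (hN : n ≤ N) :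
    n.choose k * (C / N) ^ (k + 1) ≤ C ^ (k + 1) / n := by
  have hn' : (0 : ℝ) < n := by exact_mod_cast hn
  calc n.choose k * (C / N) ^ (k + 1)
    _ ≤ (n : ℝ) ^ k * (C / n) ^ (k + 1) := by
      have hN' : 0 < N := hn'.trans_le hN
      gcongr
      exact_mod_cast Nat.choose_le_pow n k
    _ = C ^ (k + 1) / n := by
      rw [div_pow, pow_succ (n : ℝ)]
      field_simp

theorem stmt_11_general [AddCancelCommMonoid F] (hn : 0 < n) (h : 2 * n ≤ Fintype.card F) {j : ℕ}
    (hj : 0 < j) (c : F) :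
    1 - (k.choose j : ℝ) ^ (k + 1) / n ≤
      injTupleProb n k F (fun πs => ∀ x : Finset (Fin n), #x = k →
        ∃ i, ∀ s ⊆ x, #s = j → ∑ v ∈ s, πs i v ≠ c) := by
  have hcard : (n : ℝ) ≤ Fintype.card F - n := by
    rw [le_sub_iff_add_le, ← two_mul]
    exact_mod_cast h
  have hlt : n < Fintype.card F := by lia
  have hbad := (injTupleProb_exists_forall_hasSubsetSum_le (k := k) hlt hj c k).trans
    (choose_mul_div_pow_succ_le (Nat.cast_nonneg _) hn hcard)
  refine (sub_le_sub_left hbad 1).trans_eq ?_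
  rw [← injTupleProb_not hlt]
  simp [HasSubsetSum]

end InjTupleProb

/-- with probability at least `1 - C/n` over the independent
uniformly random injections `π_1, …, π_{k+1} : [n] ↪ F*`, every `k`-subset
`x ⊆ [n]` has some `i` such that no `(k-2)`-subset of `x` has `π_i`-images
summing to `0`. -/
theorem stmt_11 (k : ℕ) (hk : 3 ≤ k) :
    ∃ C : ℝ, 0 < C ∧
      ∀ (n m : ℕ) (F : Type) [Field F] [Fintype F] [DecidableEq F],
        ringChar F = 2 → Fintype.card F = 2 ^ m → 2 * n ≤ 2 ^ m → 2 ^ m ≤ 4 * n →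
        1 - C / (n : ℝ) ≤
          injTupleProb n k F (fun πs =>
            ∀ x : Finset (Fin n), x.card = k →
              ∃ i : Fin (k + 1), ∀ s ⊆ x, s.card = k - 2 →
                ∑ v ∈ s, πs i v ≠ 0) := by
  refine ⟨(k.choose (k - 2) : ℝ) ^ (k + 1), pow_pos (mod_cast Nat.choose_pos (k.sub_le 2)) _, ?_⟩
  intro n m F _ _ _ _ hcard hlow hup
  have hn : 0 < n := by have := Nat.two_pow_pos m; lia
  exact stmt_11_general hn (hcard ▸ hlow) (by lia) 0
end

section
/- Let k ∈ {3,4} and h ∈ ℕ. There exist ε₀ > 0 and C > 1 such that for every ε ∈ (0, ε₀) the following holds with very high probability, where p = n^{−ε}, H ~ H_k(n;p), π : [n] ↪ F* is a uniformly random injection independent of H, T is the template, G₀ = {e ∈ H : e is facet-disjoint from T}, L₀ = K_{k−1}(G₀), and D₀ = k|G₀|/|L₀|: (1) |G₀| = (1 ± Cp)·C(n,k)·p; (2) for every f ∈ L₀, |G₀(f)| = (1 ± Cp)·D₀; (3) |L₀| = (1 ± Cp)·C(n,k−1); (4) D₀ = (1 ± Cp)·np; (5) L₀ is (Cp,h)-typical;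 (6) π(L₀) is C-affine-bounded. -/
open Finset

/-- A set `S ⊆ F^ι` is `C`-affine-bounded if for every affine subspace `A` of
dimension at least 1, `|A ∩ S| ≤ C·|A|·|S|/|F|^{|ι|}`. -/
def AffineBounded (F : Type*) [Field F] [Fintype F] {ι : Type*} [Fintype ι]
    (C : ℝ) (S : Set (ι → F)) : Prop :=
  ∀ A : AffineSubspace F (ι → F), (A : Set (ι → F)).Nonempty →
    1 ≤ Module.finrank F A.direction →
    (Set.ncard ((A : Set (ι → F)) ∩ S) : ℝ) ≤
      C * (Nat.card (A : Set (ι → F))) * (Set.ncard S) / (Fintype.card F : ℝ) ^ (Fintype.card ι)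

/-- A `(k-1)`-uniform hypergraph `G` on `[n]` is `(c,h)`-typical if for every
collection of at most `h` distinct `(k-2)`-subsets `S_1, …, S_ℓ`,
`|∩_i G(S_i)| = (1 ± c)·d(G)^ℓ·n`. -/
def IsTypical (n k : ℕ) (c : ℝ) (h : ℕ) (G : Finset (Finset (Fin n))) : Prop :=
  ∀ 𝒮 : Finset (Finset (Fin n)), 𝒮.Nonempty → 𝒮.card ≤ h →
    (∀ s ∈ 𝒮, s.card = k - 2) →
    |((Finset.univ.filter fun v : Fin n => ∀ s ∈ 𝒮, v ∉ s ∧ insert v s ∈ G).card : ℝ) -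
        ((G.card : ℝ) / (n.choose (k - 1)) : ℝ) ^ 𝒮.card * n| ≤
      c * ((G.card : ℝ) / (n.choose (k - 1)) : ℝ) ^ 𝒮.card * n

/-!
Two distinct `k`-sets whose `π`-values sum to zero never share a facet, because all but one vertex
determine the last; so the zero-sum `k`-sets form a partial Steiner system. Hence the degree of a
facet, the number of covered facets through a `(k - 2)`-set, and the number of edges on a facet that
a covered facet destroys all count pairwise disjoint blocks contained in the random `H` (up to a
factor two), and Chernoff's bound with a union bound controls them for every fixed injection `π`.
Every estimate on `G₀`, `L₀`, `D₀` follows deterministically from this local control. In particular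
`L₀` has positive density among the facets, and density alone makes `π(L₀)` affine-bounded.
-/

section RelativeApproximation

/-- The relative approximation `x = (1 ± c) y`, meaningful for `0 ≤ y`. -/
def RelApprox (c x y : ℝ) : Prop := |x - y| ≤ c * y

namespace RelApprox

variable {a b x y z : ℝ}

theorem mono (h : RelApprox a x y) (hab : a ≤ b) (hy : 0 ≤ y) : RelApprox b x y :=
  le_trans h (mul_le_mul_of_nonneg_right hab hy)

theorem of_le_of_le (h : (1 - a) * y ≤ x) (h' : x ≤ y) : RelApprox a x y := by
  rw [RelApprox, abs_sub_comm, abs_of_nonneg (sub_nonneg.2 h')]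
  linarith

theorem pow_one_of_le_one (m : ℕ) (hx0 : 0 ≤ x) (hx1 : x ≤ 1) (hx : 1 - a ≤ x) :
    RelApprox (m * a) (x ^ m) 1 := by
  have hbernoulli := one_add_mul_le_pow (a := x - 1) (by linarith) m
  rw [add_sub_cancel] at hbernoulli
  refine of_le_of_le ?_ (pow_le_one₀ hx0 hx1)
  nlinarith [Nat.cast_nonneg (α := ℝ) m]

theorem symm (h : RelApprox a x y) (ha : 0 ≤ a) (ha' : 2 * a ≤ 1) (hy : 0 ≤ y) :
    RelApprox (2 * a) y x := by
  have hyx : y ≤ 2 * x := by nlinarith [(abs_le.1 h).1]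
  rw [RelApprox, abs_sub_comm]
  exact le_trans h (by nlinarith)

theorem trans (hxy : RelApprox a x y) (hyz : RelApprox b y z) (ha : 0 ≤ a) :
    RelApprox (a + b + a * b) x z := by
  have hy : y ≤ z + b * z := by linarith [(abs_le.1 hyz).2]
  calc |x - z| ≤ |x - y| + |y - z| := abs_sub_le x y z
    _ ≤ a * (z + b * z) + b * z := add_le_add (le_trans hxy (by gcongr)) hyz
    _ = (a + b + a * b) * z := by ring

theorem mul {x' y' : ℝ} (h : RelApprox a x y) (h' : RelApprox b x' y') (hy : 0 ≤ y)
    (hy' : 0 ≤ y') : RelApprox (a + b + a * b) (x * x') (y * y') := by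
  have hx' : |x'| ≤ (1 + b) * y' := by
    rw [abs_le]
    constructor <;> nlinarith [abs_le.1 h']
  calc |x * x' - y * y'| = |(x - y) * x' + y * (x' - y')| := by ring_nf
    _ ≤ |x - y| * |x'| + |y| * |x' - y'| := by
        rw [← abs_mul, ← abs_mul]
        exact abs_add_le _ _
    _ ≤ a * y * ((1 + b) * y') + y * (b * y') := by
        rw [abs_of_nonneg hy]
        have ha : 0 ≤ a * y := (abs_nonneg _).trans h
        exact add_le_add (mul_le_mul h hx' (abs_nonneg _) ha) (mul_le_mul_of_nonneg_left h' hy)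
    _ = (a + b + a * b) * (y * y') := by ring

theorem mul_right {k : ℝ} (h : RelApprox a x y) (hk : 0 ≤ k) :
    RelApprox a (x * k) (y * k) := by
  rw [RelApprox, ← sub_mul, abs_mul, abs_of_nonneg hk, ← mul_assoc]
  exact mul_le_mul_of_nonneg_right h hk

theorem of_mul_left {k : ℝ} (hk : 0 < k) (h : RelApprox a (k * x) (k * y)) : RelApprox a x y := by
  rw [RelApprox, ← mul_sub, abs_mul, abs_of_pos hk, mul_left_comm] at h
  exact le_of_mul_le_mul_left h hk

theorem average {ι : Type*} {s : Finset ι} (hs : s.Nonempty) {f : ι → ℝ}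
    (h : ∀ i ∈ s, RelApprox a (f i) y) : RelApprox a ((∑ i ∈ s, f i) / #s) y := by
  have hpos : (0 : ℝ) < #s := by exact_mod_cast hs.card_pos
  have hsum : |∑ i ∈ s, f i - #s * y| ≤ #s * (a * y) := by
    calc |∑ i ∈ s, f i - #s * y| = |∑ i ∈ s, (f i - y)| := by
          rw [sum_sub_distrib, sum_const, nsmul_eq_mul]
      _ ≤ ∑ i ∈ s, |f i - y| := abs_sum_le_sum_abs _ _
      _ ≤ #s * (a * y) := by
          rw [← nsmul_eq_mul]
          exact sum_le_card_nsmul _ _ _ h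
  rw [RelApprox, div_sub' hpos.ne', abs_div, abs_of_pos hpos, div_le_iff₀ hpos]
  linarith

end RelApprox

end RelativeApproximation

section RandomSubset

variable {α ι : Type*} [DecidableEq α] {E : Finset α} {p : ℝ}

/-- Probability that the random subset of `E`, containing each element independently with
probability `p`, equals `H`. -/
noncomputable def subsetWeight (E : Finset α) (p : ℝ) (H : Finset α) : ℝ :=
  p ^ #H * (1 - p) ^ (#E - #H)

open Classical in
/-- Probability that the random subset of `E`, containing each element independently with
probability `p`, satisfies `A`. -/
noncomputable def subsetProb (E : Finset α) (p : ℝ) (A : Finset α → Prop) : ℝ :=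
  ∑ H ∈ E.powerset, if A H then subsetWeight E p H else 0

omit [DecidableEq α] in
theorem subsetWeight_nonneg (hp0 : 0 ≤ p) (hp1 : p ≤ 1) (H : Finset α) :
    0 ≤ subsetWeight E p H :=
  mul_nonneg (pow_nonneg hp0 _) (pow_nonneg (sub_nonneg.2 hp1) _)

theorem sum_subsetWeight_Icc {A : Finset α} (hA : A ⊆ E) :
    ∑ H ∈ Icc A E, subsetWeight E p H = p ^ #A := by
  have hdisj {H : Finset α} (hH : H ∈ (E \ A).powerset) : Disjoint A H :=
    disjoint_sdiff.mono_right (mem_powerset.1 hH)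
  have hweight : ∀ H ∈ (E \ A).powerset,
      subsetWeight E p (A ∪ H) = p ^ #A * (p ^ #H * (1 - p) ^ (#(E \ A) - #H)) := fun H hH => by
    rw [subsetWeight, card_union_of_disjoint (hdisj hH), card_sdiff_of_subset hA, pow_add,
      mul_assoc, Nat.sub_add_eq]
  rw [Icc_eq_image_powerset hA, sum_image, sum_congr rfl hweight, ← mul_sum,
    sum_pow_mul_eq_add_pow, add_sub_cancel, one_pow, mul_one]
  intro H hH H' hH' h
  rw [← union_sdiff_cancel_left (hdisj hH), ← union_sdiff_cancel_left (hdisj hH')]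
  exact congrArg (· \ A) h

omit [DecidableEq α] in
theorem sum_subsetWeight (E : Finset α) (p : ℝ) : ∑ H ∈ E.powerset, subsetWeight E p H = 1 := by
  simp only [subsetWeight, sum_pow_mul_eq_add_pow, add_sub_cancel, one_pow]

theorem sum_subsetWeight_mul_pow_card {V : Finset ι} {B : ι → Finset α} {r : ℕ}
    (hB : ∀ v ∈ V, B v ⊆ E) (hr : ∀ v ∈ V, #(B v) = r) (hdisj : (V : Set ι).PairwiseDisjoint B)
    (y : ℝ) :
    ∑ H ∈ E.powerset, subsetWeight E p H * y ^ #{v ∈ V | B v ⊆ H} =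
      (1 + (y - 1) * p ^ r) ^ #V := by
  have hexpand (H : Finset α) : y ^ #{v ∈ V | B v ⊆ H} =
      ∑ W ∈ ({v ∈ V | B v ⊆ H} : Finset ι).powerset, (y - 1) ^ #W := by
    simpa only [one_pow, mul_one, sub_add_cancel] using
      (sum_pow_mul_eq_add_pow (y - 1) 1 {v ∈ V | B v ⊆ H}).symm
  have hIcc (W : Finset ι) (hW : W ∈ V.powerset) :
      ∑ H ∈ Icc (W.biUnion B) E, subsetWeight E p H = (p ^ r) ^ #W := by
    classical
    rw [mem_powerset] at hW
    rw [sum_subsetWeight_Icc (biUnion_subset.2 fun v hv => hB v (hW hv)),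
      card_biUnion (hdisj.subset (coe_subset.2 hW)), sum_const_nat fun v hv => hr v (hW hv),
      mul_comm, pow_mul]
  calc ∑ H ∈ E.powerset, subsetWeight E p H * y ^ #{v ∈ V | B v ⊆ H}
      = ∑ W ∈ V.powerset, ∑ H ∈ Icc (W.biUnion B) E, subsetWeight E p H * (y - 1) ^ #W := by
        simp only [hexpand, mul_sum]
        refine sum_comm' fun H W => ?_
        simp only [mem_powerset, mem_Icc, biUnion_subset, subset_iff (s₁ := W),
          mem_filter]
        exact ⟨fun ⟨hH, hW⟩ => ⟨⟨fun v hv => (hW hv).2, hH⟩, fun v hv => (hW hv).1⟩,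
          fun ⟨⟨hW, hH⟩, hWV⟩ => ⟨hH, fun v hv => ⟨hWV hv, hW v hv⟩⟩⟩
    _ = ∑ W ∈ V.powerset, ((y - 1) * p ^ r) ^ #W * 1 ^ (#V - #W) := by
        refine sum_congr rfl fun W hW => ?_
        rw [← sum_mul, hIcc W hW, one_pow, mul_one, mul_pow, mul_comm]
    _ = (1 + (y - 1) * p ^ r) ^ #V := by rw [sum_pow_mul_eq_add_pow, add_comm]

section Events

omit [DecidableEq α]

variable {A A' : Finset α → Prop}

theorem subsetProb_mono (hp0 : 0 ≤ p) (hp1 : p ≤ 1) (h : ∀ H ⊆ E, A H → A' H) :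
    subsetProb E p A ≤ subsetProb E p A' := by
  refine sum_le_sum fun H hH => ?_
  have := subsetWeight_nonneg (E := E) hp0 hp1 H
  have := h H (mem_powerset.1 hH)
  split_ifs <;> tauto

theorem subsetProb_or_le (hp0 : 0 ≤ p) (hp1 : p ≤ 1) :
    subsetProb E p (fun H => A H ∨ A' H) ≤ subsetProb E p A + subsetProb E p A' := by
  rw [subsetProb, subsetProb, subsetProb, ← sum_add_distrib]
  refine sum_le_sum fun H _ => ?_
  have := subsetWeight_nonneg (E := E) hp0 hp1 H
  by_cases h : A H <;> by_cases h' : A' H <;> simp [h, h', this]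

theorem subsetProb_exists_le {ι : Type*} (hp0 : 0 ≤ p) (hp1 : p ≤ 1) {I : Finset ι}
    {A : ι → Finset α → Prop} {b : ℝ} (hA : ∀ i ∈ I, subsetProb E p (A i) ≤ b) :
    subsetProb E p (fun H => ∃ i ∈ I, A i H) ≤ #I * b := by
  classical
  rw [← nsmul_eq_mul]
  refine le_trans ?_ (sum_le_card_nsmul _ _ _ hA)
  simp only [subsetProb]
  rw [sum_comm]
  refine sum_le_sum fun H _ => ?_
  have hw := subsetWeight_nonneg (E := E) hp0 hp1 H
  have hnonneg (i : ι) : 0 ≤ if A i H then subsetWeight E p H else 0 := by split_ifs <;> simp [hw]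
  split_ifs with h
  · obtain ⟨i, hi, hAi⟩ := h
    calc subsetWeight E p H = if A i H then subsetWeight E p H else 0 := (if_pos hAi).symm
      _ ≤ _ := single_le_sum (fun i _ => hnonneg i) hi
  · exact sum_nonneg fun i _ => hnonneg i

theorem subsetProb_not (A : Finset α → Prop) :
    subsetProb E p (fun H => ¬ A H) = 1 - subsetProb E p A := by
  rw [eq_sub_iff_add_eq, ← sum_subsetWeight E p, subsetProb, subsetProb, ← sum_add_distrib]
  refine sum_congr rfl fun H _ => ?_
  by_cases h : A H <;> simp [h]

end Events

section Chernoff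

variable {V : Finset ι} {B : ι → Finset α} {r : ℕ}

theorem subsetProb_mul_le_mul_card_le_exp (hp0 : 0 ≤ p) (hp1 : p ≤ 1) (hB : ∀ v ∈ V, B v ⊆ E)
    (hr : ∀ v ∈ V, #(B v) = r) (hdisj : (V : Set ι).PairwiseDisjoint B) (l t : ℝ) :
    subsetProb E p (fun H => l * t ≤ l * #{v ∈ V | B v ⊆ H}) ≤
      Real.exp (#V * p ^ r * (Real.exp l - 1) - l * t) := by
  have hmarkov : subsetProb E p (fun H => l * t ≤ l * #{v ∈ V | B v ⊆ H}) ≤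
      ∑ H ∈ E.powerset,
        Real.exp (-(l * t)) * (subsetWeight E p H * Real.exp l ^ #{v ∈ V | B v ⊆ H}) := by
    refine sum_le_sum fun H _ => ?_
    have hw := subsetWeight_nonneg (E := E) hp0 hp1 H
    rw [mul_left_comm, ← Real.exp_nat_mul, ← Real.exp_add]
    split_ifs with h
    · exact le_mul_of_one_le_right hw (Real.one_le_exp (by linarith))
    · positivity
  have hbase : 0 ≤ 1 + (Real.exp l - 1) * p ^ r := by
    nlinarith [pow_nonneg hp0 r, pow_le_one₀ hp0 hp1 (n := r), Real.exp_pos l]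
  calc _ ≤ Real.exp (-(l * t)) * (1 + (Real.exp l - 1) * p ^ r) ^ #V := by
        rwa [← mul_sum, sum_subsetWeight_mul_pow_card hB hr hdisj] at hmarkov
    _ ≤ Real.exp (-(l * t)) * Real.exp ((Real.exp l - 1) * p ^ r) ^ #V := by
        gcongr
        linarith [Real.add_one_le_exp ((Real.exp l - 1) * p ^ r)]
    _ = Real.exp (#V * p ^ r * (Real.exp l - 1) - l * t) := by
        rw [← Real.exp_nat_mul, ← Real.exp_add]
        ring_nf

theorem subsetProb_four_mul_lt_card_le (hp0 : 0 ≤ p) (hp1 : p ≤ 1) (hB : ∀ v ∈ V, B v ⊆ E)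
    (hr : ∀ v ∈ V, #(B v) = r) (hdisj : (V : Set ι).PairwiseDisjoint B) {μ : ℝ}
    (hμ : #V * p ^ r ≤ μ) :
    subsetProb E p (fun H => 4 * μ < #{v ∈ V | B v ⊆ H}) ≤ Real.exp (-μ) := by
  have hμ0 : 0 ≤ μ := le_trans (by positivity) hμ
  calc _ ≤ subsetProb E p (fun H => 1 * (4 * μ) ≤ 1 * #{v ∈ V | B v ⊆ H}) :=
        subsetProb_mono hp0 hp1 fun H _ h => by linarith
    _ ≤ _ := subsetProb_mul_le_mul_card_le_exp hp0 hp1 hB hr hdisj _ _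
    _ ≤ _ := by
        gcongr
        nlinarith [Real.exp_one_lt_d9, Real.exp_one_gt_d9]

theorem subsetProb_lt_abs_card_sub_le (hp0 : 0 ≤ p) (hp1 : p ≤ 1) (hB : ∀ v ∈ V, B v ⊆ E)
    (hr : ∀ v ∈ V, #(B v) = r) (hdisj : (V : Set ι).PairwiseDisjoint B) {δ : ℝ} (hδ0 : 0 ≤ δ)
    (hδ2 : δ ≤ 2) :
    subsetProb E p (fun H => δ * (#V * p ^ r) < |(#{v ∈ V | B v ⊆ H} : ℝ) - #V * p ^ r|) ≤
      2 * Real.exp (-(δ ^ 2 * (#V * p ^ r) / 4)) := by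
  set μ : ℝ := #V * p ^ r with hμ
  have hμ0 : 0 ≤ μ := by positivity
  have htail (l t : ℝ) (hl : |l| ≤ 1) (hexp : μ * (l + l ^ 2) - l * t ≤ -(δ ^ 2 * μ / 4)) :
      subsetProb E p (fun H => l * t ≤ l * #{v ∈ V | B v ⊆ H}) ≤
        Real.exp (-(δ ^ 2 * μ / 4)) := by
    refine (subsetProb_mul_le_mul_card_le_exp hp0 hp1 hB hr hdisj l t).trans ?_
    gcongr
    nlinarith [(abs_le.1 (Real.abs_exp_sub_one_sub_id_le hl)).2]
  have hupper := htail (δ / 2) (μ + δ * μ) (by rw [abs_le]; constructor <;> linarith)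
    (by nlinarith)
  have hlower := htail (-(δ / 2)) (μ - δ * μ) (by rw [abs_le]; constructor <;> linarith)
    (by nlinarith)
  calc _ ≤ _ := subsetProb_mono hp0 hp1 fun H _ h => by
        rcases lt_abs.1 h with h | h
        · exact Or.inl (show δ / 2 * (μ + δ * μ) ≤ δ / 2 * #{v ∈ V | B v ⊆ H} by nlinarith)
        · exact Or.inr (show -(δ / 2) * (μ - δ * μ) ≤ -(δ / 2) * #{v ∈ V | B v ⊆ H} by
            nlinarith)
    _ ≤ _ := subsetProb_or_le hp0 hp1
    _ ≤ 2 * Real.exp (-(δ ^ 2 * μ / 4)) := by linarith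

end Chernoff

end RandomSubset

section Hypergraph

variable {V : Type*} [Fintype V] [DecidableEq V] {G L : Finset (Finset V)} {S f : Finset V}
  {j r : ℕ} {v : V}

/-- The paper's `G(S)` for `(#S + 1)`-uniform `G`, with singletons identified with vertices. -/
def link (G : Finset (Finset V)) (S : Finset V) : Finset V :=
  {v | v ∉ S ∧ insert v S ∈ G}

/-- The paper's `K_r(G)`: all `r`-subsets of the edges of `G`. -/
def facets (r : ℕ) (G : Finset (Finset V)) : Finset (Finset V) :=
  G.biUnion fun e => e.powersetCard r

/-- The edges of `H` that are facet-disjoint from `T`, where facets have `r` vertices; for the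
template `T` this is the paper's `G₀`. -/
def facetDisjointPart (r : ℕ) (H T : Finset (Finset V)) : Finset (Finset V) :=
  H.filter fun e => ∀ f ⊆ e, #f = r → ∀ e' ∈ T, ¬ f ⊆ e'

theorem mem_link : v ∈ link G S ↔ v ∉ S ∧ insert v S ∈ G := by
  simp only [link, mem_filter_univ]

omit [Fintype V] in
theorem mem_facets : f ∈ facets r G ↔ ∃ e ∈ G, f ⊆ e ∧ #f = r := by
  simp only [facets, mem_biUnion, mem_powersetCard]

omit [Fintype V] in
theorem sized_facets (r : ℕ) (G : Finset (Finset V)) : (facets r G : Set (Finset V)).Sized r :=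
  fun _ hf => let ⟨_, _, _, hfr⟩ := mem_facets.1 hf; hfr

theorem filter_superset_eq_image_link (hG : (G : Set (Finset V)).Sized (#f + 1)) :
    ({e ∈ G | f ⊆ e} : Finset (Finset V)) = (link G f).image (insert · f) := by
  ext e
  simp only [mem_filter, mem_image, mem_link]
  constructor
  · rintro ⟨he, hfe⟩
    obtain ⟨v, hv, rfl⟩ := exists_eq_insert_iff.2 ⟨hfe, (hG he).symm⟩
    exact ⟨v, ⟨hv, he⟩, rfl⟩
  · rintro ⟨v, ⟨-, hv⟩, rfl⟩
    exact ⟨hv, subset_insert v f⟩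

theorem injOn_insert_link (G : Finset (Finset V)) (f : Finset V) :
    Set.InjOn (insert · f) (link G f : Set V) :=
  (insert_inj_on f).mono fun _ hv => (mem_link.1 hv).1

theorem card_filter_superset (hG : (G : Set (Finset V)).Sized (#f + 1)) :
    #{e ∈ G | f ⊆ e} = #(link G f) := by
  rw [filter_superset_eq_image_link hG, card_image_of_injOn (injOn_insert_link G f)]

theorem mem_facets_iff_link_nonempty (hG : (G : Set (Finset V)).Sized (#f + 1)) :
    f ∈ facets #f G ↔ (link G f).Nonempty := by
  rw [← image_nonempty (f := (insert · f)), ← filter_superset_eq_image_link hG]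
  simp only [mem_facets, and_true, filter_nonempty_iff]

theorem sum_card_link (hG : (G : Set (Finset V)).Sized (r + 1))
    (hL : (L : Set (Finset V)).Sized r) (hGL : facets r G ⊆ L) :
    ∑ f ∈ L, #(link G f) = (r + 1) * #G := by
  have hfacets : ∀ e ∈ G, #{f ∈ L | f ⊆ e} = r + 1 := fun e he => by
    have : ({f ∈ L | f ⊆ e} : Finset (Finset V)) = e.powersetCard r := by
      ext f
      rw [mem_filter, mem_powersetCard, and_comm]
      exact and_congr_right fun hfe =>
        ⟨fun hf => hL hf, fun hf => hGL (mem_facets.2 ⟨e, he, hfe, hf⟩)⟩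
    rw [this, card_powersetCard, hG he, Nat.choose_succ_self_right]
  calc ∑ f ∈ L, #(link G f) = ∑ f ∈ L, #{e ∈ G | f ⊆ e} :=
        sum_congr rfl fun f hf => (card_filter_superset ((hL hf).symm ▸ hG)).symm
    _ = ∑ e ∈ G, #{f ∈ L | f ⊆ e} := by
        simpa only [card_filter] using sum_comm
    _ = (r + 1) * #G := by rw [sum_const_nat hfacets, mul_comm]

variable {δ : ℝ}

theorem one_sub_mul_choose_le_card (hL : (L : Set (Finset V)).Sized (j + 1)) (hδ : δ ≤ 1)
    (hdeg : ∀ S : Finset V, #S = j → (1 - δ) * Fintype.card V ≤ #(link L S)) :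
    (1 - δ) * (Fintype.card V).choose (j + 1) ≤ #L := by
  have hcount : ∑ S ∈ powersetCard j univ, #(link L S) = (j + 1) * #L :=
    sum_card_link hL (Set.sized_powersetCard univ j)
      (subset_powersetCard_univ_iff.2 (sized_facets j L))
  have hchoose : (j + 1) * ((Fintype.card V).choose (j + 1) : ℝ) ≤
      (Fintype.card V).choose j * Fintype.card V := by
    have := Nat.choose_succ_right_eq (Fintype.card V) j
    have hsub : (Fintype.card V - j : ℕ) ≤ Fintype.card V := Nat.sub_le _ _
    exact_mod_cast show (j + 1) * (Fintype.card V).choose (j + 1) ≤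
      (Fintype.card V).choose j * Fintype.card V by nlinarith
  have hsum : (Fintype.card V).choose j * ((1 - δ) * Fintype.card V) ≤ (j + 1) * (#L : ℝ) := by
    rw [← Nat.cast_add_one, ← Nat.cast_mul, ← hcount, ← card_univ, ← card_powersetCard,
      ← nsmul_eq_mul, Nat.cast_sum, card_univ]
    exact card_nsmul_le_sum _ _ _ fun S hS => hdeg S (mem_powersetCard_univ.1 hS)
  refine le_of_mul_le_mul_left (a := (j + 1 : ℝ)) ?_ (by positivity)
  linarith [mul_le_mul_of_nonneg_left hchoose (sub_nonneg.2 hδ)]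

theorem one_sub_mul_le_card_inter_link {𝒮 : Finset (Finset V)}
    (hdeg : ∀ S ∈ 𝒮, (1 - δ) * Fintype.card V ≤ #(link L S)) :
    (1 - #𝒮 * δ) * Fintype.card V ≤ #{v | ∀ S ∈ 𝒮, v ∈ link L S} := by
  have hcompl : ({v | ∀ S ∈ 𝒮, v ∈ link L S} : Finset V)ᶜ = 𝒮.biUnion fun S => (link L S)ᶜ := by
    ext v
    simp
  have hmissing : ∀ S ∈ 𝒮, (#(link L S)ᶜ : ℝ) ≤ δ * Fintype.card V := fun S hS => by
    rw [card_compl, Nat.cast_sub (card_le_univ _)]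
    linarith [hdeg S hS]
  have hunion : (#({v | ∀ S ∈ 𝒮, v ∈ link L S} : Finset V)ᶜ : ℝ) ≤ #𝒮 * (δ * Fintype.card V) := by
    calc _ ≤ ((∑ S ∈ 𝒮, #(link L S)ᶜ : ℕ) : ℝ) := by
          rw [hcompl]
          exact_mod_cast card_biUnion_le
      _ ≤ _ := by
          rw [Nat.cast_sum, ← nsmul_eq_mul]
          exact sum_le_card_nsmul _ _ _ hmissing
  rw [card_compl, Nat.cast_sub (card_le_univ _)] at hunion
  linarith

theorem isTypical_of_le_card_link {n h : ℕ} {c : ℝ} {L : Finset (Finset (Fin n))}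
    (hL : (L : Set (Finset (Fin n))).Sized (j + 1)) (hδ0 : 0 ≤ δ) (hδ : 2 * (h * δ) ≤ 1)
    (hc : 4 * (h * δ) ≤ c) (hjn : j < n)
    (hdeg : ∀ S : Finset (Fin n), #S = j → (1 - δ) * n ≤ #(link L S)) :
    IsTypical n (j + 2) c h L := by
  intro 𝒮 h𝒮 hh hcard
  have hℓ : (1 : ℝ) ≤ #𝒮 := by exact_mod_cast h𝒮.card_pos
  have hℓδ : #𝒮 * δ ≤ h * δ := by gcongr
  have hδ1 : δ ≤ 1 := by nlinarith
  have hchoose : (0 : ℝ) < n.choose (j + 1) := by exact_mod_cast Nat.choose_pos hjn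
  set d : ℝ := #L / n.choose (j + 1) with hd
  have hd_le : d ≤ 1 := by
    rw [hd, div_le_one hchoose]
    simpa using card_le_card (subset_powersetCard_univ_iff.2 hL)
  have hd_ge : 1 - δ ≤ d := by
    rw [hd, le_div_iff₀ hchoose]
    simpa using one_sub_mul_choose_le_card hL hδ1 (by simpa using hdeg)
  have hpow : RelApprox (h * δ) (d ^ #𝒮 * n) n := by
    simpa [RelApprox] using
      (RelApprox.pow_one_of_le_one (#𝒮) (by positivity) hd_le hd_ge).mono hℓδ one_pos.le
        |>.mul_right (Nat.cast_nonneg n)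
  have hinter : RelApprox (h * δ) (#{v : Fin n | ∀ s ∈ 𝒮, v ∈ link L s}) n := by
    refine RelApprox.mono (.of_le_of_le ?_ ?_) hℓδ (Nat.cast_nonneg n)
    · simpa using one_sub_mul_le_card_inter_link (L := L) (δ := δ)
        (by simpa using fun S hS => hdeg S (hcard S hS))
    · exact_mod_cast (card_le_univ _).trans_eq (Fintype.card_fin n)
  have h0 : 0 ≤ h * δ := by positivity
  have hfinal : RelApprox c _ (d ^ #𝒮 * n) :=
    (hinter.trans (hpow.symm h0 hδ (Nat.cast_nonneg n)) h0).mono (by nlinarith) (by positivity)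
  simp only [RelApprox, mem_link, ← mul_assoc] at hfinal
  exact hfinal

end Hypergraph

section AffineBounded

theorem affineBounded_of_card_pow_le {F ι : Type*} [Field F] [Fintype F] [Fintype ι] {C : ℝ}
    {S : Set (ι → F)} (hS : (Fintype.card F : ℝ) ^ Fintype.card ι ≤ C * S.ncard) :
    AffineBounded F C S := by
  intro A _ _
  have hF : (0 : ℝ) < (Fintype.card F : ℝ) ^ Fintype.card ι := by positivity
  rw [le_div_iff₀ hF]
  have hle : (Set.ncard ((A : Set (ι → F)) ∩ S) : ℝ) ≤ Nat.card (A : Set (ι → F)) := by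
    exact_mod_cast Set.ncard_inter_le_ncard_left _ S (Set.toFinite _)
  calc _ ≤ Nat.card (A : Set (ι → F)) * (C * S.ncard) := by gcongr
    _ = _ := by ring

theorem pow_le_mul_choose {q K n r : ℕ} (hq : q ≤ K * n) (hn : n ≤ 2 * (n + 1 - r)) :
    q ^ r ≤ (2 * K) ^ r * r.factorial * n.choose r := by
  calc q ^ r ≤ (2 * K * (n + 1 - r)) ^ r := by
        gcongr
        nlinarith
    _ = (2 * K) ^ r * (n + 1 - r) ^ r := mul_pow _ _ _
    _ ≤ (2 * K) ^ r * n.descFactorial r := by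
        gcongr
        exact Nat.pow_sub_le_descFactorial n r
    _ = (2 * K) ^ r * r.factorial * n.choose r := by
        rw [Nat.descFactorial_eq_factorial_mul_choose, mul_assoc]

end AffineBounded

section LocalEstimates

variable {V : Type*} [Fintype V] [DecidableEq V] {H T : Finset (Finset V)} {f S : Finset V}
  {j : ℕ} {p : ℝ}

/-- The properties of single facets and single `j`-sets, each failing with exponentially small
probability, from which all the global estimates on `facetDisjointPart (j + 1) H T` follow
deterministically. -/
structure LocalEstimates (j : ℕ) (p : ℝ) (H T : Finset (Finset V)) : Prop where
  degree : ∀ f : Finset V, #f = j + 1 → RelApprox (2 * p) #(link H f) (Fintype.card V * p)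
  covered : ∀ S : Finset V, #S = j → #(link (facets (j + 1) T) S) ≤ 8 * p * Fintype.card V
  degree_covered : ∀ f : Finset V, #f = j + 1 → ∀ x ∈ f,
    #(link H f ∩ link (facets (j + 1) T) (f.erase x)) ≤ 9 * p * (Fintype.card V * p)

theorem facetDisjointPart_subset (r : ℕ) (H T : Finset (Finset V)) :
    facetDisjointPart r H T ⊆ H :=
  filter_subset _ _

theorem notMem_facets_of_mem_facets_facetDisjointPart {r : ℕ}
    (hf : f ∈ facets r (facetDisjointPart r H T)) : f ∉ facets r T := by
  obtain ⟨e, he, hfe, hfr⟩ := mem_facets.1 hf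
  rintro hfT
  obtain ⟨e', he', hfe', -⟩ := mem_facets.1 hfT
  exact (mem_filter.1 he).2 f hfe hfr e' he' hfe'

-- A facet of `insert v f` other than `f` arises by exchanging some `x ∈ f` for `v`.
theorem link_sdiff_link_facetDisjointPart_subset (hf : f ∉ facets #f T) :
    link H f \ link (facetDisjointPart #f H T) f ⊆
      f.biUnion fun x => link H f ∩ link (facets #f T) (f.erase x) := by
  intro v hv
  obtain ⟨hvH, hvG⟩ := mem_sdiff.1 hv
  obtain ⟨hvf, hvfH⟩ := mem_link.1 hvH
  obtain ⟨g, hgv, hgcard, e, he, hge⟩ : ∃ g ⊆ insert v f, #g = #f ∧ ∃ e ∈ T, g ⊆ e := by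
    by_contra! h
    exact hvG (mem_link.2 ⟨hvf, mem_filter.2 ⟨hvfH, h⟩⟩)
  have hg : g ∈ facets #f T := mem_facets.2 ⟨e, he, hge, hgcard⟩
  have hvg : v ∈ g := by
    by_contra hvg
    exact hf (eq_of_subset_of_card_le ((subset_insert_iff_of_notMem hvg).1 hgv) hgcard.ge ▸ hg)
  obtain ⟨x, hx, hxf⟩ := exists_eq_insert_iff.2
    ⟨subset_insert_iff.1 hgv, (card_erase_add_one hvg).trans hgcard⟩
  have herase : f.erase x = g.erase v := by rw [← hxf, erase_insert hx]
  rw [mem_biUnion]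
  refine ⟨x, hxf ▸ mem_insert_self x _, mem_inter.2 ⟨hvH, mem_link.2 ⟨?_, ?_⟩⟩⟩
  · exact fun h => hvf (mem_of_mem_erase h)
  · rwa [herase, insert_erase hvg]

namespace LocalEstimates

local notation "G₀" => facetDisjointPart (j + 1) H T

local notation "L₀" => facets (j + 1) (facetDisjointPart (j + 1) H T)

variable (hl : LocalEstimates j p H T)
include hl

theorem relApprox_card_link (hf : #f = j + 1) (hfT : f ∉ facets (j + 1) T) :
    RelApprox ((9 * j + 11) * p) #(link G₀ f) (Fintype.card V * p) := by
  have hsub : link G₀ f ⊆ link H f := fun v hv =>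
    mem_link.2 ⟨(mem_link.1 hv).1, facetDisjointPart_subset _ _ _ (mem_link.1 hv).2⟩
  have hlost : (#(link H f \ link G₀ f) : ℝ) ≤ (j + 1) * (9 * p * (Fintype.card V * p)) := by
    calc (#(link H f \ link G₀ f) : ℝ)
        ≤ ((∑ x ∈ f, #(link H f ∩ link (facets (j + 1) T) (f.erase x)) : ℕ) : ℝ) := by
          rw [← hf] at hfT
          have := link_sdiff_link_facetDisjointPart_subset (H := H) hfT
          rw [hf] at this
          exact_mod_cast (card_le_card this).trans card_biUnion_le
      _ ≤ #f • (9 * p * (Fintype.card V * p)) := by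
          rw [Nat.cast_sum]
          exact sum_le_card_nsmul _ _ _ (hl.degree_covered f hf)
      _ = (j + 1) * (9 * p * (Fintype.card V * p)) := by
          rw [hf, nsmul_eq_mul]
          push_cast
          rfl
  have hle : (#(link G₀ f) : ℝ) ≤ #(link H f) := by exact_mod_cast card_le_card hsub
  rw [card_sdiff_of_subset hsub, Nat.cast_sub (card_le_card hsub)] at hlost
  have hdegree := abs_le.1 (hl.degree f hf)
  rw [RelApprox, abs_le]
  constructor <;> linarith

variable (hp : 0 < p) (hsmall : 2 * ((9 * j + 11) * p) ≤ 1)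
  (hlarge : j + 1 ≤ Fintype.card V * p) (hH : (H : Set (Finset V)).Sized (j + 2))
include hp hsmall hlarge hH

theorem mem_facets_facetDisjointPart :
    f ∈ L₀ ↔ #f = j + 1 ∧ f ∉ facets (j + 1) T := by
  refine ⟨fun hf => ⟨sized_facets _ _ hf, notMem_facets_of_mem_facets_facetDisjointPart hf⟩, ?_⟩
  rintro ⟨hf, hfT⟩
  have hpos : (0 : ℝ) < #(link G₀ f) := by
    have := (abs_le.1 (hl.relApprox_card_link hf hfT)).1
    nlinarith
  have hG : (G₀ : Set (Finset V)).Sized (#f + 1) := by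
    rw [hf]
    exact hH.mono (facetDisjointPart_subset _ _ _)
  have hnonempty := (mem_facets_iff_link_nonempty hG).2 (card_pos.1 (by exact_mod_cast hpos))
  rwa [hf] at hnonempty

theorem one_sub_mul_le_card_link_facets (hS : #S = j) :
    (1 - 9 * p) * Fintype.card V ≤ #(link L₀ S) := by
  have hsub : Sᶜ \ link (facets (j + 1) T) S ⊆ link L₀ S := fun v hv => by
    simp only [mem_sdiff, mem_compl, mem_link, not_and] at hv
    exact mem_link.2 ⟨hv.1, (hl.mem_facets_facetDisjointPart hp hsmall hlarge hH).2
      ⟨by rw [card_insert_of_notMem hv.1, hS], hv.2 hv.1⟩⟩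
  have hcard : Fintype.card V - j - #(link (facets (j + 1) T) S) ≤ #(link L₀ S) := by
    have := (le_card_sdiff _ _).trans (card_le_card hsub)
    rwa [card_compl, hS] at this
  have hcast : (Fintype.card V : ℝ) ≤ #(link L₀ S) + #(link (facets (j + 1) T) S) + j := by
    exact_mod_cast show _ ≤ _ by omega
  linarith [hl.covered S hS]

theorem relApprox_card_facets :
    RelApprox (9 * p) #L₀ ((Fintype.card V).choose (j + 1)) := by
  have hge := one_sub_mul_choose_le_card (sized_facets _ _) (by nlinarith)
    fun S => hl.one_sub_mul_le_card_link_facets hp hsmall hlarge hH (S := S)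
  have hle : (#L₀ : ℝ) ≤ (Fintype.card V).choose (j + 1) := by
    exact_mod_cast (card_le_card (subset_powersetCard_univ_iff.2 (sized_facets _ _))).trans_eq
      (card_powersetCard _ _)
  exact .of_le_of_le hge hle

theorem choose_le_two_mul_card_facets :
    ((Fintype.card V).choose (j + 1) : ℝ) ≤ 2 * #L₀ := by
  have := (abs_le.1 (hl.relApprox_card_facets hp hsmall hlarge hH)).1
  nlinarith [Nat.cast_nonneg (α := ℝ) ((Fintype.card V).choose (j + 1))]

theorem card_facets_pos : (0 : ℝ) < #L₀ := by
  have hj : j + 1 ≤ Fintype.card V := by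
    have : (j + 1 : ℝ) ≤ Fintype.card V := by nlinarith [Nat.cast_nonneg (α := ℝ) (Fintype.card V)]
    exact_mod_cast this
  have : (0 : ℝ) < (Fintype.card V).choose (j + 1) := by exact_mod_cast Nat.choose_pos hj
  linarith [hl.choose_le_two_mul_card_facets hp hsmall hlarge hH]

theorem relApprox_averageDegree :
    RelApprox ((9 * j + 11) * p) ((j + 2) * #G₀ / #L₀) (Fintype.card V * p) := by
  have hsum : ∑ f ∈ L₀, (#(link G₀ f) : ℝ) = (j + 2) * #G₀ := by
    rw [← Nat.cast_sum, sum_card_link (hH.mono (facetDisjointPart_subset _ _ _))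
      (sized_facets _ _) subset_rfl]
    push_cast
    ring
  rw [← hsum]
  refine RelApprox.average (card_pos.1 ?_) fun f hf => ?_
  · exact_mod_cast hl.card_facets_pos hp hsmall hlarge hH
  · exact hl.relApprox_card_link (sized_facets _ _ hf)
      (notMem_facets_of_mem_facets_facetDisjointPart hf)

theorem relApprox_card_link_averageDegree (hf : f ∈ L₀) :
    RelApprox (4 * ((9 * j + 11) * p)) #(link G₀ f) ((j + 2) * #G₀ / #L₀) := by
  have ha : 0 ≤ (9 * j + 11) * p := by positivity
  have hlink := hl.relApprox_card_link (sized_facets _ _ hf)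
    (notMem_facets_of_mem_facets_facetDisjointPart hf)
  have haverage := (hl.relApprox_averageDegree hp hsmall hlarge hH).symm ha hsmall (by positivity)
  exact (hlink.trans haverage ha).mono (by nlinarith) (by positivity)

theorem relApprox_card_facetDisjointPart :
    RelApprox ((9 * j + 31) * p) #G₀
      ((Fintype.card V).choose (j + 2) * p) := by
  set n := Fintype.card V
  have hproduct : RelApprox ((9 * j + 25) * p) ((j + 2) * #G₀)
      (n * p * n.choose (j + 1)) := by
    have := (hl.relApprox_averageDegree hp hsmall hlarge hH).mul
      (hl.relApprox_card_facets hp hsmall hlarge hH) (by positivity) (by positivity)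
    rw [div_mul_cancel₀ _ (hl.card_facets_pos hp hsmall hlarge hH).ne'] at this
    exact this.mono (by nlinarith) (by positivity)
  have hchoose : RelApprox p ((j + 2) * (n.choose (j + 2) * p)) (n * p * n.choose (j + 1)) := by
    have hsucc : ((n.choose (j + 2) : ℝ) * (j + 2)) = n.choose (j + 1) * (n - (j + 1)) := by
      have hj : j + 1 ≤ n := by
        have : (j + 1 : ℝ) ≤ n := by nlinarith [Nat.cast_nonneg (α := ℝ) n]
        exact_mod_cast this
      exact_mod_cast Nat.choose_succ_right_eq n (j + 1)
    have : (j + 2) * (n.choose (j + 2) * p) - n * p * n.choose (j + 1) =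
        -(p * n.choose (j + 1) * (j + 1)) := by linear_combination p * hsucc
    rw [RelApprox, this, abs_neg, abs_of_nonneg (by positivity)]
    calc p * n.choose (j + 1) * (j + 1) ≤ p * n.choose (j + 1) * (n * p) := by gcongr
      _ = p * (n * p * n.choose (j + 1)) := by ring
  have hle : (9 * j + 25) * p ≤ 2 := by nlinarith [(by positivity : 0 ≤ j * p)]
  refine RelApprox.of_mul_left (k := j + 2) (by positivity) ?_
  exact (hproduct.trans (hchoose.symm hp.le (by nlinarith) (by positivity)) (by positivity)).mono
    (by nlinarith) (by positivity)

end LocalEstimates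

end LocalEstimates

section PartialSteiner

variable {V : Type*} [Fintype V] [DecidableEq V] {Z : Finset (Finset V)} {S f : Finset V}
  {j : ℕ} {x : V}

/-- A partial Steiner system: any `j + 1` points lie in at most one of the `(j + 2)`-sets of `Z`. -/
structure IsPartialSteiner (j : ℕ) (Z : Finset (Finset V)) : Prop where
  sized : (Z : Set (Finset V)).Sized (j + 2)
  eq_of_subset : ∀ f : Finset V, #f = j + 1 → ∀ e ∈ Z, ∀ e' ∈ Z, f ⊆ e → f ⊆ e' → e = e'

omit [DecidableEq V] in
theorem isPartialSteiner_sum_eq_zero {M : Type*} [AddCommGroup M] [DecidableEq M] {π : V → M}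
    (hπ : Function.Injective π) (j : ℕ) :
    IsPartialSteiner j {e ∈ powersetCard (j + 2) univ | ∑ v ∈ e, π v = 0} where
  sized _ he := mem_powersetCard_univ.1 (mem_filter.1 he).1
  eq_of_subset f hf e he e' he' hfe hfe' := by
    classical
    simp only [mem_filter, mem_powersetCard_univ] at he he'
    obtain ⟨v, hv, rfl⟩ := exists_eq_insert_iff.2 ⟨hfe, by rw [hf, he.1]⟩
    obtain ⟨w, hw, rfl⟩ := exists_eq_insert_iff.2 ⟨hfe', by rw [hf, he'.1]⟩
    rw [sum_insert hv, add_eq_zero_iff_eq_neg] at he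
    rw [sum_insert hw, add_eq_zero_iff_eq_neg] at he'
    rw [hπ (he.2.trans he'.2.symm)]

namespace IsPartialSteiner

variable (hZ : IsPartialSteiner j Z)
include hZ

omit [Fintype V] in
theorem eq_of_mem_sdiff (hS : #S = j) {e e' : Finset V} (he : e ∈ Z) (he' : e' ∈ Z) (hSe : S ⊆ e)
    (hSe' : S ⊆ e') {v : V} (hv : v ∈ e \ S) (hv' : v ∈ e' \ S) : e = e' := by
  rw [mem_sdiff] at hv hv'
  exact hZ.eq_of_subset (insert v S) (by rw [card_insert_of_notMem hv.2, hS]) e he e' he'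
    (insert_subset hv.1 hSe) (insert_subset hv'.1 hSe')

omit [Fintype V] in
theorem card_sdiff_eq_two (hS : #S = j) {e : Finset V} (he : e ∈ Z) (hSe : S ⊆ e) :
    #(e \ S) = 2 := by
  rw [card_sdiff_of_subset hSe, hZ.sized he, hS, Nat.add_sub_cancel_left]

theorem card_filter_superset_le (hS : #S = j) : #{e ∈ Z | S ⊆ e} ≤ Fintype.card V := by
  refine (card_le_card_biUnion (f := (· \ S)) ?_ ?_).trans (card_le_univ _)
  · intro e he e' he' hne
    rw [coe_filter] at he he'
    exact disjoint_left.2 fun v hv hv' => hne (hZ.eq_of_mem_sdiff hS he.1 he'.1 he.2 he'.2 hv hv')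
  · intro e he
    rw [mem_filter] at he
    exact card_pos.1 (by rw [hZ.card_sdiff_eq_two hS he.1 he.2]; exact two_pos)

theorem card_link_le_one (hf : #f = j + 1) : #(link Z f) ≤ 1 := by
  refine card_le_one.2 fun v hv w hw => ?_
  rw [mem_link] at hv hw
  exact (insert_inj hv.1).1 (hZ.eq_of_subset f hf _ hv.2 _ hw.2 (subset_insert _ _)
    (subset_insert _ _))

theorem link_inter_link_facets_subset (hf : #f = j + 1) (hx : x ∈ f)
    {a b : Finset V → V} (hab : ∀ e ∈ Z, f.erase x ⊆ e → e \ f.erase x = {a e, b e})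
    (H : Finset (Finset V)) :
    link H f ∩ link (facets (j + 1) (H ∩ Z)) (f.erase x) ⊆ link Z f ∪
      (({e ∈ {e ∈ Z | f.erase x ⊆ e ∧ x ∉ e} | {e, insert (a e) f} ⊆ H}).image a ∪
        ({e ∈ {e ∈ Z | f.erase x ⊆ e ∧ x ∉ e} | {e, insert (b e) f} ⊆ H}).image b) := by
  intro v hv
  simp only [mem_inter, mem_link] at hv
  obtain ⟨⟨hvf, hvH⟩, hvS, hvX⟩ := hv
  obtain ⟨e, he, hve, -⟩ := mem_facets.1 hvX
  obtain ⟨heH, heZ⟩ := mem_inter.1 he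
  obtain ⟨hve, hSe⟩ := insert_subset_iff.1 hve
  simp only [mem_union, mem_image, mem_filter, insert_subset_iff, singleton_subset_iff]
  by_cases hxe : x ∈ e
  · have hsub : insert v f ⊆ e :=
      insert_subset hve (insert_erase hx ▸ insert_subset hxe hSe)
    have heq := eq_of_subset_of_card_le hsub
      (by rw [hZ.sized heZ, card_insert_of_notMem hvf, hf])
    exact Or.inl (mem_link.2 ⟨hvf, heq ▸ heZ⟩)
  · have hmem : v ∈ e \ f.erase x := mem_sdiff.2 ⟨hve, hvS⟩
    rw [hab e heZ hSe, mem_insert, mem_singleton] at hmem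
    refine Or.inr (hmem.imp ?_ ?_) <;> rintro rfl <;>
      exact ⟨e, ⟨⟨heZ, hSe, hxe⟩, heH, hvH⟩, rfl⟩

end IsPartialSteiner

end PartialSteiner

section LocalProbability

variable {V : Type*} [Fintype V] [DecidableEq V] {Z : Finset (Finset V)} {S f : Finset V}
  {j : ℕ} {x : V} {p : ℝ} (hp0 : 0 ≤ p) (hp1 : p ≤ 1)
include hp0 hp1

theorem subsetProb_degree_le (hlarge : 2 * (j + 1) ≤ Fintype.card V * p) (hf : #f = j + 1) :
    subsetProb (powersetCard (j + 2) univ) p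
        (fun H => ¬ RelApprox (2 * p) #(link H f) (Fintype.card V * p)) ≤
      2 * Real.exp (-(Fintype.card V * p ^ 3 / 8)) := by
  have hcard : (#fᶜ : ℝ) = Fintype.card V - (j + 1) := by
    rw [card_compl, Nat.cast_sub (card_le_univ f), hf]
    push_cast
    rfl
  have hlink (H : Finset (Finset V)) : #{v ∈ fᶜ | {insert v f} ⊆ H} = #(link H f) := by
    congr 1
    ext v
    simp only [mem_filter, mem_compl, singleton_subset_iff, mem_link]
  have hn : 2 * (j + 1) ≤ (Fintype.card V : ℝ) :=
    hlarge.trans (mul_le_of_le_one_right (Nat.cast_nonneg _) hp1)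
  have hchernoff := subsetProb_lt_abs_card_sub_le (E := powersetCard (j + 2) univ) (V := fᶜ)
    (B := fun v => {insert v f}) (r := 1) hp0 hp1 (fun v hv => by
      rw [singleton_subset_iff, mem_powersetCard_univ, card_insert_of_notMem (mem_compl.1 hv), hf])
    (fun v _ => card_singleton _) (fun v hv w _ hvw => disjoint_singleton.2 fun h =>
      hvw ((insert_inj (mem_compl.1 hv)).1 h)) hp0 (hp1.trans one_le_two)
  simp only [hlink, hcard, pow_one] at hchernoff
  refine (subsetProb_mono hp0 hp1 fun H _ h => ?_).trans (hchernoff.trans ?_)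
  · contrapose! h
    rw [RelApprox]
    rw [abs_le] at h ⊢
    constructor <;> nlinarith
  · refine mul_le_mul_of_nonneg_left (Real.exp_le_exp.2 ?_) zero_le_two
    linarith [mul_nonneg (pow_nonneg hp0 3) (sub_nonneg.2 hn)]

theorem subsetProb_covered_le (hZ : IsPartialSteiner j Z) (hS : #S = j) :
    subsetProb (powersetCard (j + 2) univ) p
        (fun H => 8 * p * Fintype.card V < #(link (facets (j + 1) (H ∩ Z)) S)) ≤
      Real.exp (-(Fintype.card V * p)) := by
  have hchernoff := subsetProb_four_mul_lt_card_le (E := powersetCard (j + 2) univ)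
    (V := {e ∈ Z | S ⊆ e}) (B := fun e => {e}) (r := 1) (μ := Fintype.card V * p) hp0 hp1
    (fun e he => singleton_subset_iff.2
      (mem_powersetCard_univ.2 (hZ.sized (mem_filter.1 he).1)))
    (fun e _ => card_singleton e) (fun e _ e' _ hne => disjoint_singleton.2 hne) (by
      rw [pow_one]
      gcongr
      exact hZ.card_filter_superset_le hS)
  refine (subsetProb_mono hp0 hp1 fun H _ h => ?_).trans hchernoff
  have hsub : link (facets (j + 1) (H ∩ Z)) S ⊆
      ({e ∈ {e ∈ Z | S ⊆ e} | {e} ⊆ H} : Finset (Finset V)).biUnion (· \ S) := fun v hv => by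
    obtain ⟨hvS, hv⟩ := mem_link.1 hv
    obtain ⟨e, he, hve, -⟩ := mem_facets.1 hv
    rw [mem_inter] at he
    rw [insert_subset_iff] at hve
    exact mem_biUnion.2 ⟨e, mem_filter.2 ⟨mem_filter.2 ⟨he.2, hve.2⟩,
      singleton_subset_iff.2 he.1⟩, mem_sdiff.2 ⟨hve.1, hvS⟩⟩
  have hcard : #(link (facets (j + 1) (H ∩ Z)) S) ≤ #{e ∈ {e ∈ Z | S ⊆ e} | {e} ⊆ H} * 2 :=
    (card_le_card hsub).trans <| card_biUnion_le_card_mul _ _ _ fun e he => by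
      obtain ⟨heZ, hSe⟩ := mem_filter.1 (mem_filter.1 he).1
      exact (hZ.card_sdiff_eq_two hS heZ hSe).le
  have hcast : (#(link (facets (j + 1) (H ∩ Z)) S) : ℝ) ≤
      #{e ∈ {e ∈ Z | S ⊆ e} | {e} ⊆ H} * 2 := by exact_mod_cast hcard
  linarith

-- Avoiding `x` makes the blocks for distinct `e` disjoint, so that Chernoff's bound applies.
theorem subsetProb_exchange_le (hZ : IsPartialSteiner j Z) (hf : #f = j + 1) (hx : x ∈ f)
    {s : Finset V → V} (hs : ∀ e ∈ Z, f.erase x ⊆ e → s e ∈ e \ f.erase x) :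
    subsetProb (powersetCard (j + 2) univ) p (fun H => 4 * (Fintype.card V * p ^ 2) <
        #{e ∈ {e ∈ Z | f.erase x ⊆ e ∧ x ∉ e} | {e, insert (s e) f} ⊆ H}) ≤
      Real.exp (-(Fintype.card V * p ^ 2)) := by
  have hS : #(f.erase x) = j := by rw [card_erase_of_mem hx, hf, Nat.add_sub_cancel]
  have hsf {e : Finset V} (heZ : e ∈ Z) (hSe : f.erase x ⊆ e) (hxe : x ∉ e) : s e ∉ f := by
    have := mem_sdiff.1 (hs e heZ hSe)
    exact fun h => this.2 (mem_erase.2 ⟨fun hsx => hxe (hsx ▸ this.1), h⟩)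
  have hne {e : Finset V} (hxe : x ∉ e) (v : V) : e ≠ insert v f :=
    fun h => hxe (h ▸ mem_insert_of_mem hx)
  refine subsetProb_four_mul_lt_card_le (B := fun e => {e, insert (s e) f}) (r := 2) hp0 hp1
    ?_ ?_ ?_ ?_
  · intro e he
    obtain ⟨heZ, hSe, hxe⟩ := mem_filter.1 he
    rw [insert_subset_iff, singleton_subset_iff, mem_powersetCard_univ, mem_powersetCard_univ,
      card_insert_of_notMem (hsf heZ hSe hxe), hf]
    exact ⟨hZ.sized heZ, rfl⟩
  · intro e he
    exact card_pair (hne (mem_filter.1 he).2.2 _)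
  · intro e he e' he' hee'
    obtain ⟨heZ, hSe, hxe⟩ := mem_filter.1 he
    obtain ⟨heZ', hSe', hxe'⟩ := mem_filter.1 he'
    have hss : insert (s e) f ≠ insert (s e') f := fun h => by
      have := (insert_inj (hsf heZ hSe hxe)).1 h
      exact hee' (hZ.eq_of_mem_sdiff hS heZ heZ' hSe hSe' (hs e heZ hSe)
        (this ▸ hs e' heZ' hSe'))
    simp only [disjoint_insert_left, disjoint_singleton_left, mem_insert, mem_singleton, not_or]
    exact ⟨⟨hee', hne hxe _⟩, (hne hxe' _).symm, hss⟩
  · gcongr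
    exact (card_le_card (monotone_filter_right _ fun e _ he => he.1)).trans
      (hZ.card_filter_superset_le hS)

theorem subsetProb_degree_covered_le (hZ : IsPartialSteiner j Z)
    (hlarge : 1 ≤ Fintype.card V * p ^ 2) (hf : #f = j + 1) (hx : x ∈ f) :
    subsetProb (powersetCard (j + 2) univ) p (fun H => 9 * p * (Fintype.card V * p) <
        #(link H f ∩ link (facets (j + 1) (H ∩ Z)) (f.erase x))) ≤
      2 * Real.exp (-(Fintype.card V * p ^ 2)) := by
  have hS : #(f.erase x) = j := by rw [card_erase_of_mem hx, hf, Nat.add_sub_cancel]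
  have : Nonempty V := ⟨x⟩
  have hpair : ∀ e ∈ Z, f.erase x ⊆ e → ∃ a b, e \ f.erase x = {a, b} := fun e heZ hSe =>
    let ⟨a, b, _, hab⟩ := card_eq_two.1 (hZ.card_sdiff_eq_two hS heZ hSe)
    ⟨a, b, hab⟩
  choose! a b hab using hpair
  have ha := subsetProb_exchange_le hp0 hp1 hZ hf hx (s := a) fun e heZ hSe => by
    simp [hab e heZ hSe]
  have hb := subsetProb_exchange_le hp0 hp1 hZ hf hx (s := b) fun e heZ hSe => by
    simp [hab e heZ hSe]
  refine (subsetProb_mono hp0 hp1 fun H _ h => ?_).trans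
    ((subsetProb_or_le hp0 hp1).trans ((add_le_add ha hb).trans_eq (two_mul _).symm))
  by_contra! hsmall
  have hcard : (#(link H f ∩ link (facets (j + 1) (H ∩ Z)) (f.erase x)) : ℝ) ≤
      1 + (#{e ∈ {e ∈ Z | f.erase x ⊆ e ∧ x ∉ e} | {e, insert (a e) f} ⊆ H} +
        #{e ∈ {e ∈ Z | f.erase x ⊆ e ∧ x ∉ e} | {e, insert (b e) f} ⊆ H}) := by
    exact_mod_cast (card_le_card (hZ.link_inter_link_facets_subset hf hx hab H)).trans <|
      (card_union_le _ _).trans <| add_le_add (hZ.card_link_le_one hf) <|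
      (card_union_le _ _).trans <| add_le_add card_image_le card_image_le
  linarith

theorem subsetProb_not_localEstimates_le (hZ : IsPartialSteiner j Z)
    (hlarge : 2 * (j + 1) ≤ Fintype.card V * p) (hlarge' : 1 ≤ Fintype.card V * p ^ 2) :
    subsetProb (powersetCard (j + 2) univ) p (fun H => ¬ LocalEstimates j p H (H ∩ Z)) ≤
      ((2 * j + 4) * (Fintype.card V).choose (j + 1) + (Fintype.card V).choose j) *
        Real.exp (-(Fintype.card V * p ^ 3 / 8)) := by
  set b := Real.exp (-(Fintype.card V * p ^ 3 / 8))
  have hexp {i : ℕ} (hi : i ≤ 3) : Real.exp (-(Fintype.card V * p ^ i)) ≤ b := by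
    have : Fintype.card V * p ^ 3 ≤ Fintype.card V * p ^ i :=
      mul_le_mul_of_nonneg_left (pow_le_pow_of_le_one hp0 hp1 hi) (Nat.cast_nonneg _)
    have : 0 ≤ Fintype.card V * p ^ 3 := by positivity
    exact Real.exp_le_exp.2 (by linarith)
  have hdegree := subsetProb_exists_le hp0 hp1 (I := powersetCard (j + 1) (univ : Finset V))
    fun f hf => subsetProb_degree_le hp0 hp1 hlarge (mem_powersetCard_univ.1 hf)
  have hcovered := subsetProb_exists_le hp0 hp1 (I := powersetCard j (univ : Finset V))
    fun S hS => (subsetProb_covered_le hp0 hp1 hZ (mem_powersetCard_univ.1 hS)).trans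
      (by simpa only [pow_one] using hexp (i := 1) (by norm_num))
  have hdegree_covered := subsetProb_exists_le hp0 hp1
    (I := powersetCard (j + 1) (univ : Finset V)) (b := (j + 1) * (2 * b))
    (A := fun f H => ∃ x ∈ f, 9 * p * (Fintype.card V * p) <
      #(link H f ∩ link (facets (j + 1) (H ∩ Z)) (f.erase x))) fun f hf => by
      rw [mem_powersetCard_univ] at hf
      refine (subsetProb_exists_le hp0 hp1 fun x hx =>
        (subsetProb_degree_covered_le hp0 hp1 hZ hlarge' hf hx).trans
          (mul_le_mul_of_nonneg_left (hexp (by norm_num)) zero_le_two)).trans_eq ?_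
      rw [hf, Nat.cast_add_one]
  refine (subsetProb_mono hp0 hp1 fun H _ h => ?_).trans <|
    (subsetProb_or_le hp0 hp1).trans <|
    (add_le_add hdegree ((subsetProb_or_le hp0 hp1).trans
      (add_le_add hcovered hdegree_covered))).trans_eq ?_
  · contrapose! h
    simp only [mem_powersetCard_univ] at h
    exact ⟨h.1, h.2.1, h.2.2⟩
  · rw [card_powersetCard, card_powersetCard, card_univ]
    ring

theorem one_sub_le_subsetProb_localEstimates (hZ : IsPartialSteiner j Z)
    (hlarge : 2 * (j + 1) ≤ Fintype.card V * p) (hlarge' : 1 ≤ Fintype.card V * p ^ 2) :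
    1 - (2 * j + 5) * Fintype.card V ^ (j + 1) * Real.exp (-(Fintype.card V * p ^ 3 / 8)) ≤
      subsetProb (powersetCard (j + 2) univ) p (fun H => LocalEstimates j p H (H ∩ Z)) := by
  have hnot := subsetProb_not_localEstimates_le hp0 hp1 hZ hlarge hlarge'
  rw [subsetProb_not] at hnot
  have hn : 1 ≤ Fintype.card V := by
    exact_mod_cast hlarge'.trans
      (mul_le_of_le_one_right (Nat.cast_nonneg _) (pow_le_one₀ hp0 hp1))
  have hchoose : ((Fintype.card V).choose (j + 1) : ℝ) ≤ Fintype.card V ^ (j + 1) := by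
    exact_mod_cast Nat.choose_le_pow _ _
  have hchoose' : ((Fintype.card V).choose j : ℝ) ≤ Fintype.card V ^ (j + 1) := by
    exact_mod_cast (Nat.choose_le_pow _ _).trans (Nat.pow_le_pow_right hn j.le_succ)
  have : ((2 * j + 4) * (Fintype.card V).choose (j + 1) + (Fintype.card V).choose j : ℝ) ≤
      (2 * j + 5) * Fintype.card V ^ (j + 1) := by
    linarith [mul_le_mul_of_nonneg_left hchoose (by positivity : (0 : ℝ) ≤ 2 * j + 4)]
  linarith [mul_le_mul_of_nonneg_right this (Real.exp_pos (-(Fintype.card V * p ^ 3 / 8))).le]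

end LocalProbability

section Asymptotics

open Filter Asymptotics

theorem natCast_mul_rpow_neg_pow {n : ℕ} (hn : n ≠ 0) (ε : ℝ) (i : ℕ) :
    (n : ℝ) * ((n : ℝ) ^ (-ε)) ^ i = (n : ℝ) ^ (1 - i * ε) := by
  have hn0 : (0 : ℝ) < n := by exact_mod_cast Nat.pos_of_ne_zero hn
  rw [← Real.rpow_natCast, ← Real.rpow_mul hn0.le, sub_eq_add_neg, Real.rpow_add hn0,
    Real.rpow_one, neg_mul, mul_comm ε]

theorem tendsto_natCast_mul_rpow_neg_pow {ε : ℝ} {i : ℕ} (hε : i * ε < 1) :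
    Tendsto (fun n : ℕ => (n : ℝ) * ((n : ℝ) ^ (-ε)) ^ i) atTop atTop := by
  refine Tendsto.congr' ?_ ((tendsto_rpow_atTop (sub_pos.2 hε)).comp tendsto_natCast_atTop_atTop)
  filter_upwards [eventually_ne_atTop 0] with n hn
  exact (natCast_mul_rpow_neg_pow hn ε i).symm

theorem eventually_mul_pow_mul_exp_neg_le {ε M a : ℝ} {i : ℕ} (hε : i * ε < 1) (hM : 0 < M)
    (ha : 0 < a) (r : ℕ) (c : ℝ) :
    ∀ᶠ n : ℕ in atTop, M * (n : ℝ) ^ r * Real.exp (-(n * ((n : ℝ) ^ (-ε)) ^ i / a)) ≤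
      (n : ℝ) ^ (-c) := by
  have hδ : 1 - i * ε ≠ 0 := (sub_pos.2 hε).ne'
  have hlittle := ((isLittleO_exp_neg_mul_rpow_atTop (inv_pos.2 ha)
    (-(r + c) / (1 - i * ε))).comp_tendsto (tendsto_natCast_mul_rpow_neg_pow hε)).def (inv_pos.2 hM)
  filter_upwards [hlittle, eventually_ne_atTop 0] with n hexp hn
  have hn0 : (0 : ℝ) < n := by exact_mod_cast Nat.pos_of_ne_zero hn
  simp only [Function.comp_apply, Real.norm_eq_abs, Real.abs_exp] at hexp
  rw [abs_of_nonneg (by positivity), natCast_mul_rpow_neg_pow hn, ← Real.rpow_mul hn0.le,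
    mul_div_cancel₀ _ hδ] at hexp
  calc M * (n : ℝ) ^ r * Real.exp (-(n * ((n : ℝ) ^ (-ε)) ^ i / a))
      = M * (n : ℝ) ^ r * Real.exp (-a⁻¹ * (n : ℝ) ^ (1 - i * ε)) := by
        rw [natCast_mul_rpow_neg_pow hn, div_eq_inv_mul, neg_mul]
    _ ≤ M * (n : ℝ) ^ r * (M⁻¹ * (n : ℝ) ^ (-(r + c))) := by gcongr
    _ = (n : ℝ) ^ (r : ℝ) * (n : ℝ) ^ (-(r + c)) := by
        rw [Real.rpow_natCast]
        field_simp
    _ = (n : ℝ) ^ (-c) := by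
        rw [← Real.rpow_add hn0]
        ring_nf

theorem eventually_mul_rpow_neg_le_one {ε : ℝ} (hε : 0 < ε) (C : ℝ) :
    ∀ᶠ n : ℕ in atTop, C * (n : ℝ) ^ (-ε) ≤ 1 := by
  have hlim := ((tendsto_rpow_neg_atTop hε).comp tendsto_natCast_atTop_atTop).const_mul C
  rw [mul_zero] at hlim
  exact hlim.eventually_le_const one_pos

end Asymptotics

section Template

variable {n : ℕ} {F : Type*}

/-- The conclusions (1)–(6) of the paper about a hypergraph `H` and a template `T`. -/
def TemplateProperties [Field F] [Fintype F] (k h : ℕ) (C p : ℝ) (π : Fin n → F)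
    (ord : Finset (Fin n) → Fin (k - 1) → Fin n) (H T : Finset (Finset (Fin n))) : Prop :=
  let G0 := facetDisjointPart (k - 1) H T
  let L0 := facets (k - 1) G0
  let D0 : ℝ := k * #G0 / #L0
  RelApprox (C * p) #G0 (n.choose k * p) ∧
  (∀ f ∈ L0, RelApprox (C * p) #{e ∈ G0 | f ⊆ e} D0) ∧
  RelApprox (C * p) #L0 (n.choose (k - 1)) ∧
  RelApprox (C * p) D0 (n * p) ∧
  IsTypical n k (C * p) h L0 ∧
  AffineBounded F C ((fun f => π ∘ ord f) '' (L0 : Set (Finset (Fin n))))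

theorem ncard_image_comp_ord {r : ℕ} {π : Fin n → F} (hπ : Function.Injective π)
    {ord : Finset (Fin n) → Fin r → Fin n}
    (hord : ∀ f : Finset (Fin n), #f = r → univ.image (ord f) = f) {L : Finset (Finset (Fin n))}
    (hL : (L : Set (Finset (Fin n))).Sized r) :
    ((fun f => π ∘ ord f) '' (L : Set (Finset (Fin n)))).ncard = #L := by
  rw [Set.InjOn.ncard_image, Set.ncard_coe_finset]
  intro f hf g hg hfg
  rw [← hord f (hL hf), ← hord g (hL hg), hπ.comp_left hfg]

theorem affineBounded_image_comp_ord [Field F] [Fintype F] {r K : ℕ} {C : ℝ}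
    {π : Fin n → F} (hπ : Function.Injective π) {ord : Finset (Fin n) → Fin r → Fin n}
    (hord : ∀ f : Finset (Fin n), #f = r → univ.image (ord f) = f) {L : Finset (Finset (Fin n))}
    (hL : (L : Set (Finset (Fin n))).Sized r) (hdense : (n.choose r : ℝ) ≤ 2 * #L)
    (hF : Fintype.card F ≤ K * n) (hn : n ≤ 2 * (n + 1 - r))
    (hC : 2 * ((2 * K) ^ r * r.factorial) ≤ C) :
    AffineBounded F C ((fun f => π ∘ ord f) '' (L : Set (Finset (Fin n)))) := by
  apply affineBounded_of_card_pow_le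
  rw [ncard_image_comp_ord hπ hord hL, Fintype.card_fin]
  calc (Fintype.card F : ℝ) ^ r ≤ (2 * K) ^ r * r.factorial * n.choose r := by
        exact_mod_cast pow_le_mul_choose hF hn
    _ ≤ (2 * K) ^ r * r.factorial * (2 * #L) := by gcongr
    _ = 2 * ((2 * K) ^ r * r.factorial) * #L := by ring
    _ ≤ C * #L := by gcongr

theorem LocalEstimates.templateProperties [Field F] [Fintype F] {j h K : ℕ} {C p : ℝ}
    {H T : Finset (Finset (Fin n))} (hl : LocalEstimates j p H T) (hp : 0 < p)
    (hC : 36 * j + 44 + 36 * h + 2 * ((2 * K) ^ (j + 1) * (j + 1).factorial) ≤ C)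
    (hsmall : C * p ≤ 1) (hlarge : 2 * (j + 1) ≤ n * p)
    (hH : (H : Set (Finset (Fin n))).Sized (j + 2)) (hF : Fintype.card F ≤ K * n)
    {π : Fin n → F} (hπ : Function.Injective π) {ord : Finset (Fin n) → Fin (j + 1) → Fin n}
    (hord : ∀ f : Finset (Fin n), #f = j + 1 → univ.image (ord f) = f) :
    TemplateProperties (j + 2) h C p π ord H T := by
  have hK : 0 ≤ 2 * ((2 * (K : ℝ)) ^ (j + 1) * (j + 1).factorial) := by positivity
  have hle {a : ℝ} (ha : a ≤ 36 * j + 44 + 36 * h) : a * p ≤ C * p :=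
    mul_le_mul_of_nonneg_right (by linarith) hp.le
  have hp1 : p ≤ 1 := by linarith [hle (a := 1) (by linarith)]
  have hn : 2 * (j + 1) ≤ n := by
    exact_mod_cast hlarge.trans (mul_le_of_le_one_right n.cast_nonneg hp1)
  have hsmall' : 2 * ((9 * j + 11) * p) ≤ 1 := by
    linarith [hle (a := 18 * j + 22) (by linarith)]
  have hlarge' : j + 1 ≤ Fintype.card (Fin n) * p := by
    rw [Fintype.card_fin]
    linarith
  have hL := hl.relApprox_card_facets hp hsmall' hlarge' hH
  have hD := hl.relApprox_averageDegree hp hsmall' hlarge' hH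
  have hG := hl.relApprox_card_facetDisjointPart hp hsmall' hlarge' hH
  have hdense := hl.choose_le_two_mul_card_facets hp hsmall' hlarge' hH
  rw [Fintype.card_fin] at hL hD hG hdense
  rw [TemplateProperties, Nat.cast_add, Nat.cast_two]
  refine ⟨hG.mono (hle (by linarith)) (by positivity), fun f hf => ?_,
    hL.mono (hle (by linarith)) (by positivity), hD.mono (hle (by linarith)) (by positivity),
    isTypical_of_le_card_link (δ := 9 * p) (sized_facets _ _) (by positivity) ?_ ?_ (by omega)
      fun S hS => ?_,
    affineBounded_image_comp_ord hπ hord (sized_facets _ _) hdense hF (by omega) (by linarith)⟩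
  · have hfr : #f = j + 1 := sized_facets _ _ hf
    rw [card_filter_superset (by rw [hfr]; exact hH.mono (facetDisjointPart_subset _ _ _))]
    refine (hl.relApprox_card_link_averageDegree hp hsmall' hlarge' hH hf).mono ?_ (by positivity)
    rw [← mul_assoc]
    exact hle (by linarith)
  · linarith [hle (a := 18 * h) (by linarith)]
  · linarith [hle (a := 36 * h) (by linarith)]
  · simpa using hl.one_sub_mul_le_card_link_facets hp hsmall' hlarge' hH hS

theorem one_sub_le_subsetProb_templateProperties [Field F] [Fintype F] [DecidableEq F]
    {j h K : ℕ} {C p : ℝ} (hp : 0 < p) (hp1 : p ≤ 1)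
    (hC : 36 * j + 44 + 36 * h + 2 * ((2 * K) ^ (j + 1) * (j + 1).factorial) ≤ C)
    (hsmall : C * p ≤ 1) (hlarge : 2 * (j + 1) ≤ n * p ^ 2) (hF : Fintype.card F ≤ K * n)
    {π : Fin n → F} (hπ : Function.Injective π) {ord : Finset (Fin n) → Fin (j + 1) → Fin n}
    (hord : ∀ f : Finset (Fin n), #f = j + 1 → univ.image (ord f) = f) :
    1 - (2 * j + 5) * n ^ (j + 1) * Real.exp (-(n * p ^ 3 / 8)) ≤
      subsetProb (allK n (j + 2)) p fun H =>
        TemplateProperties (j + 2) h C p π ord H {e ∈ H | ∑ v ∈ e, π v = 0} := by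
  have hlarge' : 2 * (j + 1) ≤ n * p := hlarge.trans
    (mul_le_mul_of_nonneg_left (pow_le_of_le_one hp.le hp1 two_ne_zero) n.cast_nonneg)
  have hprob := one_sub_le_subsetProb_localEstimates hp.le hp1 (isPartialSteiner_sum_eq_zero hπ j)
    (by simpa using hlarge') (by rw [Fintype.card_fin]; linarith [(j.cast_nonneg : (0 : ℝ) ≤ j)])
  rw [Fintype.card_fin] at hprob
  refine hprob.trans (subsetProb_mono hp.le hp1 fun H hH hl => ?_)
  rw [inter_filter, inter_eq_left.2 hH] at hl
  exact hl.templateProperties hp hC hsmall hlarge'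
    (fun e he => mem_powersetCard_univ.1 (hH he)) hF hπ hord

end Template

theorem le_hypInjProb {n k : ℕ} {F : Type*} [Fintype F] [DecidableEq F] [Zero F] {p b : ℝ}
    (hF : n + 1 ≤ Fintype.card F) {E : Finset (Finset (Fin n)) → (Fin n → F) → Prop}
    (h : ∀ π : Fin n → F, Function.Injective π → b ≤ subsetProb (allK n k) p fun H => E H π) :
    b ≤ hypInjProb n k F p E := by
  have hne : ({π : Fin n → F | Function.Injective π ∧ ∀ v, π v ≠ 0} : Finset _).Nonempty := by
    have hcard : Fintype.card (Fin n) ≤ Fintype.card {x : F // x ≠ 0} := by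
      rw [Fintype.card_fin, Fintype.card_subtype_compl, Fintype.card_subtype_eq]
      omega
    obtain ⟨g⟩ := Function.Embedding.nonempty_of_card_le hcard
    exact ⟨fun v => g v, mem_filter.2 ⟨mem_univ _,
      Subtype.val_injective.comp g.injective, fun v => (g v).2⟩⟩
  rw [hypInjProb, le_div_iff₀ (by exact_mod_cast hne.card_pos), mul_comm, ← nsmul_eq_mul]
  exact card_nsmul_le_sum _ _ _ fun π hπ => h π (mem_filter.1 hπ).2.1

theorem stmt_13_general {k : ℕ} (hk : 2 ≤ k) (h K : ℕ) :
    ∃ C : ℝ, 1 < C ∧ ∀ ε : ℝ, 0 < ε → ε < 1 / 3 → ∀ c' : ℝ, ∃ n₀ : ℕ, ∀ n ≥ n₀,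
      ∀ (F : Type*) [Field F] [Fintype F] [DecidableEq F], Fintype.card F ≤ K * n →
        ∀ π : Fin n → F, Function.Injective π → ∀ ord : Finset (Fin n) → Fin (k - 1) → Fin n,
          (∀ f : Finset (Fin n), #f = k - 1 → univ.image (ord f) = f) →
            1 - (n : ℝ) ^ (-c') ≤ subsetProb (allK n k) ((n : ℝ) ^ (-ε)) fun H =>
              TemplateProperties k h C ((n : ℝ) ^ (-ε)) π ord H {e ∈ H | ∑ v ∈ e, π v = 0} := by
  obtain ⟨j, rfl⟩ := Nat.exists_eq_add_of_le' hk
  refine ⟨36 * j + 44 + 36 * h + 2 * ((2 * K) ^ (j + 1) * (j + 1).factorial), ?_,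
    fun ε hε0 hε c' => ?_⟩
  · have : 0 ≤ 2 * ((2 * (K : ℝ)) ^ (j + 1) * (j + 1).factorial) := by positivity
    linarith [(by positivity : (0 : ℝ) ≤ 36 * j + 36 * h)]
  obtain ⟨n₀, hn₀⟩ := Filter.eventually_atTop.1 <|
    (Filter.eventually_gt_atTop 0).and <| (eventually_mul_rpow_neg_le_one hε0 1).and <|
    (eventually_mul_rpow_neg_le_one hε0 _).and <|
    ((tendsto_natCast_mul_rpow_neg_pow (ε := ε) (i := 2)
      (by push_cast; linarith)).eventually_ge_atTop (2 * (j + 1))).and <|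
    eventually_mul_pow_mul_exp_neg_le (i := 3) (M := 2 * j + 5) (a := 8)
      (by push_cast; linarith) (by positivity) (by norm_num) (j + 1) c'
  refine ⟨n₀, fun n hn F _ _ _ hF π hπ ord hord => ?_⟩
  obtain ⟨hn0, hp1, hsmall, hlarge, htail⟩ := hn₀ n hn
  rw [one_mul] at hp1
  exact (sub_le_sub_left htail 1).trans <| one_sub_le_subsetProb_templateProperties
    (Real.rpow_pos_of_pos (by exact_mod_cast hn0) _) hp1 le_rfl hsmall hlarge hF hπ hord

/-- properties of the template `T`, of
`G₀ = {e ∈ H : e facet-disjoint from T}`, of `L₀ = K_{k-1}(G₀)` and of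
`D₀ = k|G₀|/|L₀|`, holding with very high probability. -/
theorem stmt_13 (k : ℕ) (hk : k = 3 ∨ k = 4) (h : ℕ) :
    ∃ ε₀ C : ℝ, 0 < ε₀ ∧ 1 < C ∧
      ∀ ε : ℝ, 0 < ε → ε < ε₀ →
        ∀ c' : ℝ, 0 < c' →
          ∃ n₀ : ℕ, ∀ n : ℕ, n₀ ≤ n →
            ∀ (m : ℕ) (F : Type) [Field F] [Fintype F] [DecidableEq F],
              ringChar F = 2 → Fintype.card F = 2 ^ m → 2 * n ≤ 2 ^ m → 2 ^ m ≤ 4 * n →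
              ∀ ord : Finset (Fin n) → Fin (k - 1) → Fin n,
                (∀ f : Finset (Fin n), f.card = k - 1 →
                    Finset.image (ord f) Finset.univ = f) →
                1 - (n : ℝ) ^ (-c') ≤
                  hypInjProb n k F ((n : ℝ) ^ (-ε)) (fun H π =>
                    let p : ℝ := (n : ℝ) ^ (-ε)
                    let T := H.filter fun e => ∑ v ∈ e, π v = 0
                    let G0 := H.filter fun e =>
                      ∀ f ⊆ e, f.card = k - 1 → ∀ e' ∈ T, ¬f ⊆ e'
                    let L0 := G0.biUnion fun e => e.powersetCard (k - 1)
                    let D0 : ℝ := k * G0.card / L0.card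
                    (|(G0.card : ℝ) - (n.choose k : ℝ) * p| ≤
                        C * p * ((n.choose k : ℝ) * p)) ∧
                    (∀ f ∈ L0,
                      |((G0.filter fun e => f ⊆ e).card : ℝ) - D0| ≤ C * p * D0) ∧
                    (|(L0.card : ℝ) - (n.choose (k - 1) : ℝ)| ≤
                        C * p * (n.choose (k - 1) : ℝ)) ∧
                    (|D0 - (n : ℝ) * p| ≤ C * p * ((n : ℝ) * p)) ∧
                    IsTypical n k (C * p) h L0 ∧
                    AffineBounded F C
                      ((fun f => π ∘ ord f) '' (L0 : Set (Finset (Fin n))))) := by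
  obtain ⟨C, hC, hgeneral⟩ := stmt_13_general (by omega : 2 ≤ k) h 4
  refine ⟨1 / 3, C, by norm_num, hC, fun ε hε0 hε c' _ => ?_⟩
  obtain ⟨n₀, hn₀⟩ := hgeneral ε hε0 hε c'
  refine ⟨max n₀ 1, fun n hn m F _ _ _ _ hF hlow hhigh ord hord => ?_⟩
  obtain ⟨hn₀n, hn1⟩ := max_le_iff.1 hn
  exact le_hypInjProb (by omega) fun π hπ => hn₀ n hn₀n F (hF.trans_le hhigh) π hπ ord hord
end

section
/- Let X, Y be finite sets with |X| ≤ |Y|, let C > 0, and let f : I(X,Y) → ℝ be a function on the set of injections from X to Y such that |f(π) − f(τ∘π)| ≤ C for every injection π ∈ I(X,Y) and every transposition τ ∈ Sym(Y). Let π be a uniformly random element of I(X,Y). Then for every t > 0: P[|f(π) − E f(π)| > t] ≤ 2·exp(−t²/(2|Y|C²)). -/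
open Finset

/-!
Average out the images of the points of `X` one at a time. Once the images of the other points are
fixed, two choices `y`, `z` for the image of the last point differ by the transposition `(y z)`, so
Hoeffding's lemma contributes a factor `exp ((C / 2) ^ 2 * l ^ 2 / 2)` to the moment generating
function. The average over the last image is again `C`-Lipschitz under transpositions, because a
permutation of `Y` carries the values available to an injection to those available to its
composition with the permutation; hence the argument iterates. The resulting sub-Gaussian bound,
with variance proxy `|X| * (C / 2) ^ 2`, gives the tail estimate by Chernoff's method.
-/

section

open MeasureTheory ProbabilityTheory
open scoped BigOperators NNReal

section UniformDistribution

variable {ι : Type*} [Fintype ι]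

lemma integral_uniformOn_univ [MeasurableSpace ι] [DiscreteMeasurableSpace ι] (f : ι → ℝ) :
    ∫ i, f i ∂(uniformOn Set.univ) = 𝔼 i, f i := by
  rw [integral_fintype .of_finite, Fintype.expect_eq_sum_div_card, sum_div]
  refine sum_congr rfl fun i _ ↦ ?_
  simp [measureReal_def, uniformOn_univ, div_eq_inv_mul]

lemma measureReal_uniformOn_univ [MeasurableSpace ι] [DiscreteMeasurableSpace ι]
    (p : ι → Prop) [DecidablePred p] :
    (uniformOn Set.univ).real {i | p i} = #{i | p i} / Fintype.card ι := by
  rw [measureReal_def, uniformOn_univ, ← coe_filter_univ, Measure.count_apply_finset]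
  simp

lemma expect_exp_mul_sub_expect_le_of_forall_sub_le [Nonempty ι] {v : ι → ℝ} {C : ℝ}
    (hv : ∀ i j, v i - v j ≤ C) (l : ℝ) :
    𝔼 i, Real.exp (l * (v i - 𝔼 j, v j)) ≤ Real.exp ((C / 2) ^ 2 * l ^ 2 / 2) := by
  let _ : MeasurableSpace ι := ⊤
  have hμ : IsProbabilityMeasure (uniformOn (Set.univ : Set ι)) :=
    isProbabilityMeasure_uniformOn Set.finite_univ Set.univ_nonempty
  obtain ⟨i₀, hmin⟩ := Finite.exists_min v
  have hmem : ∀ i, v i ∈ Set.Icc (v i₀) (v i₀ + C) := fun i ↦ ⟨hmin i, by linarith [hv i i₀]⟩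
  have hoeffding := (hasSubgaussianMGF_of_mem_Icc (μ := uniformOn Set.univ)
    (Measurable.of_discrete (f := v)).aemeasurable (.of_forall hmem)).mgf_le l
  simpa [mgf, integral_uniformOn_univ, div_pow] using hoeffding

lemma card_filter_lt_abs_div_card_le {X : ι → ℝ} {c : ℝ} (hc : 0 ≤ c)
    (hX : ∀ l, 𝔼 i, Real.exp (l * X i) ≤ Real.exp (c * l ^ 2 / 2)) {t : ℝ} (ht : 0 ≤ t) :
    (#{i | t < |X i|} : ℝ) / Fintype.card ι ≤ 2 * Real.exp (-t ^ 2 / (2 * c)) := by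
  lift c to ℝ≥0 using hc
  let _ : MeasurableSpace ι := ⊤
  have hsub : HasSubgaussianMGF X c (uniformOn Set.univ) :=
    ⟨fun _ ↦ .of_finite, fun l ↦ (integral_uniformOn_univ _).trans_le (hX l)⟩
  have hsubset : {i | t < |X i|} ⊆ {i | t ≤ X i} ∪ {i | t ≤ (-X) i} :=
    fun i (hi : t < |X i|) ↦ (lt_abs.mp hi).imp (fun h ↦ h.le) (fun h ↦ h.le)
  rw [← measureReal_uniformOn_univ]
  calc (uniformOn Set.univ).real {i | t < |X i|}
      ≤ (uniformOn Set.univ).real {i | t ≤ X i} + (uniformOn Set.univ).real {i | t ≤ (-X) i} :=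
        (measureReal_mono hsubset).trans (measureReal_union_le _ _)
    _ ≤ 2 * Real.exp (-t ^ 2 / (2 * c)) := by
        linarith [hsub.measure_ge_le ht, hsub.neg.measure_ge_le ht]

end UniformDistribution

lemma expect_sigma_of_card_eq {ι M : Type*} {κ : ι → Type*} [Fintype ι] [∀ i, Fintype (κ i)]
    [AddCommMonoid M] [Module ℚ≥0 M] {n : ℕ} (hκ : ∀ i, Fintype.card (κ i) = n)
    (f : (Σ i, κ i) → M) : 𝔼 p, f p = 𝔼 i, 𝔼 k, f ⟨i, k⟩ := by
  simp only [expect, card_univ, hκ, Fintype.card_sigma, sum_const, smul_eq_mul, Nat.cast_mul,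
    mul_inv, mul_smul, Fintype.sum_sigma, ← smul_sum]

section Embedding

variable {α β : Type*}

lemma optionElim_trans_equiv (ρ : α ↪ β) (y : β) (hy : y ∉ Set.range ρ) (e : Equiv.Perm β) :
    (ρ.optionElim y hy).trans e.toEmbedding =
      (ρ.trans e.toEmbedding).optionElim (e y) (by simpa using hy) := by
  ext (_ | x) <;> rfl

lemma optionElim_trans_swap [DecidableEq β] (ρ : α ↪ β) {y z : β} (hy : y ∉ Set.range ρ)
    (hz : z ∉ Set.range ρ) :
    (ρ.optionElim y hy).trans (Equiv.swap y z).toEmbedding = ρ.optionElim z hz := by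
  ext (_ | x)
  · exact Equiv.swap_apply_left y z
  · exact Equiv.swap_apply_of_ne_of_ne (fun h ↦ hy ⟨x, h⟩) (fun h ↦ hz ⟨x, h⟩)

lemma nonempty_compl_range_of_card_lt [Fintype α] [Fintype β]
    (hcard : Fintype.card α < Fintype.card β) (f : α → β) : Nonempty ↥(Set.range f)ᶜ := by
  refine (Set.nonempty_compl.mpr fun h ↦ ?_).to_subtype
  exact hcard.not_ge (Fintype.card_le_of_surjective f (Set.range_eq_univ.mp h))

/-- The Lipschitz condition of the concentration inequality: composing an injection with a
transposition of the codomain changes `f` by at most `C`. The case `a = b` is included, so that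
`0 ≤ C` follows as soon as there are an injection and a point of `β`. -/
def SwapLipschitzWith [DecidableEq β] (C : ℝ) (f : (α ↪ β) → ℝ) : Prop :=
  ∀ (π : α ↪ β) (a b : β), |f π - f (π.trans (Equiv.swap a b).toEmbedding)| ≤ C

lemma SwapLipschitzWith.of_forall_ne [DecidableEq β] {C : ℝ} (hC : 0 ≤ C) {f : (α ↪ β) → ℝ}
    (hf : ∀ (π : α ↪ β) (a b : β), a ≠ b →
      |f π - f (π.trans (Equiv.swap a b).toEmbedding)| ≤ C) :
    SwapLipschitzWith C f := by
  intro π a b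
  rcases eq_or_ne a b with rfl | hab
  · simpa [Equiv.Perm.one_def] using hC
  · exact hf π a b hab

lemma SwapLipschitzWith.sub_optionElim_le [DecidableEq β] {C : ℝ} {f : (Option α ↪ β) → ℝ}
    (hf : SwapLipschitzWith C f) (ρ : α ↪ β) (y z : ↥(Set.range ρ)ᶜ) :
    f (ρ.optionElim y y.2) - f (ρ.optionElim z z.2) ≤ C := by
  rw [← optionElim_trans_swap ρ y.2 z.2]
  exact (le_abs_self _).trans (hf _ _ _)

variable [Fintype α] [Fintype β] [DecidableEq β]

section Extension

variable {M : Type*} [AddCommMonoid M] [Module ℚ≥0 M]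

/-- The average of `f` over the extensions of `ρ : α ↪ β` to `Option α`, that is, the conditional
expectation of `f` under the uniform distribution given the restriction `ρ` to `α`. It is `0` if
`ρ` is surjective. -/
def expectExtension (f : (Option α ↪ β) → M) (ρ : α ↪ β) : M :=
  𝔼 y : ↥(Set.range ρ)ᶜ, f (ρ.optionElim y y.2)

lemma expect_expectExtension (f : (Option α ↪ β) → M) :
    𝔼 ρ, expectExtension f ρ = 𝔼 π, f π := by
  have hcard (ρ : α ↪ β) : Fintype.card ↥(Set.range ρ)ᶜ = Fintype.card β - Fintype.card α := by
    rw [Fintype.card_compl_set, Set.card_range_of_injective ρ.injective]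
  let extend (p : Σ ρ : α ↪ β, ↥(Set.range ρ)ᶜ) : Option α ↪ β := p.1.optionElim p.2 p.2.2
  calc 𝔼 ρ, expectExtension f ρ
      = 𝔼 p, f (extend p) := (expect_sigma_of_card_eq hcard fun p ↦ f (extend p)).symm
    _ = 𝔼 π, f π :=
      Fintype.expect_equiv (Function.Embedding.optionEmbeddingEquiv α β).symm _ _ fun _ ↦ rfl

lemma expectExtension_trans_equiv (f : (Option α ↪ β) → M) (ρ : α ↪ β) (e : Equiv.Perm β) :
    expectExtension f (ρ.trans e.toEmbedding) =
      expectExtension (fun π ↦ f (π.trans e.toEmbedding)) ρ := by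
  have mem_compl_range_iff (y : β) :
      y ∈ (Set.range ρ)ᶜ ↔ e y ∈ (Set.range (ρ.trans e.toEmbedding))ᶜ := by simp
  exact (Fintype.expect_equiv (e.subtypeEquiv mem_compl_range_iff) _ _ fun y ↦
    congrArg f (optionElim_trans_equiv ρ y y.2 e)).symm

end Extension

namespace SwapLipschitzWith

variable {C : ℝ}

lemma expectExtension_of_card_lt (hcard : Fintype.card α < Fintype.card β)
    {f : (Option α ↪ β) → ℝ} (hf : SwapLipschitzWith C f) :
    SwapLipschitzWith C (expectExtension f) := by
  intro ρ a b
  have := nonempty_compl_range_of_card_lt hcard ρ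
  rw [expectExtension_trans_equiv, expectExtension, expectExtension, ← expect_sub_distrib]
  exact (abs_expect_le _ _).trans (expect_le univ_nonempty fun y _ ↦ hf _ a b)

lemma expect_exp_le_mul_expect_exp_expectExtension (hcard : Fintype.card α < Fintype.card β)
    {f : (Option α ↪ β) → ℝ} (hf : SwapLipschitzWith C f) (l : ℝ) :
    𝔼 π, Real.exp (l * (f π - 𝔼 σ, f σ)) ≤ Real.exp ((C / 2) ^ 2 * l ^ 2 / 2) *
      𝔼 ρ, Real.exp (l * (expectExtension f ρ - 𝔼 σ, expectExtension f σ)) := by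
  rw [← expect_expectExtension, expect_expectExtension f, mul_expect]
  refine expect_le_expect fun ρ _ ↦ ?_
  have := nonempty_compl_range_of_card_lt hcard ρ
  set m := 𝔼 σ, f σ
  calc expectExtension (fun π ↦ Real.exp (l * (f π - m))) ρ
      = (𝔼 y : ↥(Set.range ρ)ᶜ,
          Real.exp (l * (f (ρ.optionElim y y.2) - expectExtension f ρ))) *
        Real.exp (l * (expectExtension f ρ - m)) := by
        rw [expectExtension, expect_mul]
        simp only [← Real.exp_add, ← mul_add, sub_add_sub_cancel]
    _ ≤ Real.exp ((C / 2) ^ 2 * l ^ 2 / 2) * Real.exp (l * (expectExtension f ρ - m)) := by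
        gcongr
        exact expect_exp_mul_sub_expect_le_of_forall_sub_le (hf.sub_optionElim_le ρ) l

theorem expect_exp_mul_sub_expect_le (hcard : Fintype.card α ≤ Fintype.card β)
    {f : (α ↪ β) → ℝ} (hf : SwapLipschitzWith C f) (l : ℝ) :
    𝔼 π, Real.exp (l * (f π - 𝔼 σ, f σ)) ≤
      Real.exp (Fintype.card α * (C / 2) ^ 2 * l ^ 2 / 2) := by
  revert f hcard
  refine Fintype.induction_empty_option (P := fun α _ ↦ Fintype.card α ≤ Fintype.card β →
    ∀ {f : (α ↪ β) → ℝ}, SwapLipschitzWith C f → 𝔼 π, Real.exp (l * (f π - 𝔼 σ, f σ)) ≤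
      Real.exp (Fintype.card α * (C / 2) ^ 2 * l ^ 2 / 2)) ?of_equiv ?empty ?option α
  case of_equiv =>
    intro α α' _ e ih hcard f hf
    let _ := Fintype.ofEquiv α' e.symm
    let E : (α ↪ β) ≃ (α' ↪ β) := Equiv.embeddingCongr e (Equiv.refl β)
    have expect_comp (F : (α' ↪ β) → ℝ) : 𝔼 π, F (E π) = 𝔼 π, F π :=
      Fintype.expect_equiv E _ _ fun _ ↦ rfl
    have h := ih ((Fintype.card_congr e).trans_le hcard) (f := f ∘ E) fun π ↦ hf (E π)
    rw [Fintype.card_congr e] at h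
    simpa only [Function.comp_apply, expect_comp f,
      expect_comp fun π ↦ Real.exp (l * (f π - 𝔼 σ, f σ))] using h
  case empty =>
    intro _ f _
    simp
  case option =>
    intro α _ ih hcard f hf
    rw [Fintype.card_option] at hcard ⊢
    calc 𝔼 π, Real.exp (l * (f π - 𝔼 σ, f σ))
        ≤ Real.exp ((C / 2) ^ 2 * l ^ 2 / 2) *
          𝔼 ρ, Real.exp (l * (expectExtension f ρ - 𝔼 σ, expectExtension f σ)) :=
        hf.expect_exp_le_mul_expect_exp_expectExtension hcard l
      _ ≤ Real.exp ((C / 2) ^ 2 * l ^ 2 / 2) *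
          Real.exp (Fintype.card α * (C / 2) ^ 2 * l ^ 2 / 2) := by
        gcongr
        exact ih (Nat.le_of_lt hcard) (hf.expectExtension_of_card_lt hcard)
      _ = Real.exp ((Fintype.card α + 1 : ℕ) * (C / 2) ^ 2 * l ^ 2 / 2) := by
        rw [← Real.exp_add]
        push_cast
        ring_nf

end SwapLipschitzWith

end Embedding

/-- The sharpest choice is `V = |X| * (C / 2) ^ 2`; leaving `V` free keeps the bound meaningful for
empty `X`, where that choice would divide by zero. -/
theorem stmt_15_general {X Y : Type*} [Fintype X] [Fintype Y] [DecidableEq Y]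
    (hcard : Fintype.card X ≤ Fintype.card Y) {C V : ℝ} {f : (X ↪ Y) → ℝ}
    (hf : SwapLipschitzWith C f) (hV : Fintype.card X * (C / 2) ^ 2 ≤ V) {t : ℝ} (ht : 0 ≤ t) :
    (#{π | t < |f π - 𝔼 σ, f σ|} : ℝ) / Fintype.card (X ↪ Y) ≤
      2 * Real.exp (-t ^ 2 / (2 * V)) := by
  have hV₀ : 0 ≤ V := le_trans (by positivity) hV
  refine card_filter_lt_abs_div_card_le hV₀ (fun l ↦ ?_) ht
  exact (hf.expect_exp_mul_sub_expect_le hcard l).trans (by gcongr)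

end

open Classical in
/-- concentration for functions of a uniformly random injection
that are Lipschitz with respect to composing with a transposition of `Y`. -/
theorem stmt_15 (X Y : Type*) [Fintype X] [Fintype Y] [DecidableEq X] [DecidableEq Y]
    (hcard : Fintype.card X ≤ Fintype.card Y)
    (C : ℝ) (hC : 0 < C) (f : (X ↪ Y) → ℝ)
    (hlip : ∀ (π : X ↪ Y) (a b : Y), a ≠ b →
      |f π - f (π.trans (Equiv.swap a b).toEmbedding)| ≤ C)
    (t : ℝ) (ht : 0 < t) :
    ((Finset.univ.filter fun π : X ↪ Y =>
        |f π - (∑ σ : X ↪ Y, f σ) / (Fintype.card (X ↪ Y))| > t).card : ℝ) /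
      (Fintype.card (X ↪ Y)) ≤
    2 * Real.exp (-(t ^ 2) / (2 * (Fintype.card Y) * C ^ 2)) := by
  have hV : Fintype.card X * (C / 2) ^ 2 ≤ Fintype.card Y * C ^ 2 := by
    gcongr
    exact half_le_self hC.le
  simpa only [Fintype.expect_eq_sum_div_card, gt_iff_lt, mul_assoc]
    using stmt_15_general hcard (.of_forall_ne hC.le hlip) hV ht.le
end
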